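/- For x → ∞, ∑_{n ≤ x} φ(n) = (3/π²)x² + O(x (log x)^{2/3} (log log x)^{4/3}), where φ is the Euler totient function. -/

import Mathlib

open Filter Finset Real

/-! ### Power sums and elementary symmetric functions -/

namespace VinogradovMean

section Newton

variable {σ R : Type*} [Fintype σ] [CommRing R]

theorem newton_esymm (z : σ → R) (m : ℕ) :
    (m : R) * (univ.val.map z).esymm m = (-1) ^ (m + 1) *
      ∑ a ∈ antidiagonal m with a.1 < m,
        (-1) ^ a.1 * (univ.val.map z).esymm a.1 * ∑ i, z i ^ a.2 := by
  have h := congrArg (MvPolynomial.aeval z) (MvPolynomial.mul_esymm_eq_sum σ R m)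
  simp only [map_mul, map_sum, map_pow, map_neg, map_one, map_natCast,
    MvPolynomial.aeval_esymm_eq_multiset_esymm, MvPolynomial.psum, MvPolynomial.aeval_X] at h
  exact h

/-- Power sums determine elementary symmetric functions where the index is invertible. -/
theorem esymm_eq_of_powerSum_eq {z w : σ → R} {k : ℕ}
    (hk : ∀ m : ℕ, 0 < m → m ≤ k → IsUnit (m : R))
    (h : ∀ j, 0 < j → j ≤ k → ∑ i, z i ^ j = ∑ i, w i ^ j) (m : ℕ) (hm : m ≤ k) :
    (univ.val.map z).esymm m = (univ.val.map w).esymm m := by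
  induction m using Nat.strong_induction_on with
  | _ m ih =>
    rcases Nat.eq_zero_or_pos m with rfl | hpos
    · simp [Multiset.esymm]
    · refine (hk m hpos hm).mul_left_cancel ?_
      rw [newton_esymm, newton_esymm]
      congr 1
      refine sum_congr rfl fun a ha => ?_
      simp only [mem_filter, HasAntidiagonal.mem_antidiagonal] at ha
      rw [ih a.1 ha.2 (by omega), h a.2 (by omega) (by omega)]

theorem prod_sub_eq_zero_of_powerSum_eq {k : ℕ} {z w : Fin k → R}
    (hk : ∀ m : ℕ, 0 < m → m ≤ k → IsUnit (m : R))
    (h : ∀ j, 0 < j → j ≤ k → ∑ i, z i ^ j = ∑ i, w i ^ j) (l : Fin k) :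
    ∏ i, (z l - w i) = 0 := by
  have hpoly : ((univ.val.map z).map fun t => Polynomial.X - Polynomial.C t).prod =
      ((univ.val.map w).map fun t => Polynomial.X - Polynomial.C t).prod := by
    rw [Multiset.prod_X_sub_X_eq_sum_esymm, Multiset.prod_X_sub_X_eq_sum_esymm]
    simp only [Multiset.card_map, card_val, card_univ, Fintype.card_fin]
    refine sum_congr rfl fun j hj => ?_
    rw [esymm_eq_of_powerSum_eq hk h j (by simpa [Nat.lt_succ_iff] using hj)]
  have h2 := congrArg (Polynomial.eval (z l)) hpoly
  simp only [Multiset.map_map, Function.comp_def] at h2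
  change Polynomial.eval (z l) (∏ i, (Polynomial.X - Polynomial.C (z i))) =
    Polynomial.eval (z l) (∏ i, (Polynomial.X - Polynomial.C (w i))) at h2
  simp only [Polynomial.eval_prod, Polynomial.eval_sub, Polynomial.eval_X,
    Polynomial.eval_C] at h2
  rw [← h2]
  exact prod_eq_zero (mem_univ l) (sub_self _)

theorem sum_injective_prod [DecidableEq σ] (z : σ → R) (k : ℕ) :
    ∑ a : Fin k → σ with Function.Injective a, ∏ i, z (a i) =
      (k.factorial : R) * (univ.val.map z).esymm k := by
  classical
  rw [Finset.esymm_map_val, mul_sum]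
  have hmaps : ∀ a ∈ ({a : Fin k → σ | Function.Injective a} : Finset (Fin k → σ)),
      univ.image a ∈ powersetCard k (univ : Finset σ) := by
    intro a ha
    simp only [mem_filter, mem_univ, true_and] at ha
    simp [mem_powersetCard, card_image_of_injective _ ha]
  rw [← sum_fiberwise_of_maps_to hmaps]
  refine sum_congr rfl fun A hA => ?_
  have hAc : #A = k := (mem_powersetCard.mp hA).2
  have hconst : ∀ a ∈ ({a ∈ ({a : Fin k → σ | Function.Injective a} : Finset _) |
      univ.image a = A} : Finset (Fin k → σ)), ∏ i, z (a i) = ∏ i ∈ A, z i := by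
    intro a ha
    simp only [mem_filter, mem_univ, true_and] at ha
    rw [← ha.2, prod_image fun x _ y _ hxy => ha.1 hxy]
  rw [sum_congr rfl hconst, sum_const, nsmul_eq_mul]
  congr 2
  have e : {a : Fin k → σ // Function.Injective a ∧ univ.image a = A} ≃ (Fin k ≃ A) :=
    { toFun := fun a => Equiv.ofBijective
        (fun i => ⟨a.1 i, a.2.2.subset (mem_image_of_mem _ (mem_univ i))⟩) (by
          constructor
          · intro i j hij
            exact a.2.1 (congrArg Subtype.val hij)
          · rintro ⟨y, hy⟩
            rw [← a.2.2] at hy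
            obtain ⟨i, -, hi⟩ := mem_image.mp hy
            exact ⟨i, Subtype.ext hi⟩)
      invFun := fun f => ⟨fun i => (f i : σ),
        fun i j hij => f.injective (Subtype.ext hij), by
          ext y
          constructor
          · intro hy
            obtain ⟨i, -, hi⟩ := mem_image.mp hy
            rw [← hi]; exact (f i).2
          · intro hy
            exact mem_image.mpr ⟨f.symm ⟨y, hy⟩, mem_univ _, by simp⟩⟩
      left_inv := fun a => by ext; rfl
      right_inv := fun f => by ext; rfl }
  have hc := Fintype.card_congr e
  have hF : Fintype.card (Fin k ≃ A) = k.factorial := by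
    rw [Fintype.card_equiv (Fintype.equivOfCardEq (by simp [hAc])), Fintype.card_fin]
  rw [hF, Fintype.card_subtype] at hc
  rw [← hc, filter_filter]

end Newton

/-- Either the sum is controlled by the square function, or its power is controlled by an
elementary symmetric function. -/
theorem norm_sum_le_or_pow_le {σ : Type*} [Fintype σ] [DecidableEq σ] (z : σ → ℂ) {k : ℕ} {S : ℝ}
    (hS : 0 ≤ S) (hzS : ∑ i, ‖z i‖ ^ 2 ≤ S ^ 2) :
    ‖∑ i, z i‖ ≤ 4 * k * S ∨ ‖∑ i, z i‖ ^ k ≤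
      2 ^ k * ‖∑ a : Fin k → σ with Function.Injective a, ∏ i, z (a i)‖ := by
  rcases le_or_gt ‖∑ i, z i‖ (4 * k * S) with h | h
  · exact Or.inl h
  right
  set f := ‖∑ i, z i‖ with hf
  have hfpos : 0 < f := lt_of_le_of_lt (by positivity) h
  set E : ℕ → ℂ := fun m => (univ.val.map z).esymm m with hE
  have hpow : ∀ j, 2 ≤ j → ‖∑ i, z i ^ j‖ ≤ S ^ j := by
    intro j hj
    have hle : ∀ i, ‖z i‖ ≤ S := fun i => by
      refine abs_le_of_sq_le_sq' ?_ hS |>.2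
      exact (single_le_sum (f := fun i => ‖z i‖ ^ 2) (fun _ _ => by positivity)
        (mem_univ i)).trans hzS
    calc ‖∑ i, z i ^ j‖ ≤ ∑ i, ‖z i ^ j‖ := norm_sum_le _ _
      _ ≤ ∑ i, S ^ (j - 2) * ‖z i‖ ^ 2 := by
        refine sum_le_sum fun i _ => ?_
        rw [norm_pow, ← Nat.sub_add_cancel hj, pow_add, Nat.sub_add_cancel hj]
        gcongr
        exact hle i
      _ ≤ S ^ (j - 2) * S ^ 2 := by rw [← mul_sum]; gcongr
      _ = S ^ j := by rw [← pow_add, Nat.sub_add_cancel hj]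
  -- consecutive elementary symmetric functions grow at least by the factor `f / (2 m)`
  have key : ∀ m, m ≤ k → 0 < m → f * ‖E (m - 1)‖ ≤ 2 * m * ‖E m‖ := by
    intro m
    induction m using Nat.strong_induction_on with
    | _ m ih =>
    intro hmk hm
    have hkpos : (0:ℝ) < k := by exact_mod_cast lt_of_lt_of_le hm hmk
    have hback : ∀ i, i + 1 ≤ m → ‖E (m - 1 - i)‖ * f ^ i ≤ (2 * k) ^ i * ‖E (m - 1)‖ := by
      intro i
      induction i with
      | zero => intro _; simp
      | succ i ihi =>
        intro hi
        have h1 := ih (m - 1 - i) (by omega) (by omega) (by omega)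
        have h2 := ihi (by omega)
        have h3 : ((m - 1 - i : ℕ) : ℝ) ≤ k := by exact_mod_cast (by omega)
        have h4 : m - 1 - (i + 1) = m - 1 - i - 1 := by omega
        rw [h4, pow_succ, pow_succ]
        calc ‖E (m - 1 - i - 1)‖ * (f ^ i * f) = (f * ‖E (m - 1 - i - 1)‖) * f ^ i := by ring
          _ ≤ (2 * (m - 1 - i : ℕ) * ‖E (m - 1 - i)‖) * f ^ i := by gcongr
          _ ≤ (2 * k * ‖E (m - 1 - i)‖) * f ^ i := by gcongr
          _ = 2 * k * (‖E (m - 1 - i)‖ * f ^ i) := by ring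
          _ ≤ 2 * k * ((2 * k) ^ i * ‖E (m - 1)‖) := by gcongr
          _ = _ := by ring
    have hN := newton_esymm z m
    -- split off the main term
    have hsplit : (antidiagonal m).filter (fun a => a.1 < m) =
        insert (m - 1, 1) ((range (m - 1)).image fun i => (i, m - i)) := by
      ext ⟨a, b⟩
      simp only [mem_filter, HasAntidiagonal.mem_antidiagonal, mem_insert, Prod.mk.injEq, mem_image,
        mem_range]
      constructor
      · rintro ⟨h1, h2⟩
        by_cases hb : b = 1
        · left; omega
        · right; exact ⟨a, by omega, rfl, by omega⟩
      · rintro (⟨h1, h2⟩ | ⟨i, hi, h1, h2⟩) <;> omega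
    rw [hsplit, sum_insert (by simp), sum_image (by simp)] at hN
    have hnorm : f * ‖E (m - 1)‖ ≤ m * ‖E m‖ +
        ∑ i ∈ range (m - 1), ‖E i‖ * S ^ (m - i) := by
      have h1 : ‖(m : ℂ) * E m‖ = m * ‖E m‖ := by simp
      have h2 : ‖(-1 : ℂ) ^ (m - 1) * E (m - 1) * ∑ i, z i ^ 1‖ = f * ‖E (m - 1)‖ := by
        simp [hf, mul_comm]
      have h3 : ‖∑ i ∈ range (m - 1), (-1 : ℂ) ^ i * E i * ∑ l, z l ^ (m - i)‖ ≤
          ∑ i ∈ range (m - 1), ‖E i‖ * S ^ (m - i) := by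
        refine (norm_sum_le _ _).trans (sum_le_sum fun i hi => ?_)
        rw [mem_range] at hi
        rw [norm_mul, norm_mul]
        simp only [norm_pow, norm_neg, norm_one, one_pow, one_mul]
        gcongr
        exact hpow _ (by omega)
      have h4 : ‖(m : ℂ) * E m‖ = ‖(-1 : ℂ) ^ (m - 1) * E (m - 1) * ∑ i, z i ^ 1 +
          ∑ i ∈ range (m - 1), (-1 : ℂ) ^ i * E i * ∑ l, z l ^ (m - i)‖ := by
        rw [hE]
        simp only
        rw [hN, norm_mul]
        simp
      rw [← h2, ← h1, h4]
      have := norm_sub_le ((-1 : ℂ) ^ (m - 1) * E (m - 1) * ∑ i, z i ^ 1 +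
          ∑ i ∈ range (m - 1), (-1 : ℂ) ^ i * E i * ∑ l, z l ^ (m - i))
          (∑ i ∈ range (m - 1), (-1 : ℂ) ^ i * E i * ∑ l, z l ^ (m - i))
      rw [add_sub_cancel_right] at this
      linarith
    -- the tail is at most half of the main term
    have htail : ∑ i ∈ range (m - 1), ‖E i‖ * S ^ (m - i) ≤ f / 2 * ‖E (m - 1)‖ := by
      have hq : 2 * k * S / f ≤ 1 / 2 := by
        rw [div_le_iff₀ hfpos]; linarith
      have hq0 : 0 ≤ 2 * k * S / f := by positivity
      have hterm : ∀ i ∈ range (m - 1), ‖E (m - 1 - 1 - i)‖ * S ^ (m - (m - 1 - 1 - i)) ≤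
          S * ‖E (m - 1)‖ * (1 / 2) ^ (i + 1) := by
        intro i hi
        rw [mem_range] at hi
        have hb := hback (i + 1) (by omega)
        have e1 : m - 1 - 1 - i = m - 1 - (i + 1) := by omega
        have e2 : m - (m - 1 - 1 - i) = i + 2 := by omega
        rw [e2, e1]
        have hb' : ‖E (m - 1 - (i + 1))‖ ≤ (2 * k) ^ (i + 1) * ‖E (m - 1)‖ / f ^ (i + 1) := by
          rw [le_div_iff₀ (by positivity)]; exact hb
        calc ‖E (m - 1 - (i + 1))‖ * S ^ (i + 2)
            ≤ ((2 * k) ^ (i + 1) * ‖E (m - 1)‖ / f ^ (i + 1)) * S ^ (i + 2) := by gcongr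
          _ = S * ‖E (m - 1)‖ * (2 * k * S / f) ^ (i + 1) := by
            rw [div_pow, mul_pow (2 * (k:ℝ)) S]; ring
          _ ≤ _ := by gcongr
      rw [← sum_range_reflect]
      calc _ ≤ ∑ i ∈ range (m - 1), S * ‖E (m - 1)‖ * (1 / 2 : ℝ) ^ (i + 1) := sum_le_sum hterm
        _ = S * ‖E (m - 1)‖ * ((1 / 2) * ∑ i ∈ range (m - 1), (1 / 2 : ℝ) ^ i) := by
          rw [← mul_sum, mul_sum (range (m - 1)) _ (1 / 2 : ℝ)]
          congr 1
          exact sum_congr rfl fun i _ => by ring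
        _ ≤ S * ‖E (m - 1)‖ * 1 := by
          gcongr
          have := sum_geometric_two_le (m - 1)
          linarith
        _ ≤ _ := by
          have h1 : 4 * 1 * S ≤ 4 * k * S := by
            gcongr
            exact_mod_cast hkpos
          have : S ≤ f / 2 := by linarith
          rw [mul_one]; gcongr
    linarith
  have hfin : ∀ m, m ≤ k → f ^ m ≤ 2 ^ m * (m.factorial * ‖E m‖) := by
    intro m
    induction m with
    | zero => intro _; simp [hE, Multiset.esymm]
    | succ m ihm =>
      intro hm
      have h1 := ihm (by omega)
      have h2 := key (m + 1) hm (by omega)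
      rw [Nat.add_sub_cancel] at h2
      rw [pow_succ, pow_succ, Nat.factorial_succ]
      push_cast at h2 ⊢
      calc f ^ m * f ≤ (2 ^ m * (m.factorial * ‖E m‖)) * f := by gcongr
        _ = 2 ^ m * m.factorial * (f * ‖E m‖) := by ring
        _ ≤ 2 ^ m * m.factorial * (2 * (m + 1) * ‖E (m + 1)‖) := by gcongr
        _ = _ := by ring
  rw [sum_injective_prod, norm_mul, Complex.norm_natCast]
  exact hfin k le_rfl

end VinogradovMean

/-! ### Congruences and moments on the torus -/

namespace VinogradovMean

section Congruences

/-- The number of solutions of a Linnik type system of congruences with distinct residues. -/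
theorem card_powerSum_congruence_le {p k N : ℕ} (hp : p.Prime) (hkp : k < p) (hN : N ≤ p ^ k)
    (a : ℤ) (c : Fin k → ℤ) :
    #{x ∈ Fintype.piFinset fun _ : Fin k => Ico (0 : ℤ) N |
      Function.Injective (fun i => (x i : ZMod p)) ∧
      ∀ j : Fin k, (p : ℤ) ^ (j.1 + 1) ∣ ∑ i, (x i - a) ^ (j.1 + 1) - c j} ≤
      k ^ k * p ^ (k * (k - 1) / 2) := by
  have hppos : 0 < p := hp.pos
  set A := {x ∈ Fintype.piFinset fun _ : Fin k => Ico (0 : ℤ) N |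
      Function.Injective (fun i => (x i : ZMod p)) ∧
      ∀ j : Fin k, (p : ℤ) ^ (j.1 + 1) ∣ ∑ i, (x i - a) ^ (j.1 + 1) - c j} with hA
  set g : (Fin k → ℤ) → Fin k → ℤ :=
    fun x j => (∑ i, (x i - a) ^ (j.1 + 1)) % (p : ℤ) ^ k with hg
  set B : Finset (Fin k → ℤ) := Fintype.piFinset fun j : Fin k =>
    {t ∈ Ico (0 : ℤ) ((p : ℤ) ^ k) | t ≡ c j [ZMOD (p : ℤ) ^ (j.1 + 1)]} with hB
  have hmaps : ∀ x ∈ A, g x ∈ B := by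
    intro x hx
    simp only [hA, mem_filter] at hx
    simp only [hB, Fintype.mem_piFinset, mem_filter, mem_Ico, hg]
    intro j
    refine ⟨⟨Int.emod_nonneg _ (by positivity), Int.emod_lt_of_pos _ (by positivity)⟩, ?_⟩
    have h1 : (∑ i, (x i - a) ^ (j.1 + 1)) % (p : ℤ) ^ k ≡ ∑ i, (x i - a) ^ (j.1 + 1)
        [ZMOD (p : ℤ) ^ (j.1 + 1)] :=
      (Int.mod_modEq _ _).of_dvd (pow_dvd_pow _ (by omega))
    refine h1.trans ?_
    exact (Int.modEq_iff_dvd.mpr (hx.2.2 j)).symm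
  have hBcard : #B = p ^ (k * (k - 1) / 2) := by
    rw [hB, Fintype.card_piFinset]
    have h1 : ∀ j : Fin k, #{t ∈ Ico (0 : ℤ) ((p : ℤ) ^ k) | t ≡ c j [ZMOD (p : ℤ) ^ (j.1 + 1)]} =
        p ^ (k - 1 - j.1) := by
      intro j
      have h2 := Int.Ico_filter_modEq_card (0 : ℤ) ((p : ℤ) ^ k)
        (r := (p : ℤ) ^ (j.1 + 1)) (by positivity) (c j)
      have hpk : (p : ℚ) ^ k = (p : ℚ) ^ (k - 1 - j.1) * (p : ℚ) ^ (j.1 + 1) := by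
        rw [← pow_add]; congr 1; omega
      have h3 : (((p : ℤ) ^ k - c j : ℤ) : ℚ) / (((p : ℤ) ^ (j.1 + 1) : ℤ) : ℚ) =
          ((0 - c j : ℤ) : ℚ) / (((p : ℤ) ^ (j.1 + 1) : ℤ) : ℚ) +
            (((p : ℤ) ^ (k - 1 - j.1) : ℤ) : ℚ) := by
        push_cast
        rw [hpk]
        have : (p : ℚ) ^ (j.1 + 1) ≠ 0 := by positivity
        field_simp
        ring
      push_cast at h2 h3
      rw [h3] at h2
      have h4 : ((p : ℚ) ^ (k - 1 - j.1)) = (((p : ℤ) ^ (k - 1 - j.1) : ℤ) : ℚ) := by push_cast; rfl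
      rw [h4, Int.ceil_add_intCast, add_sub_cancel_left, max_eq_left (by positivity)] at h2
      exact_mod_cast h2
    rw [prod_congr rfl fun j _ => h1 j, prod_pow_eq_pow_sum]
    congr 1
    rw [Fin.sum_univ_eq_sum_range (fun j => k - 1 - j) k, sum_range_reflect (fun j => j) k,
      sum_range_id]
  have hfib : ∀ b ∈ B, #{x ∈ A | g x = b} ≤ k ^ k := by
    intro b _
    rcases ({x ∈ A | g x = b} : Finset _).eq_empty_or_nonempty with h | ⟨y, hy⟩
    · rw [h]; simp
    have hsub : {x ∈ A | g x = b} ⊆ Fintype.piFinset fun _ : Fin k => univ.image y := by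
      intro x hx
      simp only [hA, mem_filter, Fintype.mem_piFinset, mem_Ico] at hx hy
      rw [Fintype.mem_piFinset]
      intro l
      have hunit : ∀ m : ℕ, 0 < m → m ≤ k → IsUnit (m : ZMod (p ^ k)) := by
        intro m h0 hm
        rw [ZMod.isUnit_iff_coprime]
        exact Nat.Coprime.pow_right _
          ((hp.coprime_iff_not_dvd.mpr (Nat.not_dvd_of_pos_of_lt h0 (by omega))).symm)
      have hps : ∀ j, 0 < j → j ≤ k → ∑ i, ((x i - a : ℤ) : ZMod (p ^ k)) ^ j =
          ∑ i, ((y i - a : ℤ) : ZMod (p ^ k)) ^ j := by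
        intro j h0 hj
        have h1 := congrFun (hx.2.trans hy.2.symm) ⟨j - 1, by omega⟩
        simp only [hg, Nat.sub_add_cancel h0] at h1
        have h2 := (ZMod.intCast_eq_intCast_iff _ _ (p ^ k)).mpr (by
          push_cast
          exact h1 : (∑ i, (x i - a) ^ j) ≡ (∑ i, (y i - a) ^ j) [ZMOD ((p ^ k : ℕ) : ℤ)])
        push_cast at h2 ⊢
        exact h2
      have hz := prod_sub_eq_zero_of_powerSum_eq hunit hps l
      have hdvd : ((p ^ k : ℕ) : ℤ) ∣ ∏ i, (x l - y i) := by
        rw [← ZMod.intCast_zmod_eq_zero_iff_dvd]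
        push_cast at hz ⊢
        rw [← hz]
        exact prod_congr rfl fun i _ => by ring
      have hpZ : Prime (p : ℤ) := Nat.prime_iff_prime_int.mp hp
      push_cast at hdvd
      have hk0 : k ≠ 0 := fun h => by subst h; exact l.elim0
      obtain ⟨i, -, hi⟩ := (hpZ.dvd_finsetProd_iff _).mp ((dvd_pow_self (p : ℤ) hk0).trans hdvd)
      have hcop : IsCoprime ((p : ℤ) ^ k) (∏ j ∈ univ.erase i, (x l - y j)) := by
        refine IsCoprime.pow_left (IsCoprime.prod_right fun j hj => ?_)
        rw [hpZ.coprime_iff_not_dvd]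
        intro hj2
        refine (mem_erase.mp hj).1 (hy.1.2.1 ?_)
        have h3 : (p : ℤ) ∣ y i - y j := by
          have := dvd_sub hj2 hi
          rwa [show x l - y j - (x l - y i) = y i - y j by ring] at this
        exact (ZMod.intCast_eq_intCast_iff_dvd_sub _ _ _).mpr h3
      rw [← mul_prod_erase _ _ (mem_univ i)] at hdvd
      have h5 := hcop.dvd_of_dvd_mul_right hdvd
      have h6 : |x l - y i| < (p : ℤ) ^ k := by
        have hN' : (N : ℤ) ≤ (p : ℤ) ^ k := by exact_mod_cast hN
        have := hx.1.1 l
        have := hy.1.1 i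
        rw [abs_lt]; constructor <;> linarith
      have h7 := Int.eq_zero_of_abs_lt_dvd h5 h6
      exact mem_image.mpr ⟨i, mem_univ _, by linarith⟩
    refine (card_le_card hsub).trans ?_
    rw [Fintype.card_piFinset, prod_const, card_univ, Fintype.card_fin]
    exact Nat.pow_le_pow_left (card_image_le.trans (by simp)) _
  have := card_le_mul_card_image_of_maps_to hmaps _ hfib
  rwa [hBcard] at this

end Congruences

section Torus

open MeasureTheory UnitAddTorus ComplexConjugate

/-- The normalized Haar measure on the torus. -/
noncomputable def torusMeasure (k : ℕ) : Measure (UnitAddTorus (Fin k)) :=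
  Measure.pi fun _ => AddCircle.haarAddCircle

instance (k : ℕ) : IsProbabilityMeasure (torusMeasure k) := by
  unfold torusMeasure; infer_instance

theorem integral_mFourier {k : ℕ} (n : Fin k → ℤ) :
    ∫ t, mFourier n t ∂torusMeasure k = if n = 0 then 1 else 0 := by
  have h1 : ∀ m : ℤ, ∫ t : UnitAddCircle, fourier m t ∂AddCircle.haarAddCircle =
      if m = 0 then 1 else 0 := by
    intro m
    have := (orthonormal_iff_ite.mp (orthonormal_fourier (T := 1))) 0 m
    rw [L2.inner_def] at this
    rw [show (if m = 0 then (1 : ℂ) else 0) = if 0 = m then 1 else 0 by simp [eq_comm], ← this]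
    refine integral_congr_ae ?_
    filter_upwards [coeFn_fourierLp 2 (T := 1) 0, coeFn_fourierLp 2 (T := 1) m] with t h0 h2
    rw [h0, h2]
    simp
  unfold torusMeasure mFourier
  simp only [ContinuousMap.coe_mk]
  rw [integral_fintype_prod_eq_prod (fun i => fun t : UnitAddCircle => (fourier (n i) t : ℂ))]
  simp only [h1]
  by_cases hn : n = 0
  · simp [hn]
  · rw [if_neg hn]
    obtain ⟨i, hi⟩ := Function.ne_iff.mp hn
    exact prod_eq_zero (mem_univ i) (if_neg hi)

theorem mFourier_sum {k : ℕ} {ι : Type*} (s : Finset ι) (n : ι → Fin k → ℤ)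
    (t : UnitAddTorus (Fin k)) :
    mFourier (∑ i ∈ s, n i) t = ∏ i ∈ s, mFourier (n i) t := by
  classical
  induction s using Finset.induction_on with
  | empty => simp [mFourier_zero]
  | insert a s ha ih => rw [sum_insert ha, prod_insert ha, mFourier_add, ih]

theorem norm_mFourier_apply {k : ℕ} (n : Fin k → ℤ) (t : UnitAddTorus (Fin k)) :
    ‖mFourier n t‖ = 1 := by
  simp only [mFourier, fourier_apply, ContinuousMap.coe_mk, norm_prod, Circle.norm_coe,
    prod_const_one]

theorem integrable_torus {k : ℕ} {E : Type*} [NormedAddCommGroup E]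
    {f : UnitAddTorus (Fin k) → E} (hf : Continuous f) : Integrable f (torusMeasure k) :=
  hf.integrable_of_hasCompactSupport (HasCompactSupport.of_compactSpace f)

/-- The point `(x, x², …, xᵏ)` of the moment curve. -/
def momentCurve (k : ℕ) (x : ℤ) : Fin k → ℤ := fun j => x ^ (j.1 + 1)

/-- Sum of the points of the moment curve attached to a tuple. -/
def powerSums (k : ℕ) {s : ℕ} (u : Fin s → ℤ) : Fin k → ℤ := ∑ i, momentCurve k (u i)

theorem powerSums_apply (k : ℕ) {s : ℕ} (u : Fin s → ℤ) (j : Fin k) :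
    powerSums k u j = ∑ i, u i ^ (j.1 + 1) := by
  simp [powerSums, momentCurve]

/-- The exponential sum over `S` along the moment curve. -/
noncomputable def weylSum (k : ℕ) (S : Finset ℤ) (t : UnitAddTorus (Fin k)) : ℂ :=
  ∑ x ∈ S, mFourier (momentCurve k x) t

@[fun_prop]
theorem continuous_weylSum (k : ℕ) (S : Finset ℤ) : Continuous (weylSum k S) := by
  unfold weylSum; fun_prop

theorem weylSum_pow (k s : ℕ) (S : Finset ℤ) (t : UnitAddTorus (Fin k)) :
    weylSum k S t ^ s =
      ∑ u ∈ Fintype.piFinset fun _ : Fin s => S, mFourier (powerSums k u) t := by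
  rw [weylSum, sum_pow']
  exact sum_congr rfl fun u _ => (mFourier_sum _ _ _).symm

/-- The `2s`-th moment of the exponential sum over `S`. -/
noncomputable def moment (k s : ℕ) (S : Finset ℤ) : ℝ :=
  ∫ t, ‖weylSum k S t‖ ^ (2 * s) ∂torusMeasure k

theorem moment_nonneg (k s : ℕ) (S : Finset ℤ) : 0 ≤ moment k s S :=
  integral_nonneg fun _ => by positivity

theorem integral_mFourier_mul_pow (k s : ℕ) (S : Finset ℤ) (l : Fin k → ℤ) :
    ∫ t, mFourier l t * ((‖weylSum k S t‖ ^ (2 * s) : ℝ) : ℂ) ∂torusMeasure k =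
      #{w ∈ (Fintype.piFinset fun _ : Fin s => S) ×ˢ (Fintype.piFinset fun _ : Fin s => S) |
        l + powerSums k w.1 = powerSums k w.2} := by
  have h1 : ∀ t, mFourier l t * ((‖weylSum k S t‖ ^ (2 * s) : ℝ) : ℂ) =
      ∑ w ∈ (Fintype.piFinset fun _ : Fin s => S) ×ˢ (Fintype.piFinset fun _ : Fin s => S),
        mFourier (l + powerSums k w.1 + -powerSums k w.2) t := by
    intro t
    have h2 : ((‖weylSum k S t‖ ^ (2 * s) : ℝ) : ℂ) =
        weylSum k S t ^ s * conj (weylSum k S t ^ s) := by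
      rw [Complex.mul_conj', norm_pow, pow_mul', ]
      push_cast
      rfl
    rw [h2, weylSum_pow, map_sum, sum_mul_sum, ← sum_product', mul_sum]
    refine sum_congr rfl fun w _ => ?_
    rw [mFourier_add, mFourier_add, mFourier_neg, mul_assoc]
  simp_rw [h1]
  rw [integral_finsetSum _ fun w _ => integrable_torus (ContinuousMap.continuous _)]
  simp_rw [integral_mFourier, ← sub_eq_add_neg, sub_eq_zero]
  rw [sum_ite, sum_const_zero, add_zero, sum_const, nsmul_eq_mul, mul_one]

theorem moment_eq_card (k s : ℕ) (S : Finset ℤ) :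
    moment k s S =
      #{w ∈ (Fintype.piFinset fun _ : Fin s => S) ×ˢ (Fintype.piFinset fun _ : Fin s => S) |
        powerSums k w.1 = powerSums k w.2} := by
  have h := integral_mFourier_mul_pow k s S 0
  simp only [mFourier_zero, ContinuousMap.one_apply, one_mul, zero_add] at h
  rw [integral_complex_ofReal] at h
  exact_mod_cast h

theorem norm_integral_mFourier_mul_pow_le (k s : ℕ) (S : Finset ℤ) (l : Fin k → ℤ) :
    ‖∫ t, mFourier l t * ((‖weylSum k S t‖ ^ (2 * s) : ℝ) : ℂ) ∂torusMeasure k‖ ≤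
      moment k s S := by
  refine (norm_integral_le_integral_norm _).trans (le_of_eq ?_)
  refine integral_congr_ae (Eventually.of_forall fun t => ?_)
  simp [norm_mFourier_apply]

/-- A mixed moment is at most the number of admissible differences times the pure moment. -/
theorem integral_sq_mul_pow_le (k s r : ℕ) (S : Finset ℤ) (X : Finset (Fin r → ℤ))
    (P : (Fin r → ℤ) → (Fin r → ℤ) → Prop) [DecidableRel P]
    (hP : ∀ x ∈ X, ∀ y ∈ X, ∀ u ∈ Fintype.piFinset fun _ : Fin s => S,
      ∀ w ∈ Fintype.piFinset fun _ : Fin s => S,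
      powerSums k x + powerSums k u = powerSums k y + powerSums k w → P x y) :
    ∫ t, ‖∑ x ∈ X, mFourier (powerSums k x) t‖ ^ 2 * ‖weylSum k S t‖ ^ (2 * s) ∂torusMeasure k ≤
      #{w ∈ X ×ˢ X | P w.1 w.2} * moment k s S := by
  have h1 : ∀ t, ((‖∑ x ∈ X, mFourier (powerSums k x) t‖ ^ 2 *
      ‖weylSum k S t‖ ^ (2 * s) : ℝ) : ℂ) = ∑ w ∈ X ×ˢ X,
        mFourier (powerSums k w.1 + -powerSums k w.2) t *
          ((‖weylSum k S t‖ ^ (2 * s) : ℝ) : ℂ) := by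
    intro t
    rw [Complex.ofReal_mul]
    have h2 : ((‖∑ x ∈ X, mFourier (powerSums k x) t‖ ^ 2 : ℝ) : ℂ) =
        (∑ x ∈ X, mFourier (powerSums k x) t) * conj (∑ x ∈ X, mFourier (powerSums k x) t) := by
      rw [Complex.mul_conj']; push_cast; rfl
    rw [h2, map_sum, sum_mul_sum, ← sum_product', sum_mul]
    exact sum_congr rfl fun w _ => by rw [mFourier_add, mFourier_neg]
  have h3 : ((∫ t, ‖∑ x ∈ X, mFourier (powerSums k x) t‖ ^ 2 *
      ‖weylSum k S t‖ ^ (2 * s) ∂torusMeasure k : ℝ) : ℂ) =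
      ∑ w ∈ X ×ˢ X, ∫ t, mFourier (powerSums k w.1 + -powerSums k w.2) t *
          ((‖weylSum k S t‖ ^ (2 * s) : ℝ) : ℂ) ∂torusMeasure k := by
    rw [← integral_complex_ofReal]
    simp_rw [h1]
    rw [integral_finsetSum _ fun w _ => integrable_torus (by fun_prop)]
  have h4 : ∫ t, ‖∑ x ∈ X, mFourier (powerSums k x) t‖ ^ 2 *
      ‖weylSum k S t‖ ^ (2 * s) ∂torusMeasure k ≤
      ∑ w ∈ X ×ˢ X, ‖∫ t, mFourier (powerSums k w.1 + -powerSums k w.2) t *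
          ((‖weylSum k S t‖ ^ (2 * s) : ℝ) : ℂ) ∂torusMeasure k‖ := by
    refine (le_abs_self _).trans ?_
    rw [← Real.norm_eq_abs, ← Complex.norm_real, h3]
    exact norm_sum_le _ _
  refine h4.trans ?_
  rw [← nsmul_eq_mul, ← sum_const, sum_filter]
  refine sum_le_sum fun w hw => ?_
  split_ifs with hPw
  · exact norm_integral_mFourier_mul_pow_le _ _ _ _
  · rw [mem_product] at hw
    rw [integral_mFourier_mul_pow, card_eq_zero.mpr, Nat.cast_zero, norm_zero]
    rw [filter_eq_empty_iff]
    intro u hu heq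
    rw [mem_product] at hu
    refine hPw (hP _ hw.1 _ hw.2 _ hu.1 _ hu.2 ?_)
    rw [← heq]; abel

theorem moment_mono {k s : ℕ} {S S' : Finset ℤ} (h : S ⊆ S') : moment k s S ≤ moment k s S' := by
  rw [moment_eq_card, moment_eq_card]
  have hpi : (Fintype.piFinset fun _ : Fin s => S) ⊆ Fintype.piFinset fun _ : Fin s => S' :=
    Fintype.piFinset_subset _ _ fun _ => h
  exact_mod_cast card_le_card (filter_subset_filter _ (product_subset_product hpi hpi))

theorem moment_add_le (k s r : ℕ) (S : Finset ℤ) :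
    moment k (s + r) S ≤ (#S : ℝ) ^ (2 * r) * moment k s S := by
  rw [moment, moment, ← integral_const_mul]
  refine integral_mono (integrable_torus (by fun_prop)) (integrable_torus (by fun_prop))
    fun t => ?_
  simp only
  rw [mul_add, pow_add, mul_comm]
  gcongr
  exact (norm_sum_le _ _).trans (by simp [norm_mFourier_apply])

end Torus

end VinogradovMean

/-! ### Moments over residue classes -/

namespace VinogradovMean

open MeasureTheory UnitAddTorus

theorem sum_sub_pow_eq {ι : Type*} [Fintype ι] {k : ℕ} {x y : ι → ℤ}
    (h : ∀ j < k, ∑ i, x i ^ (j + 1) = ∑ i, y i ^ (j + 1)) (a : ℤ) {j : ℕ} (hj : j ≤ k) :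
    ∑ i, (x i - a) ^ j = ∑ i, (y i - a) ^ j := by
  simp_rw [sub_eq_add_neg, add_pow]
  rw [sum_comm, sum_comm (s := univ)]
  refine sum_congr rfl fun m hm => ?_
  rw [← sum_mul, ← sum_mul, ← sum_mul, ← sum_mul]
  congr 2
  cases m with
  | zero => simp
  | succ m => exact h m (by rw [mem_range] at hm; omega)

theorem moment_image_affine_le (k s : ℕ) (S : Finset ℤ) (a : ℤ) {p : ℤ} (hp : p ≠ 0) :
    moment k s (S.image fun w => a + p * w) ≤ moment k s S := by
  rw [moment_eq_card, moment_eq_card]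
  norm_cast
  have hform : ∀ u ∈ Fintype.piFinset fun _ : Fin s => S.image fun w => a + p * w,
      (fun i => (u i - a) / p) ∈ (Fintype.piFinset fun _ : Fin s => S) ∧
      ∀ i, u i = a + p * ((u i - a) / p) := by
    intro u hu
    have h1 : ∀ i, (u i - a) / p ∈ S ∧ u i = a + p * ((u i - a) / p) := by
      intro i
      obtain ⟨w, hw, hw2⟩ := mem_image.mp (Fintype.mem_piFinset.mp hu i)
      have : (u i - a) / p = w := by
        rw [← hw2, add_sub_cancel_left, Int.mul_ediv_cancel_left _ hp]
      rw [this]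
      exact ⟨hw, hw2.symm⟩
    exact ⟨Fintype.mem_piFinset.mpr fun i => (h1 i).1, fun i => (h1 i).2⟩
  refine card_le_card_of_injOn
    (fun w => (fun i => (w.1 i - a) / p, fun i => (w.2 i - a) / p)) ?_ ?_
  · intro w hw
    simp only [coe_filter, mem_product, Set.mem_ofPred_eq] at hw ⊢
    refine ⟨⟨(hform _ hw.1.1).1, (hform _ hw.1.2).1⟩, ?_⟩
    ext j
    rw [powerSums_apply, powerSums_apply]
    have h1 := sum_sub_pow_eq (x := w.1) (y := w.2) (k := k) (fun j hj => by
      have := congrFun hw.2 ⟨j, hj⟩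
      rwa [powerSums_apply, powerSums_apply] at this) a (j := j.1 + 1) j.2
    have h2 : ∀ u ∈ Fintype.piFinset fun _ : Fin s => S.image fun w => a + p * w,
        ∑ i, (u i - a) ^ (j.1 + 1) = p ^ (j.1 + 1) * ∑ i, ((u i - a) / p) ^ (j.1 + 1) := by
      intro u hu
      rw [mul_sum]
      refine sum_congr rfl fun i _ => ?_
      rw [← mul_pow]
      congr 1
      linarith [(hform u hu).2 i]
    rw [h2 _ hw.1.1, h2 _ hw.1.2] at h1
    exact mul_left_cancel₀ (pow_ne_zero _ hp) h1
  · intro w hw v hv heq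
    simp only [coe_filter, mem_product, Set.mem_ofPred_eq] at hw hv
    simp only [Prod.mk.injEq] at heq
    refine Prod.ext (funext fun i => ?_) (funext fun i => ?_)
    · rw [(hform _ hw.1.1).2 i, (hform _ hv.1.1).2 i, congrFun heq.1 i]
    · rw [(hform _ hw.1.2).2 i, (hform _ hv.1.2).2 i, congrFun heq.2 i]

section Classes

variable {p : ℕ} [hp : Fact p.Prime]

/-- The integers of `[0, N)` in a residue class modulo `p`. -/
noncomputable def residueClass (p N : ℕ) (a : ZMod p) : Finset ℤ :=
  {x ∈ Ico (0 : ℤ) N | (x : ZMod p) = a}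

theorem dvd_sub_val {N : ℕ} {a : ZMod p} {x : ℤ} (hx : x ∈ residueClass p N a) :
    (p : ℤ) ∣ x - a.val := by
  rw [residueClass, mem_filter] at hx
  rw [← ZMod.intCast_zmod_eq_zero_iff_dvd]
  push_cast
  rw [hx.2, ZMod.natCast_zmod_val, sub_self]

theorem residueClass_subset (N : ℕ) (a : ZMod p) :
    residueClass p N a ⊆
      (Ico (0 : ℤ) ((N / p + 1 : ℕ) : ℤ)).image fun w => (a.val : ℤ) + p * w := by
  intro x hx
  have hp0 : 0 < (p : ℤ) := by exact_mod_cast hp.out.pos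
  obtain ⟨w, hw⟩ := dvd_sub_val hx
  rw [residueClass, mem_filter, mem_Ico] at hx
  have hav : (a.val : ℤ) < p := by exact_mod_cast a.val_lt
  refine mem_image.mpr ⟨w, mem_Ico.mpr ⟨?_, ?_⟩, by linarith⟩
  · by_contra! h
    nlinarith
  · push_cast
    have : w ≤ (N : ℤ) / p := by
      rw [Int.le_ediv_iff_mul_le hp0]
      have : (0 : ℤ) ≤ a.val := by positivity
      nlinarith [hx.1.2]
    omega

theorem moment_residueClass_le (k s N : ℕ) (a : ZMod p) :
    moment k s (residueClass p N a) ≤ moment k s (Ico 0 ((N / p + 1 : ℕ) : ℤ)) :=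
  (moment_mono (residueClass_subset N a)).trans
    (moment_image_affine_le _ _ _ _ (by exact_mod_cast hp.out.ne_zero))

theorem card_residueClass_le (N : ℕ) (a : ZMod p) : #(residueClass p N a) ≤ N / p + 1 := by
  refine (card_le_card (residueClass_subset N a)).trans (card_image_le.trans ?_)
  simp

/-- Tuples in `[0, N)` with pairwise distinct residues modulo `p`. -/
noncomputable def distinctTuples (p k N : ℕ) : Finset (Fin k → ℤ) :=
  {x ∈ Fintype.piFinset fun _ : Fin k => Ico (0 : ℤ) N |
    Function.Injective fun i => (x i : ZMod p)}

theorem mixed_moment_le {k N : ℕ} (s : ℕ) (hkp : k < p) (hN : N ≤ p ^ k) (a : ZMod p) :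
    ∫ t, ‖∑ x ∈ distinctTuples p k N, mFourier (powerSums k x) t‖ ^ 2 *
      ‖weylSum k (residueClass p N a) t‖ ^ (2 * s) ∂torusMeasure k ≤
      (N ^ k * (k ^ k * p ^ (k * (k - 1) / 2)) : ℕ) *
        moment k s (Ico 0 ((N / p + 1 : ℕ) : ℤ)) := by
  classical
  refine (integral_sq_mul_pow_le k s k (residueClass p N a) (distinctTuples p k N)
    (fun x y => ∀ j : Fin k, (p : ℤ) ^ (j.1 + 1) ∣
      ∑ i, (x i - (a.val : ℤ)) ^ (j.1 + 1) - ∑ i, (y i - (a.val : ℤ)) ^ (j.1 + 1)) ?_).trans ?_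
  · intro x _ y _ u hu w hw heq j
    have h1 := sum_sub_pow_eq (x := Sum.elim x u) (y := Sum.elim y w) (k := k) (fun j hj => by
      have := congrFun heq ⟨j, hj⟩
      simp only [Pi.add_apply, powerSums_apply] at this
      simpa [Fintype.sum_sum_type] using this) a.val (j := j.1 + 1) j.2
    simp only [Fintype.sum_sum_type, Sum.elim_inl, Sum.elim_inr] at h1
    have h2 : ∀ v ∈ Fintype.piFinset fun _ : Fin s => residueClass p N a,
        (p : ℤ) ^ (j.1 + 1) ∣ ∑ i, (v i - (a.val : ℤ)) ^ (j.1 + 1) := fun v hv =>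
      dvd_sum fun i _ => pow_dvd_pow_of_dvd (dvd_sub_val (Fintype.mem_piFinset.mp hv i)) _
    have h3 := dvd_sub (h2 w hw) (h2 u hu)
    rwa [show ∑ i, (w i - (a.val : ℤ)) ^ (j.1 + 1) - ∑ i, (u i - (a.val : ℤ)) ^ (j.1 + 1) =
      ∑ i, (x i - (a.val : ℤ)) ^ (j.1 + 1) - ∑ i, (y i - (a.val : ℤ)) ^ (j.1 + 1) by
        linarith] at h3
  · refine mul_le_mul ?_ (moment_residueClass_le _ _ _ _) (moment_nonneg _ _ _) (by positivity)
    norm_cast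
    have h1 := card_le_mul_card_image_of_maps_to (f := Prod.snd)
      (s := (distinctTuples p k N ×ˢ distinctTuples p k N).filter
        fun w : (Fin k → ℤ) × (Fin k → ℤ) => ∀ j : Fin k,
        (p : ℤ) ^ (j.1 + 1) ∣ ∑ i, (w.1 i - (a.val : ℤ)) ^ (j.1 + 1) -
          ∑ i, (w.2 i - (a.val : ℤ)) ^ (j.1 + 1)) (t := distinctTuples p k N)
      (fun w hw => (mem_product.mp (mem_filter.mp hw).1).2) (k ^ k * p ^ (k * (k - 1) / 2)) ?_
    · refine h1.trans ?_
      rw [mul_comm]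
      refine Nat.mul_le_mul_right _ ?_
      refine (card_filter_le _ _).trans ?_
      simp
    · intro y hy
      refine le_trans ?_ (card_powerSum_congruence_le hp.out hkp hN a.val
        (fun j => ∑ i, (y i - (a.val : ℤ)) ^ (j.1 + 1)))
      refine card_le_card_of_injOn Prod.fst ?_ ?_
      · intro w hw
        simp only [distinctTuples, coe_filter, mem_filter, mem_product, Set.mem_ofPred_eq] at hw ⊢
        obtain ⟨⟨⟨h1, -⟩, h2⟩, rfl⟩ := hw
        exact ⟨h1.1, h1.2, h2⟩
      · intro w hw v hv h
        simp only [coe_filter, Set.mem_ofPred_eq, mem_filter] at hw hv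
        exact Prod.ext h (hw.2.trans hv.2.symm)

theorem weylSum_eq_sum_residueClass (k N : ℕ) (t : UnitAddTorus (Fin k)) :
    weylSum k (Ico 0 (N : ℤ)) t = ∑ a : ZMod p, weylSum k (residueClass p N a) t := by
  unfold weylSum residueClass
  exact (sum_fiberwise _ _ _).symm

theorem sum_injective_prod_weylSum (k N : ℕ) (t : UnitAddTorus (Fin k)) :
    ∑ a : Fin k → ZMod p with Function.Injective a, ∏ i, weylSum k (residueClass p N (a i)) t =
      ∑ x ∈ distinctTuples p k N, mFourier (powerSums k x) t := by
  classical
  rw [← sum_fiberwise_of_maps_to (s := distinctTuples p k N)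
    (t := {a : Fin k → ZMod p | Function.Injective a}) (g := fun x i => (x i : ZMod p))
    (fun x hx => by simpa [distinctTuples] using (mem_filter.mp hx).2)]
  refine sum_congr rfl fun a ha => ?_
  unfold weylSum
  rw [prod_univ_sum]
  have hset : (Fintype.piFinset fun i => residueClass p N (a i)) =
      {x ∈ distinctTuples p k N | (fun i => (x i : ZMod p)) = a} := by
    ext x
    simp only [residueClass, Fintype.mem_piFinset, mem_filter, distinctTuples, funext_iff]
    rw [mem_filter] at ha
    refine ⟨fun h => ⟨⟨fun i => (h i).1, ?_⟩, fun i => (h i).2⟩, fun h i => ⟨h.1.1 i, h.2 i⟩⟩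
    have : (fun i => (x i : ZMod p)) = a := funext fun i => (h i).2
    rw [this]; exact ha.2
  rw [hset]
  exact sum_congr rfl fun x _ => (mFourier_sum _ _ _).symm

theorem sum_pow_le_card_pow_mul_sum {ι : Type*} (s : Finset ι) (z : ι → ℝ)
    (hz : ∀ i ∈ s, 0 ≤ z i) {n : ℕ} (hn : 0 < n) :
    (∑ i ∈ s, z i) ^ n ≤ (#s : ℝ) ^ (n - 1) * ∑ i ∈ s, z i ^ n := by
  obtain ⟨n, rfl⟩ : ∃ m, n = m + 1 := ⟨n - 1, by omega⟩
  rcases s.eq_empty_or_nonempty with rfl | hs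
  · simp
  have := pow_sum_div_card_le_sum_pow hz n
  rw [div_le_iff₀ (by have := hs.card_pos; positivity)] at this
  rw [mul_comm]
  simpa using this

/-- The basic recursive inequality between moments. -/
theorem moment_recursion {k N s : ℕ} (hs : 0 < s) (hkp : k < p) (hN : N ≤ p ^ k) :
    moment k (s + k) (Ico 0 (N : ℤ)) ≤
      (4 ^ k * p ^ (2 * s) * (N ^ k * (k ^ k * p ^ (k * (k - 1) / 2))) +
        (16 * k ^ 2) ^ (s + k) * p ^ (s + k) * (N / p + 1 : ℕ) ^ (2 * k)) *
      moment k s (Ico 0 ((N / p + 1 : ℕ) : ℤ)) := by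
  classical
  set n := s + k with hn
  set z : ZMod p → UnitAddTorus (Fin k) → ℂ := fun a t => weylSum k (residueClass p N a) t with hz
  set E : UnitAddTorus (Fin k) → ℂ :=
    fun t => ∑ x ∈ distinctTuples p k N, mFourier (powerSums k x) t with hE
  have hzc : ∀ a, Continuous (z a) := fun a => continuous_weylSum _ _
  have hEc : Continuous E := by rw [hE]; fun_prop
  have hcard : (Fintype.card (ZMod p) : ℝ) = p := by rw [ZMod.card]
  have hp0 : (0 : ℝ) < p := by exact_mod_cast hp.out.pos
  have hpt : ∀ t, ‖weylSum k (Ico 0 (N : ℤ)) t‖ ^ (2 * n) ≤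
      4 ^ k * (p : ℝ) ^ (2 * s - 1) * ∑ a, ‖E t‖ ^ 2 * ‖z a t‖ ^ (2 * s) +
      (16 * k ^ 2) ^ n * (p : ℝ) ^ (n - 1) * ∑ a, ‖z a t‖ ^ (2 * n) := by
    intro t
    have hf := weylSum_eq_sum_residueClass (p := p) k N t
    have hpow : ∀ m : ℕ, 0 < m → ‖weylSum k (Ico 0 (N : ℤ)) t‖ ^ m ≤
        (p : ℝ) ^ (m - 1) * ∑ a, ‖z a t‖ ^ m := by
      intro m hm
      rw [hf]
      have := sum_pow_le_card_pow_mul_sum univ (fun a => ‖z a t‖) (fun a _ => norm_nonneg _) hm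
      rw [card_univ, hcard] at this
      exact (pow_le_pow_left₀ (norm_nonneg _) (norm_sum_le _ _) m).trans this
    rcases norm_sum_le_or_pow_le (fun a => z a t) (k := k)
      (S := √(∑ a, ‖z a t‖ ^ 2)) (Real.sqrt_nonneg _)
      (by rw [Real.sq_sqrt (by positivity)]) with h | h
    · refine le_trans ?_ (le_add_of_nonneg_left (by positivity))
      have h1 : ‖weylSum k (Ico 0 (N : ℤ)) t‖ ^ 2 ≤ 16 * k ^ 2 * ∑ a, ‖z a t‖ ^ 2 := by
        rw [hf]
        refine (pow_le_pow_left₀ (norm_nonneg _) h 2).trans (le_of_eq ?_)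
        rw [mul_pow, Real.sq_sqrt (by positivity)]
        ring
      rw [pow_mul]
      refine (pow_le_pow_left₀ (by positivity) h1 n).trans ?_
      rw [mul_pow, mul_assoc]
      gcongr
      have := sum_pow_le_card_pow_mul_sum univ (fun a => ‖z a t‖ ^ 2) (fun a _ => by positivity)
        (by omega : 0 < n)
      rw [card_univ, hcard] at this
      simpa only [← pow_mul] using this
    · refine le_trans ?_ (le_add_of_nonneg_right (by positivity))
      rw [sum_injective_prod_weylSum, ← hf] at h
      rw [hn, mul_add, pow_add, ← mul_sum, mul_comm 2 k, pow_mul _ k 2]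
      have h2 : (‖weylSum k (Ico 0 (N : ℤ)) t‖ ^ k) ^ 2 ≤ 4 ^ k * ‖E t‖ ^ 2 := by
        refine (pow_le_pow_left₀ (by positivity) h 2).trans (le_of_eq ?_)
        rw [mul_pow, ← pow_mul, mul_comm k 2, pow_mul]
        norm_num [hE]
      calc _ ≤ ((p : ℝ) ^ (2 * s - 1) * ∑ a, ‖z a t‖ ^ (2 * s)) * (4 ^ k * ‖E t‖ ^ 2) := by
            gcongr
            exact hpow (2 * s) (by omega)
        _ = _ := by ring
  have hmom : moment k n (Ico 0 (N : ℤ)) ≤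
      4 ^ k * (p : ℝ) ^ (2 * s - 1) *
        ∑ a, ∫ t, ‖E t‖ ^ 2 * ‖z a t‖ ^ (2 * s) ∂torusMeasure k +
      (16 * k ^ 2) ^ n * (p : ℝ) ^ (n - 1) * ∑ a, moment k n (residueClass p N a) := by
    unfold moment
    rw [← integral_finsetSum _ fun a _ => integrable_torus (by fun_prop),
      ← integral_finsetSum _ fun a _ => integrable_torus (by fun_prop),
      ← integral_const_mul, ← integral_const_mul,
      ← integral_add (integrable_torus (by fun_prop)) (integrable_torus (by fun_prop))]
    exact integral_mono (integrable_torus (by fun_prop)) (integrable_torus (by fun_prop)) hpt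
  refine hmom.trans ?_
  rw [add_mul]
  set J := moment k s (Ico 0 ((N / p + 1 : ℕ) : ℤ)) with hJ
  have hJ0 : 0 ≤ J := moment_nonneg _ _ _
  refine add_le_add ?_ ?_
  · have h1 : ∑ a, ∫ t, ‖E t‖ ^ 2 * ‖z a t‖ ^ (2 * s) ∂torusMeasure k ≤
        p * ((N ^ k * (k ^ k * p ^ (k * (k - 1) / 2)) : ℕ) * J) := by
      refine (sum_le_card_nsmul _ _ _ fun a _ => mixed_moment_le s hkp hN a).trans (le_of_eq ?_)
      rw [nsmul_eq_mul, card_univ, hcard]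
    have h2 : (p : ℝ) ^ (2 * s) = (p : ℝ) ^ (2 * s - 1) * p := by
      rw [← pow_succ]; congr 1; omega
    calc _ ≤ 4 ^ k * (p : ℝ) ^ (2 * s - 1) *
          (p * ((N ^ k * (k ^ k * p ^ (k * (k - 1) / 2)) : ℕ) * J)) := by gcongr
      _ = _ := by rw [h2]; push_cast; ring
  · have h1 : ∑ a, moment k n (residueClass p N a) ≤ p * ((N / p + 1 : ℕ) ^ (2 * k) * J) := by
      refine (sum_le_card_nsmul _ _ ((N / p + 1 : ℕ) ^ (2 * k) * J) fun a _ => ?_).trans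
        (le_of_eq ?_)
      · refine (moment_add_le k s k _).trans ?_
        gcongr
        · exact moment_nonneg _ _ _
        · exact card_residueClass_le N a
        · exact moment_residueClass_le k s N a
      · rw [nsmul_eq_mul, card_univ, hcard]
    have h2 : (p : ℝ) ^ n = (p : ℝ) ^ (n - 1) * p := by
      rw [← pow_succ]; congr 1; omega
    calc _ ≤ (16 * k ^ 2) ^ n * (p : ℝ) ^ (n - 1) * (p * ((N / p + 1 : ℕ) ^ (2 * k) * J)) := by
          gcongr
      _ = _ := by rw [h2]; ring

end Classes

end VinogradovMean

/-! ### Vinogradov's mean value estimate -/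

namespace VinogradovMean

open MeasureTheory UnitAddTorus

theorem moment_le_card_pow (k s : ℕ) (S : Finset ℤ) : moment k s S ≤ (#S : ℝ) ^ (2 * s) := by
  have h := moment_add_le k 0 s S
  rw [zero_add] at h
  simpa [moment] using h

theorem moment_Ico_le_pow (k s N : ℕ) : moment k s (Ico 0 (N : ℤ)) ≤ (N : ℝ) ^ (2 * s) := by
  simpa using moment_le_card_pow k s (Ico 0 (N : ℤ))

/-- A prime of size comparable to the `k`-th root of `N`. -/
theorem exists_prime_near_root {k N : ℕ} (hk : 4 ≤ k) (hN : k ^ k ≤ N) :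
    ∃ p : ℕ, p.Prime ∧ k < p ∧ N ≤ p ^ k ∧ p ≤ N ∧ (p : ℝ) ≤ 4 * (N : ℝ) ^ (1 / (k : ℝ)) := by
  have hk0 : (0 : ℝ) < k := by positivity
  have hkN : (k : ℝ) ≤ (N : ℝ) ^ (1 / (k : ℝ)) := by
    have h1 : ((k : ℝ) ^ k) ^ (1 / (k : ℝ)) ≤ (N : ℝ) ^ (1 / (k : ℝ)) :=
      Real.rpow_le_rpow (by positivity) (by exact_mod_cast hN) (by positivity)
    rwa [one_div, Real.pow_rpow_inv_natCast (by positivity) (by omega), ← one_div] at h1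
  set y := (N : ℝ) ^ (1 / (k : ℝ)) with hy
  have hyk : y ^ k = N := by
    rw [hy, one_div, Real.rpow_inv_natCast_pow (by positivity) (by omega)]
  have hk4 : (4 : ℝ) ≤ k := by exact_mod_cast hk
  have hy1 : 1 ≤ y := by linarith
  obtain ⟨p, hp, h1, h2⟩ := Nat.exists_prime_lt_and_le_two_mul ⌈y⌉₊ (by positivity)
  have h3 : y < p := (Nat.le_ceil y).trans_lt (by exact_mod_cast h1)
  have h4 : (p : ℝ) ≤ 4 * y := by
    have h5 : (p : ℝ) ≤ 2 * ⌈y⌉₊ := by exact_mod_cast h2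
    have := Nat.ceil_lt_add_one (show 0 ≤ y by linarith)
    linarith
  refine ⟨p, hp, by exact_mod_cast hkN.trans_lt h3, ?_, ?_, h4⟩
  · have : (N : ℝ) ≤ (p : ℝ) ^ k := by rw [← hyk]; gcongr
    exact_mod_cast this
  · have : (p : ℝ) ≤ N := by
      rw [← hyk]
      refine h4.trans ?_
      calc 4 * y ≤ y * y := by gcongr; linarith
        _ = y ^ 2 := by ring
        _ ≤ y ^ k := pow_le_pow_right₀ hy1 (by omega)
    exact_mod_cast this

theorem bracket_le {k N s p : ℕ} (hk : 1 ≤ k) (hs : k ^ 2 ≤ s) (hp : 0 < p) (hN : N ≤ p ^ k)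
    (hpN : p ≤ N) :
    (4 ^ k * p ^ (2 * s) * (N ^ k * (k ^ k * p ^ (k * (k - 1) / 2))) +
        (16 * k ^ 2) ^ (s + k) * p ^ (s + k) * ((N / p + 1 : ℕ) : ℝ) ^ (2 * k) : ℝ) ≤
      2 * (4 ^ k * (16 * k ^ 2) ^ (s + k)) * (p ^ (2 * s + k * (k - 1) / 2) * N ^ k) := by
  have hp1 : (1 : ℝ) ≤ p := by exact_mod_cast hp
  have hk1 : (1 : ℝ) ≤ k := by exact_mod_cast hk
  have hks : k ≤ s := by nlinarith
  have hM : ((N / p + 1 : ℕ) : ℝ) ≤ 2 * N / p := by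
    have h1 : ((N / p : ℕ) : ℝ) ≤ N / p := Nat.cast_div_le
    have h2 : (1 : ℝ) ≤ N / p := by
      rw [one_le_div (by positivity)]; exact_mod_cast hpN
    push_cast
    rw [mul_div_assoc]
    linarith
  have e1 : (4 ^ k * p ^ (2 * s) * (N ^ k * (k ^ k * p ^ (k * (k - 1) / 2))) : ℝ) ≤
      4 ^ k * (16 * k ^ 2) ^ (s + k) * (p ^ (2 * s + k * (k - 1) / 2) * N ^ k) := by
    have : (k : ℝ) ^ k ≤ (16 * k ^ 2) ^ (s + k) := by
      calc (k : ℝ) ^ k ≤ (16 * k ^ 2) ^ k := by gcongr; nlinarith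
        _ ≤ _ := pow_le_pow_right₀ (by nlinarith) (by omega)
    calc _ = 4 ^ k * (k : ℝ) ^ k * (p ^ (2 * s + k * (k - 1) / 2) * N ^ k) := by
          rw [pow_add]; ring
      _ ≤ _ := by gcongr
  have e2 : ((16 * k ^ 2) ^ (s + k) * p ^ (s + k) * ((N / p + 1 : ℕ) : ℝ) ^ (2 * k) : ℝ) ≤
      4 ^ k * (16 * k ^ 2) ^ (s + k) * (p ^ (2 * s + k * (k - 1) / 2) * N ^ k) := by
    have h1 : (p : ℝ) ^ (s + k) * ((N / p + 1 : ℕ) : ℝ) ^ (2 * k) ≤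
        4 ^ k * (p ^ (2 * s + k * (k - 1) / 2) * N ^ k) := by
      have hpk : (p : ℝ) ^ (s + k) = p ^ (s - k) * p ^ (2 * k) := by
        rw [← pow_add]; congr 1; omega
      have hNs : (N : ℝ) ^ k ≤ p ^ s := by
        calc (N : ℝ) ^ k ≤ ((p : ℝ) ^ k) ^ k := by gcongr; exact_mod_cast hN
          _ = p ^ (k ^ 2) := by rw [← pow_mul, sq]
          _ ≤ p ^ s := pow_le_pow_right₀ hp1 hs
      calc _ ≤ (p : ℝ) ^ (s + k) * (2 * N / p) ^ (2 * k) := by gcongr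
        _ = 4 ^ k * (p ^ (s - k) * N ^ k * N ^ k) := by
            rw [hpk, div_pow, mul_pow, pow_mul (2 : ℝ)]
            field_simp
            rw [← pow_mul, show (4 : ℝ) = 2 ^ 2 by norm_num, ← pow_mul]
            ring
        _ ≤ 4 ^ k * (p ^ (s - k) * p ^ s * N ^ k) := by gcongr
        _ ≤ _ := by
            gcongr
            rw [← pow_add]
            exact pow_le_pow_right₀ hp1 (by omega)
    calc _ = (16 * k ^ 2 : ℝ) ^ (s + k) *
          ((p : ℝ) ^ (s + k) * ((N / p + 1 : ℕ) : ℝ) ^ (2 * k)) := by ring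
      _ ≤ (16 * k ^ 2 : ℝ) ^ (s + k) * (4 ^ k * (p ^ (2 * s + k * (k - 1) / 2) * N ^ k)) := by
          gcongr
      _ = _ := by ring
  linarith

/-- Vinogradov's mean value estimate, in iterated form. -/
theorem moment_le_iterate {k : ℕ} (hk : 4 ≤ k) : ∀ τ : ℕ, τ ≤ 9 * k → ∀ N : ℕ, 1 ≤ N →
    moment k (k ^ 2 + k * τ) (Ico 0 (N : ℤ)) ≤
      (k : ℝ) ^ (k ^ 3) * ((4 * k : ℝ) ^ (50 * k ^ 2)) ^ τ *
      (N : ℝ) ^ (2 * (k ^ 2 + k * τ : ℝ) - k * (k + 1) / 2 +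
        k * (k + 1) / 2 * (1 - 1 / k) ^ τ : ℝ) := by
  have hk1 : (1 : ℝ) ≤ k := by exact_mod_cast (by omega : 1 ≤ k)
  have hk0 : (0 : ℝ) < k := by linarith
  intro τ
  induction τ with
  | zero =>
    intro _ N hN
    refine (moment_Ico_le_pow _ _ _).trans ?_
    simp only [mul_zero, add_zero, pow_zero, mul_one, CharP.cast_eq_zero, sub_add_cancel]
    rw [← Real.rpow_natCast]
    push_cast
    exact le_mul_of_one_le_left (by positivity) (one_le_pow₀ hk1)
  | succ τ ih =>
    intro hτ N hN
    have hN1 : (1 : ℝ) ≤ N := by exact_mod_cast hN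
    have hN0 : (0 : ℝ) < N := by linarith
    set B := (4 * k : ℝ) ^ (50 * k ^ 2) with hB
    have hB1 : 1 ≤ B := one_le_pow₀ (by linarith)
    set κ : ℝ := k * (k + 1) / 2 with hκ
    have hκ0 : 0 ≤ κ := by positivity
    have hθ0 : (0 : ℝ) ≤ 1 - 1 / k := by
      rw [sub_nonneg, div_le_one hk0]; exact hk1
    have hθ1 : (1 : ℝ) - 1 / k ≤ 1 := by
      have : (0 : ℝ) ≤ 1 / k := by positivity
      linarith
    set η : ℝ := κ * (1 - 1 / k) ^ τ with hη
    have hη0 : 0 ≤ η := by positivity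
    have hηκ : η ≤ κ := mul_le_of_le_one_right hκ0 (pow_le_one₀ hθ0 hθ1)
    have hη' : κ * (1 - 1 / k) ^ (τ + 1) = η - η / k := by
      rw [hη, pow_succ]; ring
    rw [hη']
    rcases lt_or_ge N (k ^ k) with hsmall | hlarge
    · refine (moment_Ico_le_pow _ _ _).trans ?_
      have h1 : (N : ℝ) ^ (2 * (k ^ 2 + k * (τ + 1))) ≤
          (N : ℝ) ^ κ * (N : ℝ) ^ (2 * (k ^ 2 + k * (τ + 1 : ℕ) : ℝ) - κ + (η - η / k)) := by
        rw [← Real.rpow_add hN0, ← Real.rpow_natCast]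
        refine Real.rpow_le_rpow_of_exponent_le hN1 ?_
        push_cast
        have : η / k ≤ η := div_le_self hη0 hk1
        linarith
      refine h1.trans ?_
      gcongr
      have h2 : (N : ℝ) ^ κ ≤ (k : ℝ) ^ (k ^ 3) := by
        calc (N : ℝ) ^ κ ≤ ((k : ℝ) ^ k) ^ κ := by
              gcongr
              exact_mod_cast hsmall.le
          _ = (k : ℝ) ^ (k * κ) := by rw [← Real.rpow_natCast, ← Real.rpow_mul hk0.le]
          _ ≤ (k : ℝ) ^ ((k ^ 3 : ℕ) : ℝ) := by
              refine Real.rpow_le_rpow_of_exponent_le hk1 ?_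
              push_cast
              rw [hκ]
              nlinarith [mul_nonneg (mul_nonneg hk0.le hk0.le) (sub_nonneg.mpr hk1)]
          _ = _ := Real.rpow_natCast _ _
      exact h2.trans (le_mul_of_one_le_right (by positivity) (one_le_pow₀ hB1))
    · obtain ⟨p, hp, hkp, hNp, hpN, hp4⟩ := exists_prime_near_root hk hlarge
      have : Fact p.Prime := ⟨hp⟩
      set s := k ^ 2 + k * τ with hs
      have hss : k ^ 2 + k * (τ + 1) = s + k := by rw [hs]; ring
      have hsR : (k ^ 2 + k * τ : ℝ) = s := by rw [hs]; push_cast; ring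
      have hsR' : (k ^ 2 + k * (τ + 1 : ℕ) : ℝ) = s + k := by rw [← hsR]; push_cast; ring
      rw [hss, hsR']
      rw [hsR] at ih
      have hs0 : 0 < s := by positivity
      have hsk : k ^ 2 ≤ s := Nat.le_add_right _ _
      have hp0 : (0 : ℝ) < p := by exact_mod_cast hp.pos
      refine (moment_recursion hs0 hkp hNp).trans ?_
      have hbr := bracket_le (by omega) hsk hp.pos hNp hpN
      have hM : ((N / p + 1 : ℕ) : ℝ) ≤ 2 * (N / p) := by
        have h1 : ((N / p : ℕ) : ℝ) ≤ N / p := Nat.cast_div_le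
        have h2 : (1 : ℝ) ≤ N / p := by
          rw [one_le_div hp0]; exact_mod_cast hpN
        push_cast
        linarith
      set e : ℝ := 2 * (s : ℝ) - κ + η with he
      have hsR2 : (k : ℝ) ^ 2 ≤ s := by exact_mod_cast hsk
      have hκk : κ ≤ k ^ 2 := by rw [hκ]; nlinarith
      have he0 : 0 ≤ e := by linarith
      have hJ := ih (by omega) (N / p + 1) (Nat.le_add_left _ _)
      have hJ2 : moment k s (Ico 0 ((N / p + 1 : ℕ) : ℤ)) ≤
          (k : ℝ) ^ (k ^ 3) * B ^ τ * (2 ^ (2 * s) * ((N : ℝ) ^ e / (p : ℝ) ^ e)) := by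
        refine hJ.trans ?_
        gcongr
        calc ((N / p + 1 : ℕ) : ℝ) ^ e ≤ (2 * (N / p)) ^ e := by gcongr
          _ = 2 ^ e * ((N : ℝ) ^ e / (p : ℝ) ^ e) := by
              rw [Real.mul_rpow (by norm_num) (by positivity),
                Real.div_rpow (by positivity) (by positivity)]
          _ ≤ _ := by
              gcongr
              rw [← Real.rpow_natCast]
              refine Real.rpow_le_rpow_of_exponent_le (by norm_num) ?_
              push_cast
              linarith
      have hgauss : ((2 * s + k * (k - 1) / 2 : ℕ) : ℝ) = 2 * s + k * (k - 1) / 2 := by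
        have h2 : 2 ∣ k * (k - 1) := (Nat.even_mul_pred_self k).two_dvd
        rw [Nat.cast_add, Nat.cast_div h2 (by norm_num)]
        push_cast [Nat.cast_sub (show 1 ≤ k by omega)]
        ring
      have hppow : (p : ℝ) ^ (2 * s + k * (k - 1) / 2) / (p : ℝ) ^ e ≤
          4 ^ (k ^ 2) * (N : ℝ) ^ (k - η / k : ℝ) := by
        rw [← Real.rpow_natCast, ← Real.rpow_sub hp0, hgauss]
        have h1 : 2 * (s : ℝ) + k * (k - 1) / 2 - e = k ^ 2 - η := by rw [he, hκ]; ring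
        rw [h1]
        calc (p : ℝ) ^ ((k : ℝ) ^ 2 - η) ≤ (4 * (N : ℝ) ^ (1 / (k : ℝ))) ^ ((k : ℝ) ^ 2 - η) :=
              Real.rpow_le_rpow hp0.le hp4 (by linarith)
          _ = 4 ^ ((k : ℝ) ^ 2 - η) * (N : ℝ) ^ (k - η / k : ℝ) := by
              rw [Real.mul_rpow (by norm_num) (by positivity), ← Real.rpow_mul hN0.le]
              congr 2
              field_simp
          _ ≤ _ := by
              refine mul_le_mul_of_nonneg_right ?_ (by positivity)
              rw [← Real.rpow_natCast 4 (k ^ 2)]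
              refine Real.rpow_le_rpow_of_exponent_le (by norm_num) ?_
              push_cast
              linarith
      have hconst : 2 * (4 ^ k * (16 * k ^ 2 : ℝ) ^ (s + k)) * 2 ^ (2 * s) * 4 ^ (k ^ 2) ≤ B := by
        have hsk10 : s + k ≤ 10 * k ^ 2 := by rw [← hss]; nlinarith
        have h16 : (16 * k ^ 2 : ℝ) ^ (s + k) ≤ (4 * k : ℝ) ^ (20 * k ^ 2) := by
          rw [show (16 * k ^ 2 : ℝ) = (4 * k) ^ 2 by ring, ← pow_mul]
          exact pow_le_pow_right₀ (by linarith) (by omega)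
        have h2 : (2 : ℝ) * 4 ^ k * 2 ^ (2 * s) * 4 ^ (k ^ 2) ≤ (4 * k : ℝ) ^ (30 * k ^ 2) := by
          rw [show (4 : ℝ) = 2 ^ 2 by norm_num, ← pow_mul, ← pow_mul, ← pow_succ', ← pow_add,
            ← pow_add]
          refine (pow_le_pow_right₀ (by norm_num) (?_ : _ ≤ 30 * k ^ 2)).trans
            (pow_le_pow_left₀ (by norm_num) (by norm_num; linarith) _)
          nlinarith
        calc _ = (2 * 4 ^ k * 2 ^ (2 * s) * 4 ^ (k ^ 2)) * (16 * k ^ 2 : ℝ) ^ (s + k) := by ring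
          _ ≤ (4 * k : ℝ) ^ (30 * k ^ 2) * (4 * k : ℝ) ^ (20 * k ^ 2) := by gcongr
          _ = B := by rw [← pow_add, hB]; congr 1; ring
      calc _ ≤ (2 * (4 ^ k * (16 * k ^ 2) ^ (s + k)) *
            (p ^ (2 * s + k * (k - 1) / 2) * N ^ k)) *
            ((k : ℝ) ^ (k ^ 3) * B ^ τ * (2 ^ (2 * s) * ((N : ℝ) ^ e / (p : ℝ) ^ e))) :=
            mul_le_mul hbr hJ2 (moment_nonneg _ _ _) (by positivity)
        _ = (k : ℝ) ^ (k ^ 3) * B ^ τ * (2 * (4 ^ k * (16 * k ^ 2) ^ (s + k)) * 2 ^ (2 * s)) *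
            ((p : ℝ) ^ (2 * s + k * (k - 1) / 2) / (p : ℝ) ^ e) * ((N : ℝ) ^ k * (N : ℝ) ^ e) := by
            ring
        _ ≤ (k : ℝ) ^ (k ^ 3) * B ^ τ * (2 * (4 ^ k * (16 * k ^ 2) ^ (s + k)) * 2 ^ (2 * s)) *
            (4 ^ (k ^ 2) * (N : ℝ) ^ (k - η / k : ℝ)) * ((N : ℝ) ^ k * (N : ℝ) ^ e) := by gcongr
        _ = (k : ℝ) ^ (k ^ 3) * B ^ τ *
            (2 * (4 ^ k * (16 * k ^ 2) ^ (s + k)) * 2 ^ (2 * s) * 4 ^ (k ^ 2)) *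
            ((N : ℝ) ^ (k - η / k : ℝ) * ((N : ℝ) ^ k * (N : ℝ) ^ e)) := by ring
        _ ≤ (k : ℝ) ^ (k ^ 3) * B ^ τ * B *
            ((N : ℝ) ^ (k - η / k : ℝ) * ((N : ℝ) ^ k * (N : ℝ) ^ e)) := by gcongr
        _ = _ := by
            rw [pow_succ B, mul_assoc ((k : ℝ) ^ (k ^ 3))]
            congr 1
            rw [← Real.rpow_natCast (N : ℝ) k, ← Real.rpow_add hN0, ← Real.rpow_add hN0]
            congr 1
            rw [he]
            ring

/-- Vinogradov's mean value estimate. -/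
theorem moment_le {k : ℕ} (hk : 4 ≤ k) {N : ℕ} (hN : 1 ≤ N) :
    moment k (10 * k ^ 2) (Ico 0 (N : ℤ)) ≤ (4 * k : ℝ) ^ (451 * k ^ 3) *
      (N : ℝ) ^ (20 * k ^ 2 - k * (k + 1) / 2 + k * (k + 1) / 2 / 4096 : ℝ) := by
  have hk1 : (1 : ℝ) ≤ k := by exact_mod_cast (by omega : 1 ≤ k)
  have hk0 : (0 : ℝ) < k := by linarith
  have hN1 : (1 : ℝ) ≤ N := by exact_mod_cast hN
  have h := moment_le_iterate hk (9 * k) le_rfl N hN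
  rw [show k ^ 2 + k * (9 * k) = 10 * k ^ 2 by ring] at h
  refine h.trans ?_
  gcongr ?_ * ?_
  · rw [← pow_mul, show 451 * k ^ 3 = k ^ 3 + 50 * k ^ 2 * (9 * k) by ring, pow_add]
    gcongr
    linarith
  · refine Real.rpow_le_rpow_of_exponent_le hN1 ?_
    have h1 : (1 - 1 / (k : ℝ)) ^ (9 * k) ≤ 1 / 4096 := by
      have h2 : 1 - 1 / (k : ℝ) ≤ Real.exp (-(1 / k)) := by
        have := Real.add_one_le_exp (-(1 / (k : ℝ)))
        linarith
      have h0 : (0 : ℝ) ≤ 1 - 1 / k := by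
        rw [sub_nonneg, div_le_one hk0]; exact hk1
      calc _ ≤ (Real.exp (-(1 / (k : ℝ)))) ^ (9 * k) := pow_le_pow_left₀ h0 h2 _
        _ = (Real.exp 9)⁻¹ := by
            rw [← Real.exp_nat_mul, ← Real.exp_neg]
            congr 1
            push_cast
            field_simp
        _ ≤ 1 / 4096 := by
            rw [one_div]
            refine inv_anti₀ (by norm_num) ?_
            have h3 : (2.7 : ℝ) ≤ Real.exp 1 := by linarith [Real.exp_one_gt_d9]
            have h4 : Real.exp 9 = Real.exp 1 ^ 9 := by
              rw [← Real.exp_nat_mul]; norm_num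
            rw [h4]
            exact le_trans (by norm_num) (pow_le_pow_left₀ (by norm_num) h3 9)
    have h5 := mul_le_mul_of_nonneg_left h1 (show (0 : ℝ) ≤ k * (k + 1) / 2 by positivity)
    push_cast
    nlinarith

end VinogradovMean

/-! ### Bilinear sums of the additive character -/

namespace VinogradovMean

open ComplexConjugate

/-- The additive character `exp (2πit)`. -/
noncomputable def expi (t : ℝ) : ℂ := Complex.exp ((2 * π * t : ℝ) * Complex.I)

@[simp] theorem norm_expi (t : ℝ) : ‖expi t‖ = 1 := Complex.norm_exp_ofReal_mul_I _

theorem expi_add (a b : ℝ) : expi (a + b) = expi a * expi b := by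
  rw [expi, expi, expi, ← Complex.exp_add]; congr 1; push_cast; ring

theorem expi_neg (a : ℝ) : expi (-a) = conj (expi a) := by
  rw [expi, expi, ← Complex.exp_conj]
  congr 1
  rw [map_mul, Complex.conj_ofReal, Complex.conj_I]
  push_cast
  ring

theorem expi_sum {ι : Type*} (s : Finset ι) (f : ι → ℝ) :
    expi (∑ i ∈ s, f i) = ∏ i ∈ s, expi (f i) := by
  classical
  induction s using Finset.induction_on with
  | empty => simp [expi]
  | insert a s ha ih => rw [sum_insert ha, prod_insert ha, expi_add, ih]

/-- The bilinear form with diagonal matrix `α`. -/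
noncomputable def diagForm {k : ℕ} (α : Fin k → ℝ) (l m : Fin k → ℤ) : ℝ :=
  ∑ j, α j * (l j * m j)

theorem diagForm_comm {k : ℕ} (α : Fin k → ℝ) (l m : Fin k → ℤ) :
    diagForm α l m = diagForm α m l := by
  simp only [diagForm, mul_comm (l _ : ℝ)]

theorem diagForm_sum_right {k : ℕ} (α : Fin k → ℝ) (l : Fin k → ℤ) {ι : Type*} (s : Finset ι)
    (m : ι → Fin k → ℤ) : diagForm α l (∑ i ∈ s, m i) = ∑ i ∈ s, diagForm α l (m i) := by
  unfold diagForm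
  rw [sum_comm]
  refine sum_congr rfl fun j _ => ?_
  simp [mul_sum]

theorem diagForm_sub_left {k : ℕ} (α : Fin k → ℝ) (l l' m : Fin k → ℤ) :
    diagForm α (l - l') m = diagForm α l m + -diagForm α l' m := by
  unfold diagForm
  rw [← sum_neg_distrib, ← sum_add_distrib]
  exact sum_congr rfl fun j _ => by simp; ring

theorem sum_expi_diagForm_pow {k : ℕ} (α : Fin k → ℝ) (l : Fin k → ℤ) (S : Finset ℤ)
    (c : ℤ → ℂ) (s : ℕ) :
    (∑ y ∈ S, c y * expi (diagForm α l (momentCurve k y))) ^ s =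
      ∑ u ∈ Fintype.piFinset fun _ : Fin s => S,
        (∏ i, c (u i)) * expi (diagForm α l (powerSums k u)) := by
  rw [sum_pow']
  refine sum_congr rfl fun u _ => ?_
  rw [prod_mul_distrib, powerSums, diagForm_sum_right, expi_sum]

theorem card_powerSums_sub_le (k s : ℕ) (S : Finset ℤ) (l : Fin k → ℤ) :
    (#{w ∈ (Fintype.piFinset fun _ : Fin s => S) ×ˢ (Fintype.piFinset fun _ : Fin s => S) |
      powerSums k w.1 - powerSums k w.2 = l} : ℝ) ≤ moment k s S := by
  have h := norm_integral_mFourier_mul_pow_le k s S (-l)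
  rw [integral_mFourier_mul_pow, Complex.norm_natCast] at h
  refine le_trans (le_of_eq ?_) h
  congr 2
  refine filter_congr fun w _ => ?_
  rw [neg_add_eq_iff_eq_add, sub_eq_iff_eq_add]

/-- The sum of the absolute values of the geometric sums attached to the multiples of `α`. -/
noncomputable def geomTotal (α : ℝ) (M : ℕ) : ℝ :=
  ∑ m ∈ Icc (-(M : ℤ)) M, ‖∑ l ∈ Icc (0 : ℤ) M, expi (α * (m * l))‖

theorem powerSums_mem {k s q : ℕ} {u : Fin s → ℤ}
    (hu : u ∈ Fintype.piFinset fun _ : Fin s => Ico (0 : ℤ) q) (j : Fin k) :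
    powerSums k u j ∈ Icc (0 : ℤ) ((s * q ^ (j.1 + 1) : ℕ) : ℤ) := by
  rw [Fintype.mem_piFinset] at hu
  simp only [mem_Ico] at hu
  rw [powerSums_apply, mem_Icc]
  refine ⟨sum_nonneg fun i _ => pow_nonneg (hu i).1 _, ?_⟩
  refine (sum_le_card_nsmul _ _ ((q : ℤ) ^ (j.1 + 1)) fun i _ =>
    pow_le_pow_left₀ (hu i).1 (hu i).2.le _).trans (le_of_eq ?_)
  simp

theorem sum_norm_pow_le {k s q : ℕ} (α : Fin k → ℝ) (c : ℤ → ℂ) (hc : ∀ x, ‖c x‖ ≤ 1) :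
    ∑ l ∈ Fintype.piFinset fun j : Fin k => Icc (0 : ℤ) ((s * q ^ (j.1 + 1) : ℕ) : ℤ),
      ‖∑ x ∈ Ico (0 : ℤ) q, c x * expi (diagForm α l (momentCurve k x))‖ ^ (2 * s) ≤
    moment k s (Ico 0 (q : ℤ)) * ∏ j : Fin k, geomTotal (α j) (s * q ^ (j.1 + 1)) := by
  set S := Ico (0 : ℤ) q with hS
  set T := Fintype.piFinset fun _ : Fin s => S with hT
  set Λ := Fintype.piFinset fun j : Fin k => Icc (0 : ℤ) ((s * q ^ (j.1 + 1) : ℕ) : ℤ) with hΛ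
  set C : (Fin s → ℤ) → ℂ := fun u => ∏ i, c (u i) with hC
  have hC1 : ∀ u, ‖C u‖ ≤ 1 := fun u => by
    rw [hC, norm_prod]
    exact prod_le_one (fun _ _ => norm_nonneg _) fun i _ => hc _
  set F : (Fin k → ℤ) → ℝ := fun m =>
    ∏ j : Fin k, ‖∑ l ∈ Icc (0 : ℤ) ((s * q ^ (j.1 + 1) : ℕ) : ℤ), expi (α j * (m j * l))‖ with hF
  have hF0 : ∀ m, 0 ≤ F m := fun m => prod_nonneg fun _ _ => norm_nonneg _
  have hexp : ∀ l, ((‖∑ x ∈ S, c x * expi (diagForm α l (momentCurve k x))‖ ^ (2 * s) : ℝ) : ℂ) =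
      ∑ w ∈ T ×ˢ T, C w.1 * conj (C w.2) *
        expi (diagForm α (powerSums k w.1 - powerSums k w.2) l) := by
    intro l
    have h2 : ∀ z : ℂ, ((‖z‖ ^ (2 * s) : ℝ) : ℂ) = z ^ s * conj (z ^ s) := by
      intro z
      rw [Complex.mul_conj', norm_pow, pow_mul']
      push_cast
      rfl
    rw [h2, sum_expi_diagForm_pow, map_sum, sum_mul_sum, ← sum_product']
    refine sum_congr rfl fun w _ => ?_
    rw [map_mul, ← expi_neg, diagForm_sub_left, expi_add, diagForm_comm α l, diagForm_comm α l]
    ring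
  have hbound : ∑ l ∈ Λ, ‖∑ x ∈ S, c x * expi (diagForm α l (momentCurve k x))‖ ^ (2 * s) ≤
      ∑ w ∈ T ×ˢ T, F (powerSums k w.1 - powerSums k w.2) := by
    have h1 : ((∑ l ∈ Λ, ‖∑ x ∈ S, c x * expi (diagForm α l (momentCurve k x))‖ ^ (2 * s) : ℝ) : ℂ)
        = ∑ w ∈ T ×ˢ T, C w.1 * conj (C w.2) *
          ∑ l ∈ Λ, expi (diagForm α (powerSums k w.1 - powerSums k w.2) l) := by
      rw [Complex.ofReal_sum]
      simp_rw [hexp, mul_sum]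
      exact sum_comm
    refine (le_abs_self _).trans ?_
    rw [← Real.norm_eq_abs, ← Complex.norm_real, h1]
    refine (norm_sum_le _ _).trans (sum_le_sum fun w _ => ?_)
    have h3 : ∀ m : Fin k → ℤ, ‖∑ l ∈ Λ, expi (diagForm α m l)‖ = F m := by
      intro m
      rw [hF]
      simp only
      rw [← norm_prod, prod_univ_sum]
      exact congrArg _ (sum_congr rfl fun l _ => expi_sum _ _)
    rw [norm_mul, norm_mul, RCLike.norm_conj, h3]
    refine mul_le_of_le_one_left (hF0 _) ?_
    exact mul_le_one₀ (hC1 _) (norm_nonneg _) (hC1 _)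
  refine hbound.trans ?_
  set Box := Fintype.piFinset fun j : Fin k =>
    Icc (-((s * q ^ (j.1 + 1) : ℕ) : ℤ)) ((s * q ^ (j.1 + 1) : ℕ) : ℤ) with hBox
  rw [← sum_fiberwise_of_maps_to (s := T ×ˢ T) (t := Box)
    (g := fun w => powerSums k w.1 - powerSums k w.2) ?_]
  · have h4 : ∏ j : Fin k, geomTotal (α j) (s * q ^ (j.1 + 1)) = ∑ m ∈ Box, F m := by
      unfold geomTotal
      rw [prod_univ_sum]
    rw [h4, mul_sum]
    refine sum_le_sum fun m _ => ?_
    rw [sum_congr rfl fun w hw => by rw [(mem_filter.mp hw).2], sum_const, nsmul_eq_mul]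
    exact mul_le_mul_of_nonneg_right (card_powerSums_sub_le _ _ _ _) (hF0 _)
  · intro w hw
    rw [mem_product] at hw
    rw [hBox, Fintype.mem_piFinset]
    intro j
    have h5 := mem_Icc.mp (powerSums_mem hw.1 j)
    have h6 := mem_Icc.mp (powerSums_mem hw.2 j)
    rw [mem_Icc, Pi.sub_apply]
    constructor <;> linarith

/-- Vinogradov's bilinear estimate. -/
theorem norm_bilinear_pow_le {k s q : ℕ} (hs : 0 < s) (α : Fin k → ℝ) :
    ‖∑ x ∈ Ico (0 : ℤ) q, ∑ y ∈ Ico (0 : ℤ) q,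
      expi (diagForm α (momentCurve k x) (momentCurve k y))‖ ^ (2 * s ^ 2) ≤
    (q : ℝ) ^ (4 * (s * (s - 1))) * moment k s (Ico 0 (q : ℤ)) ^ 2 *
      ∏ j : Fin k, geomTotal (α j) (s * q ^ (j.1 + 1)) := by
  set S := Ico (0 : ℤ) q with hS
  have hScard : (#S : ℝ) = q := by simp [hS]
  set T := Fintype.piFinset fun _ : Fin s => S with hT
  have hTcard : (#T : ℝ) = (q : ℝ) ^ s := by simp [hT, hS]
  set Λ := Fintype.piFinset fun j : Fin k => Icc (0 : ℤ) ((s * q ^ (j.1 + 1) : ℕ) : ℤ) with hΛ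
  set J := moment k s S with hJ
  set g : ℤ → ℂ := fun x => ∑ y ∈ S, expi (diagForm α (momentCurve k x) (momentCurve k y)) with hg
  set c : ℤ → ℂ := fun x => conj (g x ^ s) / ‖g x ^ s‖ with hc
  have hc1 : ∀ x, ‖c x‖ ≤ 1 := fun x => by
    rw [hc, norm_div, RCLike.norm_conj, Complex.norm_real, norm_norm]
    exact div_self_le_one _
  have hcg : ∀ x, c x * g x ^ s = ((‖g x‖ ^ s : ℝ) : ℂ) := fun x => by
    by_cases h : g x ^ s = 0
    · rw [h, mul_zero, ← norm_pow, h, norm_zero, Complex.ofReal_zero]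
    · have h' : ((‖g x ^ s‖ : ℝ) : ℂ) ≠ 0 := by
        rw [Complex.ofReal_ne_zero]; exact norm_ne_zero_iff.mpr h
      rw [hc, div_mul_eq_mul_div, Complex.conj_mul', div_eq_iff h', ← norm_pow]
      ring
  set H : (Fin k → ℤ) → ℂ :=
    fun l => ∑ x ∈ S, c x * expi (diagForm α l (momentCurve k x)) with hH
  have h1 : ‖∑ x ∈ S, g x‖ ^ s ≤ (q : ℝ) ^ (s - 1) * ∑ x ∈ S, ‖g x‖ ^ s := by
    refine (pow_le_pow_left₀ (norm_nonneg _) (norm_sum_le _ _) s).trans ?_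
    rw [← hScard]
    exact sum_pow_le_card_pow_mul_sum S _ (fun _ _ => norm_nonneg _) hs
  have h2 : ∑ x ∈ S, ‖g x‖ ^ s ≤ ∑ u ∈ T, ‖H (powerSums k u)‖ := by
    have h3 : ((∑ x ∈ S, ‖g x‖ ^ s : ℝ) : ℂ) = ∑ u ∈ T, H (powerSums k u) := by
      rw [Complex.ofReal_sum, hH]
      simp only
      rw [sum_comm]
      refine sum_congr rfl fun x _ => ?_
      rw [← hcg, hg]
      simp only
      have := sum_expi_diagForm_pow α (momentCurve k x) S (fun _ => 1) s
      simp only [one_mul, prod_const_one] at this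
      rw [this, mul_sum]
      exact sum_congr rfl fun u _ => by rw [diagForm_comm]
    refine (le_abs_self _).trans ?_
    rw [← Real.norm_eq_abs, ← Complex.norm_real, h3]
    exact norm_sum_le _ _
  have h3 : (∑ u ∈ T, ‖H (powerSums k u)‖) ^ s ≤
      ((q : ℝ) ^ s) ^ (s - 1) * ∑ u ∈ T, ‖H (powerSums k u)‖ ^ s := by
    rw [← hTcard]
    exact sum_pow_le_card_pow_mul_sum T _ (fun _ _ => norm_nonneg _) hs
  have h4 : (∑ u ∈ T, ‖H (powerSums k u)‖ ^ s) ^ 2 ≤ J *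
      (J * ∏ j : Fin k, geomTotal (α j) (s * q ^ (j.1 + 1))) := by
    have hmaps : ∀ u ∈ T, powerSums k u ∈ Λ := fun u hu =>
      Fintype.mem_piFinset.mpr fun j => powerSums_mem hu j
    have h5 : ∑ u ∈ T, ‖H (powerSums k u)‖ ^ s =
        ∑ l ∈ Λ, (#{u ∈ T | powerSums k u = l} : ℝ) * ‖H l‖ ^ s := by
      rw [← sum_fiberwise_of_maps_to hmaps]
      refine sum_congr rfl fun l _ => ?_
      rw [sum_congr rfl fun w hw => by rw [(mem_filter.mp hw).2], sum_const, nsmul_eq_mul]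
    rw [h5]
    refine (sum_mul_sq_le_sq_mul_sq _ _ _).trans ?_
    have h6 : ∑ l ∈ Λ, (#{u ∈ T | powerSums k u = l} : ℝ) ^ 2 = J := by
      rw [hJ, moment_eq_card, card_eq_sum_card_fiberwise (t := Λ) (f := fun w => powerSums k w.1)]
      · rw [Nat.cast_sum]
        refine sum_congr rfl fun l _ => ?_
        rw [sq, ← Nat.cast_mul, ← card_product]
        congr 2
        ext w
        simp only [mem_product, mem_filter, ← hT]
        constructor
        · rintro ⟨⟨h1, h2⟩, h3, h4⟩
          exact ⟨⟨⟨h1, h3⟩, h2.trans h4.symm⟩, h2⟩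
        · rintro ⟨⟨⟨h1, h3⟩, h4⟩, h2⟩
          exact ⟨⟨h1, h2⟩, h3, h4 ▸ h2⟩
      · intro w hw
        exact hmaps _ (mem_product.mp (mem_filter.mp hw).1).1
    rw [h6]
    refine mul_le_mul_of_nonneg_left ?_ (moment_nonneg _ _ _)
    refine le_trans (le_of_eq ?_) (sum_norm_pow_le (s := s) (q := q) α c hc1)
    exact sum_congr rfl fun l _ => by rw [← pow_mul, mul_comm]
  have h5 : ‖∑ x ∈ S, g x‖ ^ (s * s) ≤ ((q : ℝ) ^ (s - 1)) ^ s * (((q : ℝ) ^ s) ^ (s - 1) *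
      ∑ u ∈ T, ‖H (powerSums k u)‖ ^ s) := by
    rw [pow_mul]
    refine (pow_le_pow_left₀ (by positivity) (h1.trans
      (mul_le_mul_of_nonneg_left h2 (by positivity))) s).trans ?_
    rw [mul_pow]
    exact mul_le_mul_of_nonneg_left h3 (by positivity)
  calc _ = (‖∑ x ∈ S, g x‖ ^ (s * s)) ^ 2 := by rw [← pow_mul]; congr 1; ring
    _ ≤ (((q : ℝ) ^ (s - 1)) ^ s * (((q : ℝ) ^ s) ^ (s - 1) *
      ∑ u ∈ T, ‖H (powerSums k u)‖ ^ s)) ^ 2 := by gcongr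
    _ = (q : ℝ) ^ (4 * (s * (s - 1))) * (∑ u ∈ T, ‖H (powerSums k u)‖ ^ s) ^ 2 := by
      rw [mul_pow, mul_pow, ← mul_assoc]
      congr 1
      simp only [← pow_mul, ← pow_add]
      congr 1
      ring
    _ ≤ (q : ℝ) ^ (4 * (s * (s - 1))) *
        (J * (J * ∏ j : Fin k, geomTotal (α j) (s * q ^ (j.1 + 1)))) := by gcongr
    _ = _ := by ring

end VinogradovMean

/-! ### Power saving for bilinear sums -/

namespace VinogradovMean

open ComplexConjugate

theorem sum_Ico_int {E : Type*} [AddCommMonoid E] (q : ℕ) (f : ℤ → E) :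
    ∑ x ∈ Ico (0 : ℤ) q, f x = ∑ x ∈ range q, f x := by
  refine sum_nbij' Int.toNat (fun x : ℕ => (x : ℤ)) ?_ ?_ ?_ ?_ ?_ <;> intro x hx <;> simp at hx ⊢
  · omega
  · exact hx
  · exact hx.1
  · rw [max_eq_left hx.1]

theorem expi_natCast_mul (β : ℝ) (n : ℕ) : expi (β * n) = expi β ^ n := by
  rw [expi, expi, ← Complex.exp_nat_mul]; congr 1; push_cast; ring

theorem four_mul_dist_le_norm_expi_sub_one (β : ℝ) : 4 * |β - round β| ≤ ‖expi β - 1‖ := by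
  have h1 : expi β = expi (β - round β) := by
    have h2 : expi (round β : ℝ) = 1 := by
      rw [expi, Complex.exp_eq_one_iff]
      exact ⟨round β, by push_cast; ring⟩
    have h3 := expi_add (β - round β) (round β)
    rw [sub_add_cancel, h2, mul_one] at h3
    exact h3
  set t := β - round β with ht
  have ht2 : |t| ≤ 1 / 2 := abs_sub_round β
  rw [h1, expi, mul_comm (_ : ℂ) Complex.I, Complex.norm_exp_I_mul_ofReal_sub_one,
    Real.norm_eq_abs, abs_mul, abs_two]
  have h4 := Real.mul_abs_le_abs_sin (x := π * t) (by
    rw [abs_mul, abs_of_pos Real.pi_pos]; nlinarith [Real.pi_pos])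
  rw [abs_mul, abs_of_pos Real.pi_pos, ← mul_assoc, div_mul_cancel₀ _ Real.pi_ne_zero] at h4
  rw [show 2 * π * t / 2 = π * t by ring]
  linarith

theorem norm_geom_sum_le {β δ : ℝ} (hδ : 0 < δ) (h : δ ≤ |β - round β|) (n : ℕ) :
    ‖∑ l ∈ range n, expi (β * l)‖ ≤ 1 / (2 * δ) := by
  have h1 := four_mul_dist_le_norm_expi_sub_one β
  have h2 : 0 < ‖expi β - 1‖ := by linarith
  simp_rw [expi_natCast_mul]
  rw [geom_sum_eq (fun h => by rw [h, sub_self, norm_zero] at h2; exact h2.false), norm_div,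
    div_le_div_iff₀ h2 (by positivity)]
  have h3 : ‖expi β ^ n - 1‖ ≤ 2 := by
    refine (norm_sub_le _ _).trans ?_
    simp; norm_num
  nlinarith

theorem card_near_integer_le {α δ : ℝ} (hα : 0 < α) (hδ : 0 < δ) (M : ℕ) :
    (#{m ∈ Icc (-(M : ℤ)) M | |α * (m : ℤ) - round (α * (m : ℤ))| < δ} : ℝ) ≤
      (2 * α * M + 2) * (2 * δ / α + 1) := by
  have hcardIcc : ∀ a b : ℝ, a ≤ b → (#(Icc ⌈a⌉ ⌊b⌋) : ℝ) ≤ b - a + 1 := by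
    intro a b hab
    rw [Int.card_Icc]
    have h1 : ((⌊b⌋ + 1 - ⌈a⌉ : ℤ) : ℝ) ≤ b - a + 1 := by
      push_cast
      linarith [Int.floor_le b, Int.le_ceil a]
    have h2 : ((⌊b⌋ + 1 - ⌈a⌉).toNat : ℝ) = ((max (⌊b⌋ + 1 - ⌈a⌉) 0 : ℤ) : ℝ) := by
      rw [← Int.toNat_eq_max, Int.cast_natCast]
    rw [h2, Int.cast_max, Int.cast_zero]
    exact max_le h1 (by linarith)
  set B := Icc ⌈-(α * M + 1 / 2)⌉ ⌊α * M + 1 / 2⌋ with hB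
  set A := {m ∈ Icc (-(M : ℤ)) M | |α * (m : ℤ) - round (α * (m : ℤ))| < δ} with hA
  have hmaps : ∀ m ∈ A, round (α * m) ∈ B := by
    intro m hm
    simp only [hA, mem_filter, mem_Icc] at hm
    have h1 := abs_le.mp (abs_sub_round (α * m))
    have h2 : (-(M : ℝ)) ≤ m := by exact_mod_cast hm.1.1
    have h3 : (m : ℝ) ≤ M := by exact_mod_cast hm.1.2
    rw [hB, mem_Icc, Int.ceil_le, Int.le_floor]
    constructor <;> nlinarith
  rw [card_eq_sum_card_fiberwise hmaps, Nat.cast_sum]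
  have hfib : ∀ n ∈ B, (#{m ∈ A | round (α * ((m : ℤ) : ℝ)) = n} : ℝ) ≤ 2 * δ / α + 1 := by
    intro n _
    have hsub : {m ∈ A | round (α * ((m : ℤ) : ℝ)) = n} ⊆ Icc ⌈(n - δ) / α⌉ ⌊(n + δ) / α⌋ := by
      intro m hm
      simp only [hA, mem_filter] at hm
      have h1 := abs_lt.mp hm.1.2
      rw [hm.2] at h1
      rw [mem_Icc, Int.ceil_le, Int.le_floor, div_le_iff₀ hα, le_div_iff₀ hα]
      constructor <;> linarith
    have h2 : (#{m ∈ A | round (α * ((m : ℤ) : ℝ)) = n} : ℝ) ≤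
        #(Icc ⌈(n - δ) / α⌉ ⌊(n + δ) / α⌋) := by
      exact_mod_cast card_le_card hsub
    refine h2.trans ((hcardIcc _ _ (by gcongr; linarith)).trans (le_of_eq ?_))
    field_simp
    ring
  refine (sum_le_card_nsmul _ _ _ hfib).trans ?_
  rw [nsmul_eq_mul]
  refine mul_le_mul_of_nonneg_right ?_ (by positivity)
  refine (hcardIcc _ _ (by linarith [show 0 ≤ α * M by positivity])).trans (le_of_eq ?_)
  ring

theorem geomTotal_neg (α : ℝ) (M : ℕ) : geomTotal (-α) M = geomTotal α M := by
  unfold geomTotal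
  refine sum_congr rfl fun m _ => ?_
  rw [← RCLike.norm_conj (∑ l ∈ Icc (0 : ℤ) M, expi (α * (m * l))), map_sum]
  congr 1
  exact sum_congr rfl fun l _ => by rw [← expi_neg]; congr 1; ring

theorem geomTotal_nonneg (α : ℝ) (M : ℕ) : 0 ≤ geomTotal α M :=
  sum_nonneg fun _ _ => norm_nonneg _

theorem norm_sum_expi_le_card {ι : Type*} (s : Finset ι) (f : ι → ℝ) :
    ‖∑ i ∈ s, expi (f i)‖ ≤ #s :=
  (norm_sum_le _ _).trans (by simp)

theorem geomTotal_le_trivial (α : ℝ) {M : ℕ} (hM : 1 ≤ M) : geomTotal α M ≤ 6 * (M : ℝ) ^ 2 := by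
  have hM1 : (1 : ℝ) ≤ M := by exact_mod_cast hM
  refine (sum_le_card_nsmul _ _ ((M : ℝ) + 1) fun m _ => ?_).trans ?_
  · refine (norm_sum_expi_le_card _ _).trans (le_of_eq ?_)
    rw [Int.card_Icc]
    have : ((M : ℤ) + 1 - 0).toNat = M + 1 := by omega
    rw [this]
    push_cast
    ring
  · rw [nsmul_eq_mul, Int.card_Icc]
    have : ((M : ℤ) + 1 - -M).toNat = 2 * M + 1 := by omega
    rw [this]
    push_cast
    nlinarith

theorem geomTotal_le {α : ℝ} (hα : α ≠ 0) (hα1 : |α| ≤ 1) {M : ℕ} (hM : 1 ≤ M) :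
    geomTotal α M ≤ 20 * (M : ℝ) ^ 2 * (√|α| + 1 / (M * √|α|)) := by
  wlog hpos : 0 < α generalizing α
  · have h := this (α := -α) (neg_ne_zero.mpr hα) (by rwa [abs_neg])
      (by rcases lt_or_gt_of_ne hα with h | h <;> [linarith; exact absurd h hpos])
    rwa [geomTotal_neg, abs_neg] at h
  rw [abs_of_pos hpos] at hα1 ⊢
  have hM1 : (1 : ℝ) ≤ M := by exact_mod_cast hM
  set d := √α with hd
  have hd0 : 0 < d := Real.sqrt_pos.mpr hpos
  have hdsq : d ^ 2 = α := Real.sq_sqrt hpos.le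
  have hd1 : d ≤ 1 := Real.sqrt_le_one.mpr hα1
  have hterm : ∀ m ∈ Icc (-(M : ℤ)) M, ‖∑ l ∈ Icc (0 : ℤ) M, expi (α * (m * l))‖ ≤
      (if |α * m - round (α * m)| < d then (M : ℝ) + 1 else 0) + 1 / (2 * d) := by
    intro m _
    have heq : ∑ l ∈ Icc (0 : ℤ) M, expi (α * (m * l)) =
        ∑ l ∈ range (M + 1), expi ((α * m) * l) := by
      have h := sum_Ico_int (M + 1) fun l : ℤ => expi (α * (m * l))
      rw [show Ico (0 : ℤ) ((M + 1 : ℕ) : ℤ) = Icc (0 : ℤ) M by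
        ext x; simp only [mem_Ico, mem_Icc]; push_cast; omega] at h
      rw [h]
      exact sum_congr rfl fun l _ => by congr 1; push_cast; ring
    rw [heq]
    split_ifs with h
    · refine (norm_sum_expi_le_card _ _).trans ?_
      rw [card_range]
      push_cast
      have : 0 < 1 / (2 * d) := by positivity
      linarith
    · rw [zero_add]
      exact norm_geom_sum_le hd0 (not_lt.mp h) _
  refine (sum_le_sum hterm).trans ?_
  rw [sum_add_distrib, ← sum_filter, sum_const, sum_const, nsmul_eq_mul, nsmul_eq_mul]
  have hcount := card_near_integer_le hpos hd0 M
  have hcard : (#(Icc (-(M : ℤ)) M) : ℝ) = 2 * M + 1 := by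
    rw [Int.card_Icc]
    have : ((M : ℤ) + 1 - -M).toNat = 2 * M + 1 := by omega
    rw [this]; push_cast; ring
  rw [hcard]
  have h2 : 2 * d / α + 1 ≤ 3 / d := by
    rw [← hdsq]
    have : 2 * d / d ^ 2 = 2 / d := by field_simp
    rw [this]
    have : 1 ≤ 1 / d := by rw [le_div_iff₀ hd0]; linarith
    have : 3 / d = 2 / d + 1 / d := by ring
    linarith
  calc _ ≤ (2 * α * M + 2) * (3 / d) * ((M : ℝ) + 1) + (2 * M + 1) * (1 / (2 * d)) := by
        gcongr
        exact hcount.trans (by gcongr)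
    _ ≤ (2 * α * M + 2) * (3 / d) * (2 * M) + (3 * M) * (1 / (2 * d)) := by gcongr <;> linarith
    _ = 12 * M ^ 2 * (α / d) + 13.5 * (M * (1 / d)) := by ring
    _ = 12 * M ^ 2 * d + 13.5 * (M * (1 / d)) := by
        congr 2; rw [← hdsq]; field_simp
    _ ≤ 20 * M ^ 2 * d + 20 * (M * (1 / d)) := by gcongr <;> norm_num
    _ = _ := by field_simp

/-- The bilinear sum has a power saving when enough coefficients are of moderate size. -/
theorem norm_bilinear_le {r q k : ℕ} (hk : k = 8 * r) (hr : 1 ≤ r) (hq : 1 ≤ q)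
    (α : Fin k → ℝ) {ρ : ℝ} (hρ : ∀ j : Fin k, r ≤ j.1 + 1 → j.1 + 1 < 2 * r → α j ≠ 0 ∧ |α j| ≤ 1 ∧
      √|α j| + 1 / ((q : ℝ) ^ (j.1 + 1) * √|α j|) ≤ ρ) (hρ0 : 0 ≤ ρ) :
    ‖∑ x ∈ Ico (0 : ℤ) q, ∑ y ∈ Ico (0 : ℤ) q,
      expi (diagForm α (momentCurve k x) (momentCurve k y))‖ ^ (819200 * r ^ 4) ≤
    ((q : ℝ) ^ 2) ^ (819200 * r ^ 4) *
      (32 ^ (461900 * r ^ 4) * (q : ℝ) ^ ((r : ℝ) ^ 2 * 72 / 4096) * ρ ^ r) := by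
  have hr1 : (1 : ℝ) ≤ r := by exact_mod_cast hr
  have hq1 : (1 : ℝ) ≤ q := by exact_mod_cast hq
  have hq0 : (0 : ℝ) < q := by linarith
  set s := 10 * k ^ 2 with hs
  have hs0 : 1 ≤ s := by rw [hs, hk]; nlinarith
  have hsR : (1 : ℝ) ≤ s := by exact_mod_cast hs0
  have hkR : (k : ℝ) = 8 * r := by rw [hk]; push_cast; ring
  have h1 := norm_bilinear_pow_le (s := s) (q := q) hs0 α
  have hJ := moment_le (k := k) (by omega) hq
  rw [show 2 * s ^ 2 = 819200 * r ^ 4 by rw [hs, hk]; ring] at h1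
  refine h1.trans ?_
  set κ : ℝ := k * (k + 1) / 2 with hκ
  have hW : ∏ j : Fin k, geomTotal (α j) (s * q ^ (j.1 + 1)) ≤
      (20 * (s : ℝ) ^ 2) ^ k * (q : ℝ) ^ (2 * κ) * ρ ^ r := by
    have h2 : ∀ j : Fin k, geomTotal (α j) (s * q ^ (j.1 + 1)) ≤
        (20 * (s : ℝ) ^ 2) * (q : ℝ) ^ (2 * (j.1 + 1)) *
          (if r ≤ j.1 + 1 ∧ j.1 + 1 < 2 * r then ρ else 1) := by
      intro j
      have hM : 1 ≤ s * q ^ (j.1 + 1) := Nat.mul_pos hs0 (pow_pos hq _)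
      have hcast : ((s * q ^ (j.1 + 1) : ℕ) : ℝ) ^ 2 = (s : ℝ) ^ 2 * (q : ℝ) ^ (2 * (j.1 + 1)) := by
        push_cast
        rw [mul_pow, ← pow_mul, mul_comm 2]
      split_ifs with h
      · obtain ⟨h3, h4, h5⟩ := hρ j h.1 h.2
        refine (geomTotal_le h3 h4 hM).trans ?_
        rw [hcast, ← mul_assoc]
        refine mul_le_mul_of_nonneg_left (le_trans ?_ h5) (by positivity)
        have hsq : 0 < √|α j| := Real.sqrt_pos.mpr (abs_pos.mpr h3)
        gcongr
        push_cast
        exact le_mul_of_one_le_left (by positivity) hsR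
      · refine (geomTotal_le_trivial _ hM).trans ?_
        rw [hcast, mul_one, ← mul_assoc]
        gcongr
        norm_num
    refine (prod_le_prod (fun j _ => geomTotal_nonneg _ _) fun j _ => h2 j).trans (le_of_eq ?_)
    rw [prod_mul_distrib, prod_mul_distrib, prod_const, card_univ, Fintype.card_fin]
    congr 1
    · congr 1
      rw [prod_pow_eq_pow_sum, ← Real.rpow_natCast]
      congr 1
      rw [Fin.sum_univ_eq_sum_range (fun j => 2 * (j + 1)) k, ← mul_sum]
      have : ∀ n : ℕ, ((∑ j ∈ range n, (j + 1) : ℕ) : ℝ) = n * (n + 1) / 2 := by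
        intro n
        induction n with
        | zero => simp
        | succ n ih => rw [sum_range_succ, Nat.cast_add, ih]; push_cast; ring
      rw [Nat.cast_mul, this, hκ]
      push_cast
      ring
    · rw [prod_ite, prod_const_one, mul_one, prod_const]
      congr 1
      have : #{j : Fin k | r ≤ j.1 + 1 ∧ j.1 + 1 < 2 * r} = #(Ico r (2 * r)) := by
        refine card_bij (fun j _ => j.1 + 1) ?_ ?_ ?_
        · intro j hj
          simpa using hj
        · intro a _ b _ h
          exact Fin.ext (by omega)
        · intro b hb
          rw [mem_Ico] at hb
          exact ⟨⟨b - 1, by omega⟩, by simp; omega, by simp; omega⟩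
      rw [this, Nat.card_Ico]
      omega
  have hκ2 : κ * 2 / 4096 ≤ (r : ℝ) ^ 2 * 72 / 4096 := by
    rw [hκ, hkR]; nlinarith
  have hconst : ((4 * k : ℝ) ^ (451 * k ^ 3)) ^ 2 * (20 * (s : ℝ) ^ 2) ^ k ≤
      32 ^ (461900 * r ^ 4) := by
    have hr32 : (r : ℝ) ≤ 32 ^ (r - 1) := by
      obtain ⟨m, rfl⟩ : ∃ m, r = m + 1 := ⟨r - 1, by omega⟩
      have := one_add_mul_le_pow (a := (31 : ℝ)) (by norm_num) m
      norm_num at this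
      push_cast
      nlinarith [show (0 : ℝ) ≤ m by positivity]
    have h4k : (4 * k : ℝ) ≤ 32 ^ r := by
      rw [hkR, show (32 : ℝ) ^ r = 32 * 32 ^ (r - 1) by rw [← pow_succ']; congr 1; omega]
      linarith
    have h20 : 20 * (s : ℝ) ^ 2 ≤ 32 ^ (9 * r) := by
      have h5 : 20 * (s : ℝ) ^ 2 = 8192000 * (r : ℝ) ^ 4 := by
        rw [hs, hk]; push_cast; ring
      have h6 : (r : ℝ) ≤ 32 ^ r := hr32.trans (pow_le_pow_right₀ (by norm_num) (by omega))
      rw [h5]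
      calc 8192000 * (r : ℝ) ^ 4 ≤ 32 ^ 5 * (32 ^ r) ^ 4 := by gcongr; norm_num
        _ = 32 ^ (5 + 4 * r) := by rw [← pow_mul, ← pow_add, mul_comm 4]
        _ ≤ _ := pow_le_pow_right₀ (by norm_num) (by omega)
    calc _ ≤ (((32 : ℝ) ^ r) ^ (451 * k ^ 3)) ^ 2 * (32 ^ (9 * r)) ^ k := by gcongr
      _ = 32 ^ (r * (451 * k ^ 3) * 2 + 9 * r * k) := by
          rw [← pow_mul, ← pow_mul, ← pow_mul, ← pow_add]; congr 1; ring
      _ ≤ _ := by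
          refine pow_le_pow_right₀ (by norm_num) ?_
          rw [hk]
          have : r ^ 2 ≤ r ^ 4 := Nat.pow_le_pow_right hr (by norm_num)
          nlinarith
  have hJ2 : moment k s (Ico 0 (q : ℤ)) ^ 2 ≤ ((4 * k : ℝ) ^ (451 * k ^ 3)) ^ 2 *
      (q : ℝ) ^ (4 * (s : ℝ) - 2 * κ + κ * 2 / 4096) := by
    refine (pow_le_pow_left₀ (moment_nonneg _ _ _) hJ 2).trans (le_of_eq ?_)
    rw [mul_pow, ← Real.rpow_mul_natCast hq0.le]
    congr 2
    rw [hs, hκ]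
    push_cast
    ring
  calc _ ≤ (q : ℝ) ^ (4 * (s * (s - 1))) * (((4 * k : ℝ) ^ (451 * k ^ 3)) ^ 2 *
        (q : ℝ) ^ (4 * (s : ℝ) - 2 * κ + κ * 2 / 4096)) *
        ((20 * (s : ℝ) ^ 2) ^ k * (q : ℝ) ^ (2 * κ) * ρ ^ r) := by
        gcongr
        exact prod_nonneg fun j _ => geomTotal_nonneg _ _
    _ = (((4 * k : ℝ) ^ (451 * k ^ 3)) ^ 2 * (20 * (s : ℝ) ^ 2) ^ k) *
        ((q : ℝ) ^ (4 * (s * (s - 1))) * (q : ℝ) ^ (4 * (s : ℝ) - 2 * κ + κ * 2 / 4096) *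
        (q : ℝ) ^ (2 * κ)) * ρ ^ r := by ring
    _ = (((4 * k : ℝ) ^ (451 * k ^ 3)) ^ 2 * (20 * (s : ℝ) ^ 2) ^ k) *
        (((q : ℝ) ^ 2) ^ (819200 * r ^ 4) * (q : ℝ) ^ (κ * 2 / 4096)) * ρ ^ r := by
        congr 2
        rw [← pow_mul, ← Real.rpow_natCast, ← Real.rpow_natCast, ← Real.rpow_add hq0,
          ← Real.rpow_add hq0, ← Real.rpow_add hq0]
        congr 1
        have h7 : ((4 * (s * (s - 1)) : ℕ) : ℝ) = 4 * (s * (s - 1)) := by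
          push_cast [Nat.cast_sub hs0]; ring
        have h8 : ((2 * (819200 * r ^ 4) : ℕ) : ℝ) = 4 * (s : ℝ) ^ 2 := by
          rw [hs, hk]; push_cast; ring
        rw [h7, h8]
        ring
    _ ≤ 32 ^ (461900 * r ^ 4) *
        (((q : ℝ) ^ 2) ^ (819200 * r ^ 4) * (q : ℝ) ^ ((r : ℝ) ^ 2 * 72 / 4096)) * ρ ^ r := by
        gcongr
    _ = _ := by ring

end VinogradovMean

/-! ### Exponential sums over `X / n` -/

namespace VinogradovMean

theorem norm_expi_sub_one_le (t : ℝ) : ‖expi t - 1‖ ≤ 2 * π * |t| := by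
  rw [expi, mul_comm]
  refine (Real.norm_exp_I_mul_ofReal_sub_one_le (x := 2 * π * t)).trans (le_of_eq ?_)
  rw [Real.norm_eq_abs, abs_mul, abs_of_pos (by positivity)]

theorem norm_expi_add_sub_le (t u : ℝ) : ‖expi (t + u) - expi t‖ ≤ 2 * π * |u| := by
  rw [expi_add, ← mul_sub_one, norm_mul, norm_expi, one_mul]
  exact norm_expi_sub_one_le u

theorem sum_Ioc_sub_sum_Ioc_succ (f : ℕ → ℂ) {a b : ℕ} (hab : a ≤ b) (h : ℕ) :
    ∑ n ∈ Ioc a b, f (n + h) - ∑ n ∈ Ioc a b, f (n + (h + 1)) =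
      f (a + 1 + h) - f (b + 1 + h) := by
  induction b, hab using Nat.le_induction with
  | base => simp
  | succ b hb ihb =>
    rw [sum_Ioc_succ_top (by omega), sum_Ioc_succ_top (by omega),
      show b + 1 + (h + 1) = b + 1 + 1 + h by ring]
    linear_combination ihb

theorem norm_sum_sub_sum_shift_le {f : ℕ → ℂ} (hf : ∀ n, ‖f n‖ ≤ 1) {a b : ℕ} (hab : a ≤ b)
    (h : ℕ) : ‖∑ n ∈ Ioc a b, f n - ∑ n ∈ Ioc a b, f (n + h)‖ ≤ 2 * h := by
  induction h with
  | zero => simp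
  | succ h ih =>
    have h1 := sum_Ioc_sub_sum_Ioc_succ f hab h
    have h2 : ‖f (a + 1 + h) - f (b + 1 + h)‖ ≤ 2 :=
      (norm_sub_le _ _).trans (by linarith [hf (a + 1 + h), hf (b + 1 + h)])
    rw [← h1] at h2
    refine (norm_sub_le_norm_sub_add_norm_sub _ (∑ n ∈ Ioc a b, f (n + h)) _).trans ?_
    push_cast
    linarith

/-- Averaging an exponential sum over a family of shifts. -/
theorem norm_sum_le_of_shifts {ι : Type*} {f : ℕ → ℂ} (hf : ∀ n, ‖f n‖ ≤ 1) {a b : ℕ}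
    (hab : a ≤ b) {I : Finset ι} (hI : I.Nonempty) (s : ι → ℕ) {H B : ℝ}
    (hs : ∀ i ∈ I, (s i : ℝ) ≤ H)
    (hB : ∀ n ∈ Ioc a b, ‖∑ i ∈ I, f (n + s i)‖ ≤ #I * B) :
    ‖∑ n ∈ Ioc a b, f n‖ ≤ ((b : ℝ) - a) * B + 2 * H := by
  have hc : (0 : ℝ) < #I := by exact_mod_cast hI.card_pos
  have h1 : (#I : ℂ) * ∑ n ∈ Ioc a b, f n =
      ∑ i ∈ I, (∑ n ∈ Ioc a b, f n - ∑ n ∈ Ioc a b, f (n + s i)) +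
        ∑ n ∈ Ioc a b, ∑ i ∈ I, f (n + s i) := by
    rw [sum_sub_distrib, sum_const, nsmul_eq_mul, sum_comm (s := I)]
    ring
  have h2 : (#I : ℝ) * ‖∑ n ∈ Ioc a b, f n‖ ≤ #I * (((b : ℝ) - a) * B + 2 * H) := by
    have : (#I : ℝ) * ‖∑ n ∈ Ioc a b, f n‖ = ‖(#I : ℂ) * ∑ n ∈ Ioc a b, f n‖ := by
      rw [norm_mul, Complex.norm_natCast]
    rw [this, h1]
    have h3 : ‖∑ i ∈ I, (∑ n ∈ Ioc a b, f n - ∑ n ∈ Ioc a b, f (n + s i))‖ ≤ #I * (2 * H) := by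
      rw [← nsmul_eq_mul]
      refine norm_sum_le_of_le _ (fun i hi => ?_) |>.trans (le_of_eq (sum_const _))
      exact (norm_sum_sub_sum_shift_le hf hab (s i)).trans (by linarith [hs i hi])
    have h4 : ‖∑ n ∈ Ioc a b, ∑ i ∈ I, f (n + s i)‖ ≤ ((b : ℝ) - a) * (#I * B) := by
      refine norm_sum_le_of_le _ hB |>.trans (le_of_eq ?_)
      rw [sum_const, nsmul_eq_mul, Nat.card_Ioc, Nat.cast_sub hab]
    refine (norm_add_le _ _).trans ?_
    linarith
  exact le_of_mul_le_mul_left h2 hc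

/-- Finite geometric expansion of `X / (n + z)`. -/
theorem div_add_eq_taylor (X : ℝ) {n z : ℝ} (hn : n ≠ 0) (hnz : n + z ≠ 0) (k : ℕ) :
    X / (n + z) = X / n + ∑ j : Fin k, X * (-1) ^ (j.1 + 1) / n ^ (j.1 + 2) * z ^ (j.1 + 1) +
      X * (-z) ^ (k + 1) / (n ^ (k + 1) * (n + z)) := by
  induction k with
  | zero => simp; field_simp; ring
  | succ k ih =>
    rw [Fin.sum_univ_castSucc, ih]
    have : X * (-z) ^ (k + 1) / (n ^ (k + 1) * (n + z)) =
        X * (-1) ^ (k + 1) / n ^ (k + 2) * z ^ (k + 1) +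
          X * (-z) ^ (k + 1 + 1) / (n ^ (k + 1 + 1) * (n + z)) := by
      rw [neg_pow z (k + 1), neg_pow z (k + 1 + 1)]
      field_simp
      ring
    simp only [Fin.val_castSucc, Fin.val_last]
    rw [this]
    ring

/-- The coefficients of the local expansion of `X / (n + z)` in powers of `z`. -/
noncomputable def localCoeff (X n : ℝ) (k : ℕ) (j : Fin k) : ℝ :=
  X * (-1) ^ (j.1 + 1) / n ^ (j.1 + 2)

theorem abs_localCoeff {X n : ℝ} (hX : 0 ≤ X) (hn : 0 < n) {k : ℕ} (j : Fin k) :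
    |localCoeff X n k j| = X / n ^ (j.1 + 2) := by
  rw [localCoeff, abs_div, abs_mul, abs_pow, abs_neg, abs_one, one_pow, mul_one, abs_of_nonneg hX,
    abs_of_pos (by positivity)]

theorem norm_local_sum_le {X : ℝ} (hX : 0 ≤ X) {n q : ℕ} (hn : 0 < n) (k : ℕ) :
    ‖∑ p ∈ range q ×ˢ range q, expi (X / ((n + p.1 * p.2 : ℕ) : ℝ))‖ ≤
      ‖∑ x ∈ Ico (0 : ℤ) q, ∑ y ∈ Ico (0 : ℤ) q,
        expi (diagForm (localCoeff X n k) (momentCurve k x) (momentCurve k y))‖ +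
      (q : ℝ) ^ 2 * (2 * π * (X * ((q : ℝ) ^ 2) ^ (k + 1) / (n : ℝ) ^ (k + 2))) := by
  have hn' : (0 : ℝ) < n := by exact_mod_cast hn
  have e1 : ‖∑ x ∈ Ico (0 : ℤ) q, ∑ y ∈ Ico (0 : ℤ) q,
        expi (diagForm (localCoeff X n k) (momentCurve k x) (momentCurve k y))‖ =
      ‖∑ p ∈ range q ×ˢ range q, expi (X / n +
        diagForm (localCoeff X n k) (momentCurve k p.1) (momentCurve k p.2))‖ := by
    simp only [expi_add]
    rw [← mul_sum, norm_mul, norm_expi, one_mul, sum_product, sum_Ico_int]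
    simp only [sum_Ico_int]
  rw [e1, ← sub_le_iff_le_add']
  refine (norm_sub_norm_le _ _).trans ?_
  rw [← sum_sub_distrib]
  have hcard : (q : ℝ) ^ 2 = #(range q ×ˢ range q) := by simp [sq]
  rw [hcard, ← nsmul_eq_mul, ← sum_const, ← hcard]
  refine norm_sum_le_of_le _ (fun p hp => ?_)
  simp only [mem_product, mem_range] at hp
  set z : ℝ := (p.1 : ℝ) * p.2 with hz
  have hz0 : 0 ≤ z := by positivity
  have hzq : z ≤ (q : ℝ) ^ 2 := by
    rw [hz, sq]
    have h1 : (p.1 : ℝ) ≤ q := by exact_mod_cast hp.1.le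
    have h2 : (p.2 : ℝ) ≤ q := by exact_mod_cast hp.2.le
    gcongr
  have hd : diagForm (localCoeff X n k) (momentCurve k p.1) (momentCurve k p.2) =
      ∑ j : Fin k, X * (-1) ^ (j.1 + 1) / (n : ℝ) ^ (j.1 + 2) * z ^ (j.1 + 1) := by
    simp only [diagForm, localCoeff, momentCurve, hz]
    push_cast
    simp only [mul_pow]
  have ht := div_add_eq_taylor X hn'.ne' (z := z) (by positivity) k
  have e2 : ((n + p.1 * p.2 : ℕ) : ℝ) = n + z := by push_cast; rfl
  rw [e2, hd, ht]
  refine (norm_expi_add_sub_le _ _).trans ?_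
  rw [abs_div, abs_mul, abs_pow, abs_neg, abs_of_nonneg hX, abs_of_nonneg hz0,
    abs_of_pos (show 0 < (n : ℝ) ^ (k + 1) * (n + z) by positivity)]
  rw [pow_succ (n : ℝ) (k + 1)]
  gcongr
  linarith

theorem local_ratio_le {K θ n : ℝ} {r q J : ℕ} (hK : 1 < K) (hn1 : K ≤ n) (hn2 : n ≤ 2 * K)
    (hr1 : 2 * θ ≤ r) (hr2 : (r : ℝ) < 2 * θ + 1) (hθ : 1 / 2 ≤ θ)
    (hq1 : K ^ ((7 : ℝ) / 16) / 2 ≤ q) (hJ1 : r ≤ J) (hJ2 : J < 2 * r) :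
    K ^ (θ + 1) / n ^ (J + 1) ≤ 1 ∧
      √(K ^ (θ + 1) / n ^ (J + 1)) + 1 / ((q : ℝ) ^ J * √(K ^ (θ + 1) / n ^ (J + 1))) ≤
        16 ^ r * K ^ (-(r : ℝ) / 32) := by
  have hK0 : 0 < K := by linarith
  have hn0 : 0 < n := by linarith
  have hJr : (r : ℝ) ≤ J := by exact_mod_cast hJ1
  have hJr2 : (J : ℝ) + 1 ≤ 2 * r := by exact_mod_cast hJ2
  have hr0 : (0 : ℝ) < r := by linarith
  set A := K ^ (θ + 1) / n ^ (J + 1) with hA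
  have hup : A ≤ K ^ (θ - J) := by
    rw [hA, div_le_iff₀ (by positivity)]
    calc K ^ (θ + 1) = K ^ (θ - J) * K ^ (J + 1) := by
          rw [← Real.rpow_natCast K (J + 1), ← Real.rpow_add hK0]; push_cast; ring_nf
      _ ≤ _ := by gcongr
  have hlow : K ^ (θ - J) / 4 ^ r ≤ A := by
    rw [hA, le_div_iff₀ (by positivity), div_mul_eq_mul_div, div_le_iff₀ (by positivity)]
    calc K ^ (θ - J) * n ^ (J + 1) ≤ K ^ (θ - J) * (2 * K) ^ (J + 1) := by gcongr
      _ = K ^ (θ + 1) * 2 ^ (J + 1) := by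
          rw [mul_pow, ← Real.rpow_natCast K (J + 1), mul_left_comm, ← Real.rpow_add hK0]
          push_cast; ring_nf
      _ ≤ K ^ (θ + 1) * 4 ^ r := by
          rw [show (4 : ℝ) = 2 ^ 2 by norm_num, ← pow_mul]
          gcongr
          · norm_num
          · omega
  have hA0 : 0 < A := by positivity
  have hsqrt : ∀ e : ℝ, √(K ^ e) = K ^ (e / 2) := fun e => by
    rw [Real.sqrt_eq_rpow, ← Real.rpow_mul hK0.le]; ring_nf
  have hs1 : √A ≤ K ^ (-(r : ℝ) / 32) := by
    refine (Real.sqrt_le_sqrt hup).trans ?_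
    rw [hsqrt]
    exact Real.rpow_le_rpow_of_exponent_le hK.le (by linarith)
  have hs2 : K ^ ((θ - J) / 2) / 2 ^ r ≤ √A := by
    refine le_trans (le_of_eq ?_) (Real.sqrt_le_sqrt hlow)
    rw [Real.sqrt_div (by positivity), hsqrt, show (4 : ℝ) ^ r = (2 ^ r) ^ 2 by
      rw [← pow_mul, mul_comm r, pow_mul]; norm_num, Real.sqrt_sq (by positivity)]
  have hqJ : K ^ ((7 : ℝ) / 16 * J) / 4 ^ r ≤ (q : ℝ) ^ J := by
    refine le_trans ?_ (pow_le_pow_left₀ (by positivity) hq1 J)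
    rw [div_pow, Real.rpow_mul hK0.le, Real.rpow_natCast]
    gcongr
    rw [show (4 : ℝ) = 2 ^ 2 by norm_num, ← pow_mul]
    gcongr
    · norm_num
  refine ⟨hup.trans (Real.rpow_le_one_of_one_le_of_nonpos hK.le (by linarith)), ?_⟩
  have hs3 : 1 / ((q : ℝ) ^ J * √A) ≤ 8 ^ r * K ^ (-(r : ℝ) / 32) := by
    have h1 : K ^ ((7 : ℝ) / 16 * J) / 4 ^ r * (K ^ ((θ - J) / 2) / 2 ^ r) ≤ (q : ℝ) ^ J * √A := by
      gcongr
    refine (one_div_le_one_div_of_le (by positivity) h1).trans ?_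
    rw [div_mul_div_comm, ← Real.rpow_add hK0, ← mul_pow, one_div_div,
      show (4 : ℝ) * 2 = 8 by norm_num, div_eq_mul_inv, ← Real.rpow_neg hK0.le]
    gcongr
    · exact hK.le
    · linarith
  have h16 : (1 : ℝ) + 8 ^ r ≤ 16 ^ r := by
    have h8 : (1 : ℝ) ≤ 8 ^ r := one_le_pow₀ (by norm_num)
    have h2 : (2 : ℝ) ≤ 2 ^ r := by
      have : 1 ≤ r := by exact_mod_cast hr0
      exact le_self_pow₀ (by norm_num) (by omega)
    calc (1 : ℝ) + 8 ^ r ≤ 2 * 8 ^ r := by linarith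
      _ ≤ 2 ^ r * 8 ^ r := by gcongr
      _ = 16 ^ r := by rw [← mul_pow]; norm_num
  calc _ ≤ K ^ (-(r : ℝ) / 32) + 8 ^ r * K ^ (-(r : ℝ) / 32) := add_le_add hs1 hs3
    _ = (1 + 8 ^ r) * K ^ (-(r : ℝ) / 32) := by ring
    _ ≤ _ := by gcongr

theorem norm_bilinear_local_le {K θ : ℝ} {r q n : ℕ} (hK : 1 < K) (hn1 : K ≤ n)
    (hn2 : (n : ℝ) ≤ 2 * K) (hr1 : 2 * θ ≤ r) (hr2 : (r : ℝ) < 2 * θ + 1) (hθ : 1 / 2 ≤ θ)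
    (hq1 : K ^ ((7 : ℝ) / 16) / 2 ≤ q) (hq2 : (q : ℝ) ≤ K ^ ((7 : ℝ) / 16)) (hq : 1 ≤ q) :
    ‖∑ x ∈ Ico (0 : ℤ) q, ∑ y ∈ Ico (0 : ℤ) q,
        expi (diagForm (localCoeff (K ^ (θ + 1)) n (8 * r)) (momentCurve (8 * r) x)
          (momentCurve (8 * r) y))‖ ≤
      (q : ℝ) ^ 2 * (32 * K ^ (-(1 / (52428800 * (r : ℝ) ^ 2)))) := by
  have hK0 : 0 < K := by linarith
  have hn0 : (0 : ℝ) < n := by linarith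
  have hr0 : (1 : ℝ) ≤ r := by linarith
  have hr : 1 ≤ r := by exact_mod_cast hr0
  have hE : 819200 * r ^ 4 ≠ 0 := by positivity
  rw [← pow_le_pow_iff_left₀ (norm_nonneg _) (by positivity) hE]
  refine (norm_bilinear_le (r := r) (q := q) rfl hr hq (localCoeff (K ^ (θ + 1)) n (8 * r))
    (ρ := 16 ^ r * K ^ (-(r : ℝ) / 32)) (fun j hj1 hj2 => ?_) (by positivity)).trans ?_
  · have h0 := abs_localCoeff (X := K ^ (θ + 1)) (by positivity) hn0 j
    rw [h0]
    obtain ⟨h1, h2⟩ := local_ratio_le hK hn1 hn2 hr1 hr2 hθ hq1 hj1 hj2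
    refine ⟨fun h => ?_, h1, h2⟩
    rw [h, abs_zero] at h0
    have : 0 < K ^ (θ + 1) / (n : ℝ) ^ (j.1 + 2) := by positivity
    linarith
  rw [mul_pow ((q : ℝ) ^ 2)]
  refine mul_le_mul_of_nonneg_left ?_ (by positivity)
  rw [mul_pow (32 : ℝ), ← Real.rpow_mul_natCast hK0.le]
  have h1 : (q : ℝ) ^ ((r : ℝ) ^ 2 * 72 / 4096) ≤ K ^ ((r : ℝ) ^ 2 / 64) := by
    calc (q : ℝ) ^ ((r : ℝ) ^ 2 * 72 / 4096) ≤
        (K ^ ((7 : ℝ) / 16)) ^ ((r : ℝ) ^ 2 * 72 / 4096) := by gcongr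
      _ = K ^ ((7 : ℝ) / 16 * ((r : ℝ) ^ 2 * 72 / 4096)) := by rw [Real.rpow_mul hK0.le]
      _ ≤ _ := Real.rpow_le_rpow_of_exponent_le hK.le (by nlinarith [sq_nonneg (r : ℝ)])
  have h2 : ((16 : ℝ) ^ r * K ^ (-(r : ℝ) / 32)) ^ r ≤ 32 ^ (r ^ 4) * K ^ (-(r : ℝ) ^ 2 / 32) := by
    rw [mul_pow, ← pow_mul, ← Real.rpow_mul_natCast hK0.le]
    gcongr ?_ * ?_
    · calc (16 : ℝ) ^ (r * r) ≤ 32 ^ (r * r) := by gcongr; norm_num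
        _ ≤ 32 ^ (r ^ 4) := by
          refine pow_le_pow_right₀ (by norm_num) ?_
          nlinarith [Nat.one_le_pow 2 r hr]
    · exact le_of_eq (by ring_nf)
  calc _ ≤ (32 : ℝ) ^ (461900 * r ^ 4) * K ^ ((r : ℝ) ^ 2 / 64) *
        (32 ^ (r ^ 4) * K ^ (-(r : ℝ) ^ 2 / 32)) := by gcongr
    _ = 32 ^ (461901 * r ^ 4) * K ^ (-(r : ℝ) ^ 2 / 64) := by
      rw [mul_mul_mul_comm, ← pow_add, ← Real.rpow_add hK0]
      congr 2 <;> ring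
    _ ≤ _ := by
      have : -(1 / (52428800 * (r : ℝ) ^ 2)) * ((819200 * r ^ 4 : ℕ) : ℝ) = -(r : ℝ) ^ 2 / 64 := by
        push_cast
        field_simp
        norm_num
      rw [this]
      gcongr
      · norm_num
      · omega

/-- Vinogradov's estimate for `∑ e(X / n)` over a dyadic range, `X = K ^ (θ + 1)`. -/
theorem norm_sum_expi_div_le_rpow {K θ : ℝ} (hK : 1 < K) (hθ : 1 / 2 ≤ θ) {a b : ℕ} (hab : a ≤ b)
    (ha : K ≤ a + 1) (hb : (b : ℝ) ≤ 2 * K) :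
    ‖∑ n ∈ Ioc a b, expi (K ^ (θ + 1) / n)‖ ≤
      100 * K * K ^ (-(1 / (838860800 * θ ^ 2))) := by
  have hK0 : 0 < K := by linarith
  set r := ⌈2 * θ⌉₊ with hr
  have hr1 : 2 * θ ≤ r := Nat.le_ceil _
  have hr2 : (r : ℝ) < 2 * θ + 1 := Nat.ceil_lt_add_one (by linarith)
  set q := ⌊K ^ ((7 : ℝ) / 16)⌋₊ with hq
  have hKq : 1 ≤ K ^ ((7 : ℝ) / 16) := Real.one_le_rpow hK.le (by norm_num)
  have hq0 : 1 ≤ q := Nat.one_le_floor_iff _ |>.2 hKq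
  have hq2 : (q : ℝ) ≤ K ^ ((7 : ℝ) / 16) := Nat.floor_le (by positivity)
  have hq1 : K ^ ((7 : ℝ) / 16) / 2 ≤ q := by
    have h1 : K ^ ((7 : ℝ) / 16) < q + 1 := Nat.lt_floor_add_one _
    have h2 : (1 : ℝ) ≤ q := by exact_mod_cast hq0
    linarith
  have hqK : (q : ℝ) ^ 2 ≤ K ^ ((7 : ℝ) / 8) := by
    calc (q : ℝ) ^ 2 ≤ (K ^ ((7 : ℝ) / 16)) ^ 2 := by gcongr
      _ = _ := by rw [← Real.rpow_mul_natCast hK0.le]; norm_num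
  set c := 1 / (838860800 * θ ^ 2) with hc
  have hθ2 : 1 / 4 ≤ θ ^ 2 := by nlinarith
  have hc8 : c ≤ 1 / 8 := by
    rw [hc]; exact one_div_le_one_div_of_le (by norm_num) (by linarith)
  have hr0 : (0 : ℝ) < r := by linarith
  have hcr : c ≤ 1 / (52428800 * (r : ℝ) ^ 2) := by
    rw [hc]
    refine one_div_le_one_div_of_le (by positivity) ?_
    have : (r : ℝ) ≤ 4 * θ := by linarith
    nlinarith
  have hmono : ∀ e, e ≤ -c → K ^ e ≤ K ^ (-c) := fun e he =>
    Real.rpow_le_rpow_of_exponent_le hK.le he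
  have key := norm_sum_le_of_shifts (f := fun n => expi (K ^ (θ + 1) / n)) (by simp) hab
    (I := range q ×ˢ range q) (by simp; omega) (fun p => p.1 * p.2) (H := K ^ ((7 : ℝ) / 8))
    (B := (32 + 2 * π) * K ^ (-c))
    (fun p hp => by
      simp only [mem_product, mem_range] at hp
      refine le_trans ?_ hqK
      rw [sq]
      exact_mod_cast Nat.mul_le_mul hp.1.le hp.2.le)
    (fun n hn => by
      simp only [mem_Ioc] at hn
      have hn1 : K ≤ n := ha.trans (by exact_mod_cast hn.1)
      have hn2 : (n : ℝ) ≤ 2 * K := le_trans (by exact_mod_cast hn.2) hb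
      have hn0 : (0 : ℝ) < n := by linarith
      refine (norm_local_sum_le (by positivity) (by omega) (8 * r)).trans ?_
      have hcard : (#(range q ×ˢ range q) : ℝ) = (q : ℝ) ^ 2 := by simp [sq]
      rw [hcard, add_mul, mul_add]
      refine add_le_add ((norm_bilinear_local_le hK hn1 hn2 hr1 hr2 hθ hq1 hq2 hq0).trans ?_) ?_
      · refine mul_le_mul_of_nonneg_left (mul_le_mul_of_nonneg_left ?_ (by norm_num))
          (by positivity)
        exact hmono _ (by linarith)
      · gcongr
        rw [div_le_iff₀ (by positivity)]
        calc K ^ (θ + 1) * ((q : ℝ) ^ 2) ^ (8 * r + 1)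
            ≤ K ^ (θ + 1) * (K ^ ((7 : ℝ) / 8)) ^ (8 * r + 1) := by gcongr
          _ = K ^ (θ - (8 * r + 1) / 8) * K ^ (8 * r + 2) := by
            rw [← Real.rpow_mul_natCast hK0.le, ← Real.rpow_add hK0,
              ← Real.rpow_natCast K (8 * r + 2), ← Real.rpow_add hK0]
            congr 1
            push_cast
            ring
          _ ≤ _ := by
            have := hmono (θ - (8 * r + 1) / 8) (by linarith)
            gcongr)
  have hba : (b : ℝ) - a ≤ 2 * K := by linarith
  have hKc : K ^ ((7 : ℝ) / 8) ≤ K * K ^ (-c) := by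
    nth_rewrite 2 [← Real.rpow_one K]
    rw [← Real.rpow_add hK0]
    exact Real.rpow_le_rpow_of_exponent_le hK.le (by linarith)
  have hB0 : 0 ≤ (32 + 2 * π) * K ^ (-c) := by positivity
  have hpi : π ≤ 4 := Real.pi_le_four
  refine key.trans ?_
  calc _ ≤ 2 * K * ((32 + 2 * π) * K ^ (-c)) + 2 * (K * K ^ (-c)) := by gcongr
    _ ≤ 2 * K * ((32 + 2 * 4) * K ^ (-c)) + 2 * (K * K ^ (-c)) := by gcongr
    _ = 82 * (K * K ^ (-c)) := by ring
    _ ≤ 100 * (K * K ^ (-c)) := by gcongr; norm_num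
    _ = _ := by ring

/-- Estimate for `∑ e(X / n)` over a dyadic range when `X / K = G ^ 3 ≤ √K`. -/
theorem norm_sum_expi_div_le_of_small {K G : ℝ} (hK : 4 < K) (hG : 1 ≤ G) (hGK : G ^ 6 ≤ K)
    {a b : ℕ} (hab : a ≤ b) (ha : K ≤ a + 1) (hb : (b : ℝ) ≤ 2 * K) :
    ‖∑ n ∈ Ioc a b, expi (K * G ^ 3 / n)‖ ≤ 30 * (K / G) := by
  have hK0 : 0 < K := by linarith
  have hG0 : 0 < G := by linarith
  set H := ⌊K / G ^ 2⌋₊ with hH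
  have hHK : 1 ≤ K / G ^ 2 := by
    rw [one_le_div (by positivity)]
    exact (pow_le_pow_right₀ hG (by norm_num)).trans hGK
  have hH0 : 1 ≤ H := Nat.one_le_floor_iff _ |>.2 hHK
  have hH0' : (1 : ℝ) ≤ H := by exact_mod_cast hH0
  have hH2 : (H : ℝ) ≤ K / G ^ 2 := Nat.floor_le (by positivity)
  have hH1 : K / G ^ 2 / 2 ≤ H := by
    have h1 : K / G ^ 2 < H + 1 := Nat.lt_floor_add_one _
    linarith
  have hsmall : G ^ 3 / K < 1 / 2 := by
    rw [div_lt_iff₀ hK0]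
    have h1 : 0 < G ^ 3 := by positivity
    have h2 : (G ^ 3) ^ 2 ≤ K := by rw [← pow_mul]; exact hGK
    nlinarith
  have hpi : π ≤ 4 := Real.pi_le_four
  have key := norm_sum_le_of_shifts (f := fun n => expi (K * G ^ 3 / n)) (by simp) hab
    (I := range H) (by simp; omega) (fun h => h) (H := K / G ^ 2) (B := 12 / G)
    (fun h hh => by
      refine le_trans ?_ hH2
      exact_mod_cast (mem_range.1 hh).le)
    (fun n hn => by
      simp only [mem_Ioc] at hn
      have hn1 : K ≤ n := ha.trans (by exact_mod_cast hn.1)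
      have hn2 : (n : ℝ) ≤ 2 * K := le_trans (by exact_mod_cast hn.2) hb
      have hn0 : (0 : ℝ) < n := by linarith
      set β : ℝ := -(K * G ^ 3 / (n : ℝ) ^ 2) with hβ
      have hβ1 : G ^ 3 / (4 * K) ≤ -β := by
        rw [hβ, neg_neg, div_le_div_iff₀ (by positivity) (by positivity)]
        calc G ^ 3 * (n : ℝ) ^ 2 ≤ G ^ 3 * (2 * K) ^ 2 := by gcongr
          _ = _ := by ring
      have hβ2 : -β < 1 / 2 := by
        refine lt_of_le_of_lt ?_ hsmall
        rw [hβ, neg_neg, div_le_div_iff₀ (by positivity) (by positivity)]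
        calc K * G ^ 3 * K = G ^ 3 * K ^ 2 := by ring
          _ ≤ _ := by gcongr
      have hβ0 : 0 < G ^ 3 / (4 * K) := by positivity
      have hround : round β = 0 := by
        rw [round_eq_zero_iff]
        constructor <;> linarith
      have hgeom := norm_geom_sum_le (β := β) hβ0 (by
        rw [hround, Int.cast_zero, sub_zero, abs_of_neg (by linarith)]
        exact hβ1) H
      have e1 : ‖∑ l ∈ range H, expi (β * l)‖ =
          ‖∑ l ∈ range H, expi (K * G ^ 3 / n + β * l)‖ := by
        simp only [expi_add]
        rw [← mul_sum, norm_mul, norm_expi, one_mul]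
      rw [e1] at hgeom
      have e2 : ‖∑ l ∈ range H, expi (K * G ^ 3 / ((n + l : ℕ) : ℝ)) -
          ∑ l ∈ range H, expi (K * G ^ 3 / n + β * l)‖ ≤ H * (8 / G) := by
        have hc : (H : ℝ) * (8 / G) = ∑ l ∈ range H, 8 / G := by simp
        rw [hc, ← sum_sub_distrib]
        refine norm_sum_le_of_le _ (fun l hl => ?_)
        have hl' : (l : ℝ) ≤ K / G ^ 2 :=
          le_trans (by exact_mod_cast (mem_range.1 hl).le) hH2
        have ht := div_add_eq_taylor (K * G ^ 3) hn0.ne' (z := l) (by positivity) 1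
        have e3 : K * G ^ 3 / ((n + l : ℕ) : ℝ) = K * G ^ 3 / n + β * l +
            K * G ^ 3 * (l : ℝ) ^ 2 / ((n : ℝ) ^ 2 * (n + l)) := by
          push_cast
          rw [ht]
          simp only [univ_unique, Fin.default_eq_zero, sum_singleton, Fin.val_zero]
          rw [hβ]
          ring
        rw [e3]
        refine (norm_expi_add_sub_le _ _).trans ?_
        rw [abs_of_nonneg (by positivity)]
        have h4 : K * G ^ 3 * (l : ℝ) ^ 2 / ((n : ℝ) ^ 2 * (n + l)) ≤
            K * G ^ 3 * (K / G ^ 2) ^ 2 / (K ^ 2 * K) := by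
          gcongr
          linarith
        have h5 : K * G ^ 3 * (K / G ^ 2) ^ 2 / (K ^ 2 * K) = 1 / G := by field_simp
        rw [h5] at h4
        calc _ ≤ 2 * 4 * (1 / G) := by gcongr
          _ = 8 / G := by ring
      have e4 : ‖∑ l ∈ range H, expi (K * G ^ 3 / ((n + l : ℕ) : ℝ))‖ ≤
          1 / (2 * (G ^ 3 / (4 * K))) + H * (8 / G) := by
        rw [add_comm]
        exact (norm_le_norm_sub_add _ _).trans (add_le_add e2 hgeom)
      refine e4.trans ?_
      rw [card_range]
      have e5 : 1 / (2 * (G ^ 3 / (4 * K))) = K / G ^ 2 / 2 * (4 / G) := by field_simp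
      rw [e5]
      calc _ ≤ (H : ℝ) * (4 / G) + H * (8 / G) := by gcongr
        _ = _ := by ring)
  have hba : (b : ℝ) - a ≤ 2 * K := by linarith
  refine key.trans ?_
  have h6 : K / G ^ 2 ≤ K / G := by
    gcongr
    exact le_self_pow₀ hG (by norm_num)
  have h7 : 0 ≤ K / G := by positivity
  calc _ ≤ 2 * K * (12 / G) + 2 * (K / G) := by gcongr
    _ = 26 * (K / G) := by ring
    _ ≤ _ := by linarith

/-- Uniform estimate for `∑ e(X / n)` over a dyadic range. -/
theorem norm_sum_expi_div_le {K X : ℝ} (hK : 4 < K) (hX : K ≤ X) {a b : ℕ} (hab : a ≤ b)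
    (ha : K ≤ a + 1) (hb : (b : ℝ) ≤ 2 * K) :
    ‖∑ n ∈ Ioc a b, expi (X / n)‖ ≤
      100 * K * (exp (-(log K ^ 3 / (838860800 * log (X / K) ^ 2))) +
        exp (-(log (X / K) / 3))) := by
  have hK0 : 0 < K := by linarith
  have hX0 : 0 < X := by linarith
  have hlK : 0 < log K := Real.log_pos (by linarith)
  have hF : 1 ≤ X / K := by rwa [one_le_div hK0]
  have hlF : 0 ≤ log (X / K) := Real.log_nonneg hF
  rcases le_total (log K / 2) (log (X / K)) with h | h
  · set θ := log (X / K) / log K with hθ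
    have hθ2 : 1 / 2 ≤ θ := by rw [hθ, le_div_iff₀ hlK]; linarith
    have hXe : X = K ^ (θ + 1) := by
      rw [Real.rpow_add hK0, Real.rpow_one, Real.rpow_def_of_pos hK0, hθ,
        mul_div_cancel₀ _ hlK.ne', Real.exp_log (by positivity)]
      field_simp
    have key := norm_sum_expi_div_le_rpow (by linarith) hθ2 hab ha hb
    rw [← hXe] at key
    refine key.trans ?_
    have : K ^ (-(1 / (838860800 * θ ^ 2))) =
        exp (-(log K ^ 3 / (838860800 * log (X / K) ^ 2))) := by
      rw [Real.rpow_def_of_pos hK0, hθ]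
      have h0 : 0 < log (X / K) := by linarith
      congr 1
      field_simp
    rw [this]
    have := Real.exp_pos (-(log (X / K) / 3))
    gcongr
    linarith
  · set G := exp (log (X / K) / 3) with hG
    have hG3 : G ^ 3 = X / K := by
      rw [hG, ← Real.exp_nat_mul]
      push_cast
      rw [mul_div_cancel₀ _ (by norm_num : (3 : ℝ) ≠ 0), Real.exp_log (by positivity)]
    have hG1 : 1 ≤ G := Real.one_le_exp (by positivity)
    have hG6 : G ^ 6 ≤ K := by
      rw [hG, ← Real.exp_nat_mul, ← Real.le_log_iff_exp_le hK0]
      push_cast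
      linarith
    have key := norm_sum_expi_div_le_of_small hK hG1 hG6 hab ha hb
    rw [hG3, mul_div_cancel₀ _ hK0.ne'] at key
    refine key.trans ?_
    have h1 : K / G = K * exp (-(log (X / K) / 3)) := by
      rw [Real.exp_neg, ← hG]; rfl
    rw [h1]
    have h2 := Real.exp_pos (-(log (X / K) / 3))
    have h3 := Real.exp_pos (-(log K ^ 3 / (838860800 * log (X / K) ^ 2)))
    nlinarith [mul_pos hK0 h2, mul_pos hK0 h3]

/-- The saving in `∑ e(X / n)` beats any power of `L` in the range needed for the totient sum. -/
theorem eventually_norm_sum_expi_div_le (A : ℕ) : ∀ᶠ L : ℝ in atTop, ∀ (K X : ℝ) (a b : ℕ),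
    a ≤ b → K ≤ a + 1 → (b : ℝ) ≤ 2 * K → L ^ ((2 : ℝ) / 3) * log L ^ ((4 : ℝ) / 3) / 2 ≤ log K →
    0 < K → K * exp (L ^ ((2 : ℝ) / 3) / 2) ≤ X → X ≤ exp (2 * L) →
    ‖∑ n ∈ Ioc a b, expi (X / n)‖ ≤ K / L ^ A := by
  have hlog : Tendsto (fun L : ℝ => log L) atTop atTop := Real.tendsto_log_atTop
  have hW : Tendsto (fun L : ℝ => L ^ ((2 : ℝ) / 3)) atTop atTop :=
    tendsto_rpow_atTop (by norm_num)
  have e1 : ∀ᶠ L : ℝ in atTop, A * log L + log 200 ≤ log L ^ 4 / (838860800 * 32) := by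
    have : ∀ᶠ t : ℝ in atTop, A * t + log 200 ≤ t ^ 4 / (838860800 * 32) := by
      filter_upwards [eventually_ge_atTop ((A + log 200) * (838860800 * 32) + 1)] with t ht
      have hA : (0 : ℝ) ≤ A := by positivity
      have h200 : 0 ≤ log 200 := Real.log_nonneg (by norm_num)
      have ht1 : 1 ≤ t := by nlinarith
      rw [le_div_iff₀ (by norm_num)]
      calc (A * t + log 200) * (838860800 * 32) ≤ (A * t + log 200 * t) * (838860800 * 32) := by
            gcongr; nlinarith
        _ = (A + log 200) * (838860800 * 32) * t := by ring
        _ ≤ t * t := by gcongr; linarith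
        _ = t ^ 2 := by ring
        _ ≤ t ^ 4 := pow_le_pow_right₀ ht1 (by norm_num)
    exact hlog.eventually this
  have e2 : ∀ᶠ L : ℝ in atTop, A * log L + log 200 ≤ L ^ ((2 : ℝ) / 3) / 6 := by
    have h1 : (fun L : ℝ => A * log L + log 200) =o[atTop] fun L : ℝ => L ^ ((2 : ℝ) / 3) := by
      refine ((isLittleO_log_rpow_atTop (by norm_num)).const_mul_left _).add ?_
      exact Asymptotics.isLittleO_const_left.2 (Or.inr (tendsto_norm_atTop_atTop.comp hW))
    have h2 := h1.bound (c := 1 / 6) (by norm_num)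
    filter_upwards [h2, eventually_gt_atTop 0] with L hL hL0
    rw [Real.norm_of_nonneg (by positivity : 0 ≤ L ^ ((2 : ℝ) / 3))] at hL
    calc _ ≤ _ := le_norm_self _
      _ ≤ _ := hL
      _ = _ := by ring
  have e3 : ∀ᶠ L : ℝ in atTop, 2 * log 5 ≤ L ^ ((2 : ℝ) / 3) * log L ^ ((4 : ℝ) / 3) :=
    (hW.atTop_mul_atTop₀ ((tendsto_rpow_atTop (by norm_num)).comp hlog)).eventually_ge_atTop _
  filter_upwards [e1, e2, e3, eventually_gt_atTop 1]
    with L h1 h2 h3 hL K X a b hab ha hb hK hK0 hX1 hX2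
  have hL0 : 0 < L := by linarith
  have hlL : 0 < log L := Real.log_pos hL
  have hK4 : 4 < K := by
    have : log 5 ≤ log K := by linarith
    have := (Real.log_le_log_iff (by norm_num) hK0).1 this
    linarith
  have hlK : 0 < log K := Real.log_pos (by linarith)
  have hexp1 : 1 ≤ exp (L ^ ((2 : ℝ) / 3) / 2) := Real.one_le_exp (by positivity)
  have hXK : K ≤ X := le_trans (by nlinarith) hX1
  have hX0 : 0 < X := by linarith
  refine (norm_sum_expi_div_le hK4 hXK hab ha hb).trans ?_
  have hF1 : L ^ ((2 : ℝ) / 3) / 2 ≤ log (X / K) := by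
    rw [Real.le_log_iff_exp_le (by positivity), le_div_iff₀ hK0]
    linarith
  have hF2 : log (X / K) ≤ 2 * L := by
    rw [Real.log_div hX0.ne' hK0.ne']
    have := (Real.log_le_iff_le_exp hX0).2 hX2
    linarith
  have hF0 : 0 < log (X / K) := lt_of_lt_of_le (by positivity) hF1
  have hpow : 1 / (200 * L ^ A) = exp (-(A * log L + log 200)) := by
    rw [Real.exp_neg, Real.exp_add, Real.exp_log (by norm_num), mul_comm (A : ℝ),
      ← Real.rpow_def_of_pos hL0, Real.rpow_natCast, one_div, mul_comm]
  have b1 : exp (-(log K ^ 3 / (838860800 * log (X / K) ^ 2))) ≤ 1 / (200 * L ^ A) := by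
    rw [hpow]
    refine Real.exp_le_exp.2 (neg_le_neg (h1.trans ?_))
    have hcube : L ^ 2 * log L ^ 4 / 8 ≤ log K ^ 3 := by
      have : (L ^ ((2 : ℝ) / 3) * log L ^ ((4 : ℝ) / 3) / 2) ^ 3 = L ^ 2 * log L ^ 4 / 8 := by
        rw [div_pow, mul_pow, ← Real.rpow_mul_natCast hL0.le, ← Real.rpow_mul_natCast hlL.le]
        norm_num
      rw [← this]
      gcongr
    rw [div_le_div_iff₀ (by norm_num) (by positivity)]
    calc log L ^ 4 * (838860800 * log (X / K) ^ 2) ≤ log L ^ 4 * (838860800 * (2 * L) ^ 2) := by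
          gcongr
      _ = L ^ 2 * log L ^ 4 / 8 * (838860800 * 32) := by ring
      _ ≤ _ := by gcongr
  have b2 : exp (-(log (X / K) / 3)) ≤ 1 / (200 * L ^ A) := by
    rw [hpow]
    exact Real.exp_le_exp.2 (by linarith)
  calc _ ≤ 100 * K * (1 / (200 * L ^ A) + 1 / (200 * L ^ A)) := by gcongr
    _ = _ := by field_simp; norm_num

end VinogradovMean

/-! ### Correlations and bilinear blocks -/

namespace VinogradovMean

/-- All sums `∑ e(X / n)` over dyadic ranges beyond `U` save a factor `η`, provided the
derivative ratio is at least `τ` and `X ≤ Z`. -/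
def SmallSums (U : ℕ) (τ Z η : ℝ) : Prop :=
  ∀ (X : ℝ) (a b : ℕ), U ≤ a → b ≤ 2 * (a + 1) → b * τ ≤ X → X ≤ Z →
    ‖∑ n ∈ Ioc a b, expi (X / n)‖ ≤ b * η

theorem norm_sum_expi_neg {ι : Type*} (s : Finset ι) (f : ι → ℝ) :
    ‖∑ i ∈ s, expi (-f i)‖ = ‖∑ i ∈ s, expi (f i)‖ := by
  simp only [expi_neg]
  rw [← map_sum, Complex.norm_conj]

/-- The correlation of two rows of the bilinear form. -/
theorem norm_correlation_le {U M D D' : ℕ} {τ Z η y : ℝ} (h : SmallSums U τ Z η)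
    (hη : 0 ≤ η) (hM : 0 < M) (hD : D' ≤ 2 * (D + 1)) (hy : 2 * (D' * τ) ≤ y * η) (hy0 : 0 ≤ y)
    (hyZ : y ≤ Z) {m₁ m₂ : ℕ} (h₁ : m₁ ∈ Ioc M (2 * M)) (h₂ : m₂ ∈ Ioc M (2 * M))
    (h₁₂ : η * M ≤ |(m₁ : ℝ) - m₂|) :
    ‖∑ k ∈ Ioc (max U (max (D / m₁) (D / m₂))) (min (D' / m₁) (D' / m₂)),
      expi (y / (m₁ * k) - y / (m₂ * k))‖ ≤ (D' : ℝ) / M * η := by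
  wlog hle : m₁ ≤ m₂ generalizing m₁ m₂
  · have := this h₂ h₁ (by rwa [abs_sub_comm]) (by omega)
    rw [← norm_sum_expi_neg, max_comm (D / m₁), min_comm]
    simpa only [neg_sub] using this
  simp only [mem_Ioc] at h₁ h₂
  have hM' : (0 : ℝ) < M := by exact_mod_cast hM
  have hm₁ : (M : ℝ) < m₁ := by exact_mod_cast h₁.1
  have hm₂ : (M : ℝ) < m₂ := by exact_mod_cast h₂.1
  have hm₂' : (m₂ : ℝ) ≤ 2 * M := by exact_mod_cast h₂.2
  have hm₁0 : (0 : ℝ) < m₁ := by linarith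
  have hm₂0 : (0 : ℝ) < m₂ := by linarith
  have hle' : (m₁ : ℝ) ≤ m₂ := by exact_mod_cast hle
  rw [abs_sub_comm, abs_of_nonneg (by linarith)] at h₁₂
  set X : ℝ := y * (m₂ - m₁) / (m₁ * m₂) with hX
  have e1 : ∀ k ∈ Ioc (max U (max (D / m₁) (D / m₂))) (min (D' / m₁) (D' / m₂)),
      expi (y / (m₁ * k) - y / (m₂ * k)) = expi (X / k) := by
    intro k hk
    rw [mem_Ioc] at hk
    have hk0 : (0 : ℝ) < k := by exact_mod_cast (by omega : 0 < k)
    congr 1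
    rw [hX]
    field_simp
  rw [sum_congr rfl e1]
  have hb1 : ((min (D' / m₁) (D' / m₂) : ℕ) : ℝ) ≤ D' / m₁ :=
    le_trans (by exact_mod_cast min_le_left _ _) Nat.cast_div_le
  have hbd : min (D' / m₁) (D' / m₂) ≤ 2 * (max U (max (D / m₁) (D / m₂)) + 1) := by
    refine (min_le_left _ _).trans ?_
    have : D' / m₁ ≤ 2 * (D / m₁ + 1) := by
      have h1 := Nat.lt_div_mul_add (a := D) (b := m₁) (by omega)
      refine Nat.div_le_of_le_mul ?_
      nlinarith
    omega
  have hτX : ((min (D' / m₁) (D' / m₂) : ℕ) : ℝ) * τ ≤ X := by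
    rcases le_total τ 0 with hτ | hτ
    · refine (mul_nonpos_of_nonneg_of_nonpos (by positivity) hτ).trans ?_
      have : 0 ≤ (m₂ : ℝ) - m₁ := by linarith
      positivity
    calc _ ≤ (D' : ℝ) / m₁ * τ := by gcongr
      _ = 2 * (D' * τ) / (2 * m₁) := by field_simp
      _ ≤ y * η / (2 * m₁) := by gcongr
      _ = y * (η * M) / (m₁ * (2 * M)) := by field_simp
      _ ≤ X := by rw [hX]; gcongr
  have hXZ : X ≤ Z := by
    refine le_trans ?_ hyZ
    rw [hX, div_le_iff₀ (by positivity)]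
    have h1 : (m₂ : ℝ) - m₁ ≤ m₁ * m₂ := by
      have : (1 : ℝ) ≤ m₁ := by exact_mod_cast (by omega : 1 ≤ m₁)
      nlinarith
    gcongr
  refine (h X _ _ (le_max_left _ _) hbd hτX hXZ).trans ?_
  gcongr
  exact hb1.trans (by gcongr)

theorem card_filter_abs_sub_le (s : Finset ℕ) (m : ℕ) {δ : ℝ} (hδ : 0 ≤ δ) :
    (#{n ∈ s | |(m : ℝ) - (n : ℕ)| ≤ δ} : ℝ) ≤ 2 * δ + 1 := by
  have hsub : {n ∈ s | |(m : ℝ) - (n : ℕ)| ≤ δ} ⊆ Icc (m - ⌊δ⌋₊) (m + ⌊δ⌋₊) := by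
    intro n hn
    rw [mem_filter, abs_le] at hn
    rw [mem_Icc]
    constructor
    · rw [Nat.sub_le_iff_le_add]
      rcases le_total m n with hmn | hmn
      · omega
      · have : m - n ≤ ⌊δ⌋₊ := Nat.le_floor (by rw [Nat.cast_sub hmn]; linarith)
        omega
    · rcases le_total n m with hmn | hmn
      · omega
      · have : n - m ≤ ⌊δ⌋₊ := Nat.le_floor (by rw [Nat.cast_sub hmn]; linarith)
        omega
  have h1 : #{n ∈ s | |(m : ℝ) - (n : ℕ)| ≤ δ} ≤ 2 * ⌊δ⌋₊ + 1 := by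
    refine (card_le_card hsub).trans ?_
    rw [Nat.card_Icc]
    omega
  calc _ ≤ ((2 * ⌊δ⌋₊ + 1 : ℕ) : ℝ) := by exact_mod_cast h1
    _ = 2 * (⌊δ⌋₊ : ℝ) + 1 := by push_cast; ring
    _ ≤ _ := by gcongr; exact Nat.floor_le hδ

/-- A dyadic block of the bilinear form. -/
theorem norm_bilinear_block_le {U M D D' : ℕ} {τ Z η y : ℝ} (h : SmallSums U τ Z η)
    (hη : 0 ≤ η) (hM : 0 < M) (hMη : 1 ≤ η * M) (hD : D' ≤ 2 * (D + 1))
    (hy : 2 * (D' * τ) ≤ y * η) (hy0 : 0 ≤ y) (hyZ : y ≤ Z) {α β : ℕ → ℂ} (hα : ∀ m, ‖α m‖ ≤ 1)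
    (hβ : ∀ m, ‖β m‖ ≤ 1) (hβU : ∀ k ≤ U, β k = 0) :
    ‖∑ m ∈ Ioc M (2 * M), α m * ∑ k ∈ Ioc (D / m) (D' / m), β k * expi (y / (m * k))‖ ≤
      2 * D' * √η := by
  have hM' : (0 : ℝ) < M := by exact_mod_cast hM
  set g : ℕ → ℕ → ℂ := fun m k =>
    if k ∈ Ioc (D / m) (D' / m) then α m * expi (y / (m * k)) else 0 with hg
  set 𝓚 := Ioc U (D' / M) with h𝓚
  have e1 : ∑ m ∈ Ioc M (2 * M), α m * ∑ k ∈ Ioc (D / m) (D' / m), β k * expi (y / (m * k)) =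
      ∑ k ∈ 𝓚, β k * ∑ m ∈ Ioc M (2 * M), g m k := by
    simp only [mul_sum]
    rw [sum_comm]
    refine sum_congr rfl (fun m hm => ?_)
    rw [mem_Ioc] at hm
    rw [← sum_filter_add_sum_filter_not 𝓚 (fun k => k ∈ Ioc (D / m) (D' / m))]
    rw [sum_eq_zero (s := filter (fun k => ¬ k ∈ Ioc (D / m) (D' / m)) 𝓚) (fun k hk => by
      rw [mem_filter] at hk; simp only [hg]; rw [if_neg hk.2, mul_zero]), add_zero]
    symm
    refine sum_subset_zero_on_sdiff (fun k hk => (mem_filter.1 hk).2) (fun k hk => ?_)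
      (fun k hk => ?_)
    · rw [Finset.mem_sdiff, mem_filter, h𝓚, mem_Ioc (a := U)] at hk
      have hk2 : k ≤ D' / M := (mem_Ioc.1 hk.1).2.trans (Nat.div_le_div_left hm.1.le hM)
      rw [hβU k (by by_contra hU; exact hk.2 ⟨⟨by omega, hk2⟩, hk.1⟩)]
      ring
    · simp only [hg]
      rw [if_pos (mem_filter.1 hk).2]
      ring
  have hcard𝓚 : (#𝓚 : ℝ) ≤ D' / M := by
    refine le_trans ?_ (Nat.cast_div_le (m := D') (n := M))
    rw [h𝓚, Nat.card_Ioc]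
    exact_mod_cast Nat.sub_le _ _
  have hcorr : ∀ m₁ ∈ Ioc M (2 * M), ∀ m₂ ∈ Ioc M (2 * M),
      ‖∑ k ∈ 𝓚, g m₁ k * (starRingEnd ℂ) (g m₂ k)‖ ≤
        (D' : ℝ) / M * ((if |(m₁ : ℝ) - m₂| ≤ η * M then 1 else 0) + η) := by
    intro m₁ h₁ m₂ h₂
    split_ifs with hclose
    · calc _ ≤ ∑ k ∈ 𝓚, (1 : ℝ) := by
            refine norm_sum_le_of_le _ (fun k _ => ?_)
            have hg1 : ∀ m k, ‖g m k‖ ≤ 1 := fun m k => by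
              simp only [hg]
              split_ifs
              · rw [norm_mul, norm_expi, mul_one]; exact hα m
              · simp
            rw [norm_mul, Complex.norm_conj]
            exact mul_le_one₀ (hg1 _ _) (norm_nonneg _) (hg1 _ _)
        _ = #𝓚 := by simp
        _ ≤ D' / M * 1 := by rw [mul_one]; exact hcard𝓚
        _ ≤ _ := by gcongr; linarith
    · rw [zero_add]
      have e2 : ∑ k ∈ 𝓚, g m₁ k * (starRingEnd ℂ) (g m₂ k) =
          α m₁ * (starRingEnd ℂ) (α m₂) *
          ∑ k ∈ Ioc (max U (max (D / m₁) (D / m₂))) (min (D' / m₁) (D' / m₂)),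
            expi (y / (m₁ * k) - y / (m₂ * k)) := by
        rw [mul_sum]
        symm
        refine sum_subset_zero_on_sdiff (fun k hk => ?_) (fun k hk => ?_) (fun k hk => ?_)
        · rw [mem_Ioc] at hk ⊢
          have := Nat.div_le_div_left (mem_Ioc.1 h₁).1.le hM (a := D')
          omega
        · rw [Finset.mem_sdiff, h𝓚, mem_Ioc, mem_Ioc] at hk
          simp only [hg, mem_Ioc]
          split_ifs with q1 q2
          · exact absurd (by omega) hk.2
          · simp
          · simp
          · simp
        · rw [mem_Ioc] at hk
          simp only [hg, mem_Ioc]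
          rw [if_pos (by omega), if_pos (by omega), sub_eq_add_neg, expi_add, expi_neg, map_mul]
          ring
      rw [e2, norm_mul, norm_mul, Complex.norm_conj]
      refine le_trans (mul_le_of_le_one_left (norm_nonneg _)
        (mul_le_one₀ (hα _) (norm_nonneg _) (hα _))) ?_
      exact norm_correlation_le h hη hM hD hy hy0 hyZ h₁ h₂ (not_le.1 hclose).le
  have hsq : ∑ k ∈ 𝓚, ‖∑ m ∈ Ioc M (2 * M), g m k‖ ^ 2 ≤ (D' : ℝ) / M * (M * (4 * (η * M))) := by
    have e3 : ((∑ k ∈ 𝓚, ‖∑ m ∈ Ioc M (2 * M), g m k‖ ^ 2 : ℝ) : ℂ) =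
        ∑ m₁ ∈ Ioc M (2 * M), ∑ m₂ ∈ Ioc M (2 * M),
          ∑ k ∈ 𝓚, g m₁ k * (starRingEnd ℂ) (g m₂ k) := by
      push_cast
      simp only [← Complex.mul_conj', map_sum, sum_mul_sum]
      rw [sum_comm]
      refine sum_congr rfl (fun m₁ _ => ?_)
      rw [sum_comm]
    have hnn : 0 ≤ ∑ k ∈ 𝓚, ‖∑ m ∈ Ioc M (2 * M), g m k‖ ^ 2 := by positivity
    rw [← Complex.norm_of_nonneg hnn, e3]
    have hcM : #(Ioc M (2 * M)) = M := by rw [Nat.card_Ioc]; omega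
    calc _ ≤ ∑ m₁ ∈ Ioc M (2 * M), (D' : ℝ) / M * (4 * (η * M)) := by
          refine norm_sum_le_of_le _ (fun m₁ h₁ => ?_)
          refine (norm_sum_le_of_le _ (fun m₂ h₂ => hcorr m₁ h₁ m₂ h₂)).trans ?_
          rw [← mul_sum, sum_add_distrib, sum_boole, sum_const, hcM, nsmul_eq_mul]
          have := card_filter_abs_sub_le (Ioc M (2 * M)) m₁ (δ := η * M) (by positivity)
          gcongr
          linarith
      _ = _ := by
          rw [sum_const, hcM, nsmul_eq_mul]
          ring
  have hfin : ‖∑ k ∈ 𝓚, β k * ∑ m ∈ Ioc M (2 * M), g m k‖ ^ 2 ≤ (2 * D' * √η) ^ 2 := by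
    calc _ ≤ (∑ k ∈ 𝓚, ‖∑ m ∈ Ioc M (2 * M), g m k‖) ^ 2 := by
          gcongr
          refine norm_sum_le_of_le _ (fun k _ => ?_)
          rw [norm_mul]
          exact mul_le_of_le_one_left (norm_nonneg _) (hβ k)
      _ ≤ #𝓚 * ∑ k ∈ 𝓚, ‖∑ m ∈ Ioc M (2 * M), g m k‖ ^ 2 := sq_sum_le_card_mul_sum_sq
      _ ≤ (D' : ℝ) / M * ((D' : ℝ) / M * (M * (4 * (η * M)))) := by gcongr
      _ = (2 * D') ^ 2 * η := by field_simp; ring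
      _ = _ := by rw [mul_pow _ (√η), Real.sq_sqrt hη]
  rw [e1]
  exact (sq_le_sq₀ (norm_nonneg _) (by positivity)).1 hfin

end VinogradovMean

/-! ### Vaughan's identity and sums over the Möbius function -/

namespace VinogradovMean

theorem sum_Ioc_mul_apply (f g : ArithmeticFunction ℂ) (F : ℕ → ℂ) (D D' : ℕ) :
    ∑ n ∈ Ioc D D', (f * g) n * F n =
      ∑ a ∈ Ioc 0 D', f a * ∑ b ∈ Ioc (D / a) (D' / a), g b * F (a * b) := by
  simp only [ArithmeticFunction.mul_apply, sum_mul, mul_sum]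
  rw [sum_sigma', sum_sigma']
  refine sum_bij' (fun p _ => ⟨p.2.1, p.2.2⟩) (fun p _ => ⟨p.1 * p.2, (p.1, p.2)⟩) ?_ ?_ ?_ ?_ ?_
  · rintro ⟨n, a, b⟩ hp
    simp only [mem_sigma, mem_Ioc, Nat.mem_divisorsAntidiagonal] at hp ⊢
    obtain ⟨⟨h1, h2⟩, rfl, h3⟩ := hp
    have ha : 0 < a := Nat.pos_of_ne_zero (left_ne_zero_of_mul h3)
    have hb : 0 < b := Nat.pos_of_ne_zero (right_ne_zero_of_mul h3)
    refine ⟨⟨ha, le_trans (Nat.le_mul_of_pos_right a hb) h2⟩, ?_, ?_⟩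
    · rw [Nat.div_lt_iff_lt_mul ha]; linarith
    · rw [Nat.le_div_iff_mul_le ha]; linarith
  · rintro ⟨a, b⟩ hp
    simp only [mem_sigma, mem_Ioc, Nat.mem_divisorsAntidiagonal] at hp ⊢
    obtain ⟨⟨ha, h1⟩, h2, h3⟩ := hp
    rw [Nat.div_lt_iff_lt_mul ha] at h2
    rw [Nat.le_div_iff_mul_le ha] at h3
    exact ⟨⟨by linarith, by linarith⟩, trivial, by intro h0; nlinarith⟩
  · rintro ⟨n, a, b⟩ hp
    simp only [mem_sigma, Nat.mem_divisorsAntidiagonal] at hp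
    obtain ⟨-, rfl, -⟩ := hp
    rfl
  · rintro ⟨a, b⟩ _
    rfl
  · rintro ⟨n, a, b⟩ hp
    simp only [mem_sigma, Nat.mem_divisorsAntidiagonal] at hp
    obtain ⟨-, rfl, -⟩ := hp
    ring

theorem sum_Ioc_inv_le (N : ℕ) : ∑ n ∈ Ioc 0 N, ((n : ℝ))⁻¹ ≤ 1 + log N := by
  have h := harmonic_le_one_add_log N
  have e : ((harmonic N : ℚ) : ℝ) = ∑ n ∈ Ioc 0 N, ((n : ℝ))⁻¹ := by
    rw [harmonic_eq_sum_Icc]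
    push_cast
    rfl
  rwa [e] at h

/-- The full bilinear form with coefficients supported beyond `U`. -/
theorem norm_bilinear_sum_le {U D D' J : ℕ} {τ Z η y : ℝ} (h : SmallSums U τ Z η)
    (hη : 0 ≤ η) (hU : 0 < U) (hUη : 1 ≤ η * U) (hD : D' ≤ 2 * (D + 1))
    (hy : 2 * (D' * τ) ≤ y * η) (hy0 : 0 ≤ y) (hyZ : y ≤ Z) (hJ : D' ≤ 2 ^ J) {α β : ℕ → ℂ}
    (hα : ∀ m, ‖α m‖ ≤ 1) (hβ : ∀ m, ‖β m‖ ≤ 1) (hαU : ∀ k ≤ U, α k = 0)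
    (hβU : ∀ k ≤ U, β k = 0) :
    ‖∑ m ∈ Ioc 0 D', α m * ∑ k ∈ Ioc (D / m) (D' / m), β k * expi (y / (m * k))‖ ≤
      J * (2 * D' * √η) := by
  set S : ℕ → ℂ := fun m => α m * ∑ k ∈ Ioc (D / m) (D' / m), β k * expi (y / (m * k)) with hS
  have hblocks : ∀ i : ℕ, ‖∑ m ∈ Ioc U (2 ^ i * U), S m‖ ≤ i * (2 * D' * √η) := by
    intro i
    induction i with
    | zero => simp
    | succ i ih =>
      have hpos : 1 ≤ 2 ^ i := Nat.one_le_two_pow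
      have hle : U ≤ 2 ^ i * U := Nat.le_mul_of_pos_left U hpos
      have e : 2 ^ (i + 1) * U = 2 * (2 ^ i * U) := by ring
      rw [e, ← sum_Ioc_consecutive _ hle (by omega : 2 ^ i * U ≤ 2 * (2 ^ i * U))]
      have hb := norm_bilinear_block_le (M := 2 ^ i * U) h hη (by positivity) (by
        refine hUη.trans ?_
        gcongr) hD hy hy0 hyZ hα hβ hβU
      refine (norm_add_le _ _).trans ?_
      push_cast
      linarith
  have e1 : ∑ m ∈ Ioc 0 D', S m = ∑ m ∈ Ioc U (2 ^ J * U), S m := by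
    have hDJ : D' ≤ 2 ^ J * U := hJ.trans (Nat.le_mul_of_pos_right _ hU)
    have hUJ : U ≤ 2 ^ J * U := Nat.le_mul_of_pos_left U Nat.one_le_two_pow
    have e2 : ∑ m ∈ Ioc 0 D', S m = ∑ m ∈ Ioc 0 (2 ^ J * U), S m := by
      refine sum_subset (Ioc_subset_Ioc_right hDJ) (fun m hm hm' => ?_)
      rw [mem_Ioc] at hm hm'
      have : D' / m = 0 := Nat.div_eq_of_lt (by omega)
      simp [hS, this]
    rw [e2, ← sum_Ioc_consecutive S (Nat.zero_le U) hUJ, sum_eq_zero, zero_add]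
    intro m hm
    simp only [hS]
    rw [hαU m (mem_Ioc.1 hm).2, zero_mul]
  rw [e1]
  exact hblocks J

/-- The Möbius function restricted to `n ≤ U`. -/
noncomputable def moebiusLow (U : ℕ) : ArithmeticFunction ℂ :=
  ⟨fun n => if n ≤ U then ((ArithmeticFunction.moebius n : ℤ) : ℂ) else 0, by simp⟩

/-- The Möbius function restricted to `n > U`. -/
noncomputable def moebiusHigh (U : ℕ) : ArithmeticFunction ℂ :=
  ⟨fun n => if n ≤ U then 0 else ((ArithmeticFunction.moebius n : ℤ) : ℂ), by simp⟩

theorem norm_moebius_le_one (n : ℕ) : ‖((ArithmeticFunction.moebius n : ℤ) : ℂ)‖ ≤ 1 := by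
  rw [Complex.norm_intCast]
  exact_mod_cast ArithmeticFunction.abs_moebius_le_one

theorem norm_moebiusLow_le (U n : ℕ) : ‖moebiusLow U n‖ ≤ 1 := by
  simp only [moebiusLow, ArithmeticFunction.coe_mk]
  split_ifs
  · exact norm_moebius_le_one n
  · simp

theorem norm_moebiusHigh_le (U n : ℕ) : ‖moebiusHigh U n‖ ≤ 1 := by
  simp only [moebiusHigh, ArithmeticFunction.coe_mk]
  split_ifs
  · simp
  · exact norm_moebius_le_one n

/-- Vaughan's identity for the Möbius function. -/
theorem moebius_eq_vaughan {U n : ℕ} (hn : U < n) :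
    ((ArithmeticFunction.moebius n : ℤ) : ℂ) =
      ((ArithmeticFunction.zeta : ArithmeticFunction ℂ) * (moebiusHigh U * moebiusHigh U)) n -
      (moebiusLow U * (moebiusLow U * (ArithmeticFunction.zeta : ArithmeticFunction ℂ))) n := by
  set z := (ArithmeticFunction.zeta : ArithmeticFunction ℂ) with hz
  set m := (ArithmeticFunction.moebius : ArithmeticFunction ℂ) with hm
  have h1 : m = moebiusLow U + moebiusHigh U := by
    ext k
    rw [ArithmeticFunction.add_apply]
    simp only [hm, moebiusLow, moebiusHigh, ArithmeticFunction.coe_mk,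
      ArithmeticFunction.intCoe_apply]
    split_ifs <;> simp
  have h2 : z * m = 1 := ArithmeticFunction.coe_zeta_mul_coe_moebius
  have h3 : moebiusHigh U = m - moebiusLow U := by rw [h1]; ring
  have h4 : m + moebiusLow U * (moebiusLow U * z) =
      z * (moebiusHigh U * moebiusHigh U) + 2 * moebiusLow U := by
    rw [h3]
    linear_combination (2 * moebiusLow U - m) * h2
  have h5 := congrArg (fun f : ArithmeticFunction ℂ => f n) h4
  have h6 : (2 * moebiusLow U : ArithmeticFunction ℂ) n = 0 := by
    rw [two_mul, ArithmeticFunction.add_apply]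
    simp [moebiusLow, not_le.2 hn]
  simp only [ArithmeticFunction.add_apply, h6] at h5
  have h7 : m n = ((ArithmeticFunction.moebius n : ℤ) : ℂ) := by simp [hm]
  rw [← h7]
  linear_combination h5

theorem nat_div_le_two_mul {D D' c : ℕ} (hc : 0 < c) (hD : D' ≤ 2 * (D + 1)) :
    D' / c ≤ 2 * (D / c + 1) := by
  have h1 := Nat.lt_div_mul_add (a := D) hc
  refine Nat.div_le_of_le_mul ?_
  nlinarith

theorem norm_typeII_le {U D D' J : ℕ} {τ Z η y : ℝ} (h : SmallSums U τ Z η) (hτ : 0 ≤ τ)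
    (hη : 0 ≤ η) (hU : 0 < U) (hUη : 1 ≤ η * U) (hD : D' ≤ 2 * (D + 1))
    (hy : 2 * (D' * τ) ≤ y * η) (hy0 : 0 ≤ y) (hyZ : y ≤ Z) (hJ : D' ≤ 2 ^ J) :
    ‖∑ n ∈ Ioc D D', ((ArithmeticFunction.zeta : ArithmeticFunction ℂ) *
      (moebiusHigh U * moebiusHigh U)) n * expi (y / n)‖ ≤
      J * (2 * D' * √η) * (1 + log D') := by
  rw [sum_Ioc_mul_apply]
  have hterm : ∀ c ∈ Ioc 0 D', ‖(ArithmeticFunction.zeta : ArithmeticFunction ℂ) c *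
      ∑ b ∈ Ioc (D / c) (D' / c), (moebiusHigh U * moebiusHigh U) b *
        expi (y / ((c * b : ℕ) : ℝ))‖ ≤ J * (2 * D' * √η) * (c : ℝ)⁻¹ := by
    intro c hc
    have hc0 : 0 < c := (mem_Ioc.1 hc).1
    have hc1 : (1 : ℝ) ≤ c := by exact_mod_cast hc0
    have hc' : (0 : ℝ) < c := by linarith
    have hz : (ArithmeticFunction.zeta : ArithmeticFunction ℂ) c = 1 := by
      simp [hc0.ne']
    have hcast : ((D' / c : ℕ) : ℝ) ≤ D' / c := Nat.cast_div_le
    rw [hz, one_mul, sum_Ioc_mul_apply]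
    have e1 : ∀ m k : ℕ, y / ((c * (m * k) : ℕ) : ℝ) = y / c / (m * k) := fun m k => by
      push_cast
      rw [div_div]
    simp only [e1]
    have hb := norm_bilinear_sum_le (y := y / c) h hη hU hUη (nat_div_le_two_mul hc0 hD) (by
      calc 2 * (((D' / c : ℕ) : ℝ) * τ) ≤ 2 * ((D' / c : ℝ) * τ) := by gcongr
        _ = 2 * (D' * τ) / c := by ring
        _ ≤ y * η / c := by gcongr
        _ = _ := by ring) (by positivity) (le_trans (div_le_self hy0 hc1) hyZ)
      ((Nat.div_le_self _ _).trans hJ) (norm_moebiusHigh_le U) (norm_moebiusHigh_le U)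
      (fun k hk => by simp [moebiusHigh, hk]) (fun k hk => by simp [moebiusHigh, hk])
    refine hb.trans ?_
    calc _ ≤ (J : ℝ) * (2 * (D' / c) * √η) := by gcongr
      _ = _ := by field_simp
  refine (norm_sum_le_of_le _ hterm).trans ?_
  rw [← mul_sum]
  gcongr
  exact sum_Ioc_inv_le D'

theorem norm_typeI_le {U D D' : ℕ} {τ Z η y : ℝ} (h : SmallSums U τ Z η) (hτ : 0 ≤ τ)
    (hη : 0 ≤ η) (hD : D' ≤ 2 * (D + 1)) (hUD : U ^ 3 ≤ D)
    (hy : D' * τ ≤ y) (hyZ : y ≤ Z) :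
    ‖∑ n ∈ Ioc D D', (moebiusLow U * (moebiusLow U *
      (ArithmeticFunction.zeta : ArithmeticFunction ℂ))) n * expi (y / n)‖ ≤
      D' * η * (1 + log D') ^ 2 := by
  have hy0 : 0 ≤ y := le_trans (by positivity) hy
  rw [sum_Ioc_mul_apply]
  have hterm : ∀ a ∈ Ioc 0 D', ‖moebiusLow U a * ∑ b ∈ Ioc (D / a) (D' / a),
      (moebiusLow U * (ArithmeticFunction.zeta : ArithmeticFunction ℂ)) b *
        expi (y / ((a * b : ℕ) : ℝ))‖ ≤ D' * η * (1 + log D') * (a : ℝ)⁻¹ := by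
    intro a ha
    have ha0 : 0 < a := (mem_Ioc.1 ha).1
    have hl : (0 : ℝ) ≤ log D' := Real.log_natCast_nonneg _
    have hD0 : 0 < D' := ha0.trans_le (mem_Ioc.1 ha).2
    rcases lt_or_ge U a with haU | haU
    · have : moebiusLow U a = 0 := by simp [moebiusLow, not_le.2 haU]
      rw [this, zero_mul, norm_zero]
      positivity
    rw [norm_mul]
    refine le_trans (mul_le_of_le_one_left (norm_nonneg _) (norm_moebiusLow_le U a)) ?_
    rw [sum_Ioc_mul_apply]
    have hterm2 : ∀ b ∈ Ioc 0 (D' / a), ‖moebiusLow U b * ∑ c ∈ Ioc (D / a / b) (D' / a / b),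
        (ArithmeticFunction.zeta : ArithmeticFunction ℂ) c *
          expi (y / ((a * (b * c) : ℕ) : ℝ))‖ ≤ D' * η * (a : ℝ)⁻¹ * (b : ℝ)⁻¹ := by
      intro b hb
      have hb0 : 0 < b := (mem_Ioc.1 hb).1
      rcases lt_or_ge U b with hbU | hbU
      · have : moebiusLow U b = 0 := by simp [moebiusLow, not_le.2 hbU]
        rw [this, zero_mul, norm_zero]
        positivity
      rw [norm_mul]
      refine le_trans (mul_le_of_le_one_left (norm_nonneg _) (norm_moebiusLow_le U b)) ?_
      have e1 : ∀ c ∈ Ioc (D / a / b) (D' / a / b),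
          (ArithmeticFunction.zeta : ArithmeticFunction ℂ) c *
            expi (y / ((a * (b * c) : ℕ) : ℝ)) = expi (y / (a * b) / c) := by
        intro c hc
        have hc0 : c ≠ 0 := (Nat.zero_le _ |>.trans_lt (mem_Ioc.1 hc).1).ne'
        have : (ArithmeticFunction.zeta : ArithmeticFunction ℂ) c = 1 := by simp [hc0]
        rw [this, one_mul, div_div]
        push_cast
        rw [mul_assoc]
      rw [sum_congr rfl e1]
      have hab1 : (1 : ℝ) ≤ a * b := by exact_mod_cast Nat.mul_pos ha0 hb0
      have hcast : ((D' / a / b : ℕ) : ℝ) ≤ D' / (a * b) := by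
        rw [Nat.div_div_eq_div_mul]
        exact_mod_cast (Nat.cast_div_le (m := D') (n := a * b) : ((D' / (a * b) : ℕ) : ℝ) ≤ _)
      refine (h (y / (a * b)) (D / a / b) (D' / a / b) ?_
        (nat_div_le_two_mul hb0 (nat_div_le_two_mul ha0 hD)) ?_ ?_).trans ?_
      · rw [Nat.div_div_eq_div_mul, Nat.le_div_iff_mul_le (Nat.mul_pos ha0 hb0)]
        refine le_trans ?_ hUD
        calc U * (a * b) ≤ U * (U * U) := by gcongr
          _ = U ^ 3 := by ring
      · calc _ ≤ (D' : ℝ) / (a * b) * τ := by gcongr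
          _ = D' * τ / (a * b) := by ring
          _ ≤ _ := by gcongr
      · exact (div_le_self hy0 hab1).trans hyZ
      · calc _ ≤ (D' : ℝ) / (a * b) * η := by gcongr
          _ = _ := by field_simp
    refine (norm_sum_le_of_le _ hterm2).trans ?_
    rw [← mul_sum]
    calc _ ≤ D' * η * (a : ℝ)⁻¹ * (1 + log D') := by
          gcongr
          refine le_trans (sum_le_sum_of_subset_of_nonneg
            (Ioc_subset_Ioc_right (Nat.div_le_self D' a)) ?_) (sum_Ioc_inv_le D')
          intros
          positivity
      _ = _ := by ring
  refine (norm_sum_le_of_le _ hterm).trans ?_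
  rw [← mul_sum]
  calc _ ≤ D' * η * (1 + log D') * (1 + log D') := by
        have hl : (0 : ℝ) ≤ log D' := Real.log_natCast_nonneg _
        gcongr
        exact sum_Ioc_inv_le D'
    _ = _ := by ring

/-- Cancellation in `∑ μ(n) e(y / n)` over a dyadic range. -/
theorem norm_sum_moebius_expi_le {U D D' J : ℕ} {τ Z η y : ℝ} (h : SmallSums U τ Z η) (hτ : 0 ≤ τ)
    (hη : 0 ≤ η) (hη1 : η ≤ 1) (hU : 0 < U) (hUη : 1 ≤ η * U) (hD : D' ≤ 2 * (D + 1))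
    (hUD : U ^ 3 ≤ D) (hy : 2 * (D' * τ) ≤ y * η) (hy0 : 0 ≤ y) (hyZ : y ≤ Z) (hJ : D' ≤ 2 ^ J) :
    ‖∑ n ∈ Ioc D D', ((ArithmeticFunction.moebius n : ℤ) : ℂ) * expi (y / n)‖ ≤
      J * (2 * D' * √η) * (1 + log D') + D' * η * (1 + log D') ^ 2 := by
  have hUD1 : U ≤ D := le_trans (le_self_pow₀ hU (by norm_num)) hUD
  have e : ∑ n ∈ Ioc D D', ((ArithmeticFunction.moebius n : ℤ) : ℂ) * expi (y / n) =
      ∑ n ∈ Ioc D D', ((ArithmeticFunction.zeta : ArithmeticFunction ℂ) *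
        (moebiusHigh U * moebiusHigh U)) n * expi (y / n) -
      ∑ n ∈ Ioc D D', (moebiusLow U * (moebiusLow U *
        (ArithmeticFunction.zeta : ArithmeticFunction ℂ))) n * expi (y / n) := by
    rw [← sum_sub_distrib]
    refine sum_congr rfl (fun n hn => ?_)
    rw [moebius_eq_vaughan (hUD1.trans_lt (mem_Ioc.1 hn).1), sub_mul]
  rw [e]
  refine (norm_sub_le _ _).trans (add_le_add (norm_typeII_le h hτ hη hU hUη hD hy hy0 hyZ hJ)
    (norm_typeI_le h hτ hη hD hUD ?_ hyZ))
  have h1 : 0 ≤ (D' : ℝ) * τ := by positivity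
  nlinarith

end VinogradovMean

/-! ### The sawtooth function -/

namespace VinogradovMean

/-- The sawtooth function `{t} - 1/2`. -/
noncomputable def sawtooth (t : ℝ) : ℝ := Int.fract t - 1 / 2

/-- The periodic primitive of the sawtooth function. -/
noncomputable def sawPrim (t : ℝ) : ℝ := (Int.fract t ^ 2 - Int.fract t + 1 / 6) / 2

theorem abs_sawtooth_le (t : ℝ) : |sawtooth t| ≤ 1 := by
  rw [sawtooth, abs_le]
  constructor <;> linarith [Int.fract_nonneg t, Int.fract_lt_one t]

theorem sawPrim_add_sub_le {δ : ℝ} (hδ0 : 0 ≤ δ) (hδ1 : δ < 1) (t : ℝ) :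
    sawPrim (t + δ) - sawPrim t ≤ δ * sawtooth t + δ ^ 2 / 2 := by
  have h0 := Int.fract_nonneg t
  have h1 := Int.fract_lt_one t
  have ht : t = Int.fract t + ⌊t⌋ := (Int.fract_add_floor t).symm
  simp only [sawPrim, sawtooth]
  rcases lt_or_ge (Int.fract t + δ) 1 with h | h
  · have : Int.fract (t + δ) = Int.fract t + δ :=
      Int.fract_eq_iff.2 ⟨by linarith, h, ⌊t⌋, by linarith⟩
    rw [this]
    nlinarith
  · have : Int.fract (t + δ) = Int.fract t + δ - 1 :=
      Int.fract_eq_iff.2 ⟨by linarith, by linarith, ⌊t⌋ + 1, by push_cast; linarith⟩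
    rw [this]
    nlinarith

theorem le_sawPrim_sub_sub {δ : ℝ} (hδ0 : 0 ≤ δ) (hδ1 : δ < 1) (t : ℝ) :
    δ * sawtooth t - δ ^ 2 / 2 ≤ sawPrim t - sawPrim (t - δ) := by
  have h0 := Int.fract_nonneg t
  have h1 := Int.fract_lt_one t
  have ht : t = Int.fract t + ⌊t⌋ := (Int.fract_add_floor t).symm
  simp only [sawPrim, sawtooth]
  rcases le_or_gt 0 (Int.fract t - δ) with h | h
  · have : Int.fract (t - δ) = Int.fract t - δ :=
      Int.fract_eq_iff.2 ⟨by linarith, by linarith, ⌊t⌋, by linarith⟩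
    rw [this]
    nlinarith
  · have : Int.fract (t - δ) = Int.fract t - δ + 1 :=
      Int.fract_eq_iff.2 ⟨by linarith, by linarith, ⌊t⌋ - 1, by push_cast; linarith⟩
    rw [this]
    nlinarith

/-- Approximation of the sawtooth by difference quotients of its primitive. -/
theorem abs_sawtooth_sub_le {δ : ℝ} (hδ0 : 0 < δ) (hδ1 : δ < 1) (t : ℝ) :
    |sawtooth t - (sawPrim (t + δ) - sawPrim t) / δ| ≤
      2 * δ + (2 * sawPrim t - sawPrim (t - δ) - sawPrim (t + δ)) / δ := by
  have h1 := sawPrim_add_sub_le hδ0.le hδ1 t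
  have h2 := le_sawPrim_sub_sub hδ0.le hδ1 t
  have e1 : (sawPrim (t + δ) - sawPrim t) / δ ≤ sawtooth t + δ / 2 := by
    rw [div_le_iff₀ hδ0]; nlinarith
  have e2 : sawtooth t - δ / 2 ≤ (sawPrim t - sawPrim (t - δ)) / δ := by
    rw [le_div_iff₀ hδ0]; nlinarith
  have e3 : (2 * sawPrim t - sawPrim (t - δ) - sawPrim (t + δ)) / δ =
      (sawPrim t - sawPrim (t - δ)) / δ - (sawPrim (t + δ) - sawPrim t) / δ := by ring
  rw [e3, abs_le]
  constructor <;> linarith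

theorem eval_bernoulli_two (x : ℝ) :
    (Polynomial.map (algebraMap ℚ ℝ) (Polynomial.bernoulli (2 * 1))).eval x =
      x ^ 2 - x + 1 / 6 := by
  rw [Polynomial.bernoulli]
  simp [sum_range_succ, Polynomial.eval_monomial, bernoulli_one,
    bernoulli_eq_bernoulli'_of_ne_one, bernoulli'_two]
  ring

theorem hasSum_sawPrim (t : ℝ) :
    HasSum (fun n : ℕ => 1 / (n : ℝ) ^ 2 * cos (2 * π * (n * t))) (2 * π ^ 2 * sawPrim t) := by
  have h := hasSum_one_div_nat_pow_mul_cos (k := 1) one_ne_zero (x := Int.fract t)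
    ⟨Int.fract_nonneg t, (Int.fract_lt_one t).le⟩
  rw [eval_bernoulli_two] at h
  convert! h using 1
  · funext n
    have e : 2 * π * (n * t) = 2 * π * n * Int.fract t + ((n * ⌊t⌋ : ℤ) : ℝ) * (2 * π) := by
      nth_rewrite 1 [← Int.fract_add_floor t]
      push_cast
      ring
    rw [e, Real.cos_add_int_mul_two_pi]
  · simp [sawPrim]
    ring

/-- Fourier truncation: cancellation in the first frequencies controls sums of `sawPrim`. -/
theorem exists_abs_sum_sawPrim_le : ∃ C : ℝ, 0 < C ∧ ∀ (s : Finset ℕ) (w t : ℕ → ℝ) (E N H u : ℝ),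
    (∀ d, |w d| ≤ 1) → (#s : ℝ) ≤ N → 0 ≤ E → 0 < H →
    (∀ h : ℕ, 1 ≤ h → (h : ℝ) ≤ H → ‖∑ d ∈ s, (w d : ℂ) * expi (h * t d)‖ ≤ E) →
    |∑ d ∈ s, w d * sawPrim (t d + u)| ≤ C * (E + N / √H) := by
  have hs1 : Summable (fun n : ℕ => 1 / (n : ℝ) ^ 2) :=
    Real.summable_one_div_nat_pow.2 (by norm_num)
  have hs2 : Summable (fun n : ℕ => 1 / (n : ℝ) ^ ((3 : ℝ) / 2)) :=
    Real.summable_one_div_nat_rpow.2 (by norm_num)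
  refine ⟨(∑' n : ℕ, 1 / (n : ℝ) ^ 2) + (∑' n : ℕ, 1 / (n : ℝ) ^ ((3 : ℝ) / 2)) + 1, ?_, ?_⟩
  · positivity
  intro s w t E N H u hw hN hE hH hF
  have hN0 : 0 ≤ N := le_trans (by positivity) hN
  have hA : HasSum (fun h : ℕ => ∑ d ∈ s, w d * (1 / (h : ℝ) ^ 2 * cos (2 * π * (h * (t d + u)))))
      (∑ d ∈ s, w d * (2 * π ^ 2 * sawPrim (t d + u))) :=
    hasSum_sum (fun d _ => (hasSum_sawPrim (t d + u)).mul_left (w d))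
  have hB : HasSum (fun h : ℕ => E * (1 / (h : ℝ) ^ 2) + N / √H * (1 / (h : ℝ) ^ ((3 : ℝ) / 2)))
      (E * (∑' n : ℕ, 1 / (n : ℝ) ^ 2) + N / √H * ∑' n : ℕ, 1 / (n : ℝ) ^ ((3 : ℝ) / 2)) :=
    (hs1.hasSum.mul_left _).add (hs2.hasSum.mul_left _)
  have hbound := hA.norm_le_of_bounded hB (fun h => by
    have e1 : ∑ d ∈ s, w d * (1 / (h : ℝ) ^ 2 * cos (2 * π * (h * (t d + u)))) =
        1 / (h : ℝ) ^ 2 * ((∑ d ∈ s, (w d : ℂ) * expi (h * t d)) * expi (h * u)).re := by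
      rw [sum_mul, Complex.re_sum, mul_sum]
      refine sum_congr rfl (fun d _ => ?_)
      rw [mul_assoc (w d : ℂ), ← expi_add, ← mul_add, Complex.re_ofReal_mul, expi,
        Complex.exp_ofReal_mul_I_re]
      ring
    rw [e1, norm_mul, Real.norm_of_nonneg (by positivity : 0 ≤ 1 / (h : ℝ) ^ 2)]
    have e2 : ‖((∑ d ∈ s, (w d : ℂ) * expi (h * t d)) * expi (h * u)).re‖ ≤
        ‖∑ d ∈ s, (w d : ℂ) * expi (h * t d)‖ := by
      refine (Complex.abs_re_le_norm _).trans ?_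
      rw [norm_mul, norm_expi, mul_one]
    have e3 : ‖∑ d ∈ s, (w d : ℂ) * expi (h * t d)‖ ≤ N := by
      refine le_trans ?_ hN
      refine (norm_sum_le_of_le (n := fun _ => (1 : ℝ)) _ (fun d _ => ?_)).trans (by simp)
      rw [norm_mul, norm_expi, mul_one, Complex.norm_real]
      exact hw d
    rcases Nat.eq_zero_or_pos h with rfl | hh
    · norm_num
    have hh' : (0 : ℝ) < h := by exact_mod_cast hh
    rcases le_or_gt (h : ℝ) H with hle | hlt
    · calc _ ≤ 1 / (h : ℝ) ^ 2 * E := by gcongr; exact e2.trans (hF h hh hle)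
        _ = E * (1 / (h : ℝ) ^ 2) := by ring
        _ ≤ _ := le_add_of_nonneg_right (by positivity)
    · have e4 : (h : ℝ) ^ 2 = √h * (h : ℝ) ^ ((3 : ℝ) / 2) := by
        rw [Real.sqrt_eq_rpow, ← Real.rpow_add hh', ← Real.rpow_natCast]
        norm_num
      calc _ ≤ 1 / (h : ℝ) ^ 2 * N := by gcongr; exact e2.trans e3
        _ = N / √h * (1 / (h : ℝ) ^ ((3 : ℝ) / 2)) := by rw [e4]; field_simp
        _ ≤ N / √H * (1 / (h : ℝ) ^ ((3 : ℝ) / 2)) := by gcongr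
        _ ≤ _ := le_add_of_nonneg_left (by positivity))
  have e5 : ∑ d ∈ s, w d * (2 * π ^ 2 * sawPrim (t d + u)) =
      2 * π ^ 2 * ∑ d ∈ s, w d * sawPrim (t d + u) := by
    rw [mul_sum]
    exact sum_congr rfl (fun d _ => by ring)
  rw [e5, norm_mul, Real.norm_of_nonneg (by positivity), Real.norm_eq_abs] at hbound
  have hpi : 1 ≤ 2 * π ^ 2 := by nlinarith [Real.pi_gt_three]
  have h1 : 0 ≤ ∑' n : ℕ, 1 / (n : ℝ) ^ 2 := tsum_nonneg (fun n => by positivity)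
  have h2 : 0 ≤ ∑' n : ℕ, 1 / (n : ℝ) ^ ((3 : ℝ) / 2) := tsum_nonneg (fun n => by positivity)
  have h3 : 0 ≤ N / √H := by positivity
  calc |∑ d ∈ s, w d * sawPrim (t d + u)| ≤ 2 * π ^ 2 * |∑ d ∈ s, w d * sawPrim (t d + u)| :=
        le_mul_of_one_le_left (abs_nonneg _) hpi
    _ ≤ _ := hbound
    _ ≤ _ := by nlinarith [mul_nonneg hE h2, mul_nonneg h3 h1]

/-- Sums of the sawtooth with bounded weights, from cancellation in exponential sums. -/
theorem exists_abs_sum_sawtooth_le : ∃ C : ℝ, 0 < C ∧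
    ∀ (s : Finset ℕ) (w t : ℕ → ℝ) (E N δ H : ℝ),
    (∀ d, |w d| ≤ 1) → (#s : ℝ) ≤ N → 0 ≤ E → 0 < δ → δ < 1 → 0 < H →
    (∀ h : ℕ, 1 ≤ h → (h : ℝ) ≤ H → ‖∑ d ∈ s, (w d : ℂ) * expi (h * t d)‖ ≤ E) →
    (∀ h : ℕ, 1 ≤ h → (h : ℝ) ≤ H → ‖∑ d ∈ s, expi (h * t d)‖ ≤ E) →
    |∑ d ∈ s, w d * sawtooth (t d)| ≤ C * (N * δ + (E + N / √H) / δ) := by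
  obtain ⟨C, hC, hmain⟩ := exists_abs_sum_sawPrim_le
  refine ⟨6 * C + 2, by positivity, ?_⟩
  intro s w t E N δ H hw hN hE hδ0 hδ1 hH hF hF1
  set B := C * (E + N / √H) with hB
  have hN0 : 0 ≤ N := le_trans (by positivity) hN
  have hB0 : 0 ≤ B := by positivity
  have h1 := fun u => hmain s w t E N H u hw hN hE hH hF
  have h2 := fun u => hmain s (fun _ => 1) t E N H u (by simp) hN hE hH
    (by simpa only [Complex.ofReal_one, one_mul] using hF1)
  simp only [one_mul] at h2
  have e1 : ∑ d ∈ s, w d * sawtooth (t d) =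
      ∑ d ∈ s, w d * (sawtooth (t d) - (sawPrim (t d + δ) - sawPrim (t d)) / δ) +
      (∑ d ∈ s, w d * sawPrim (t d + δ) - ∑ d ∈ s, w d * sawPrim (t d + 0)) / δ := by
    rw [← sum_sub_distrib, sum_div, ← sum_add_distrib]
    refine sum_congr rfl (fun d _ => ?_)
    rw [add_zero]
    ring
  have e2 : |∑ d ∈ s, w d * (sawtooth (t d) - (sawPrim (t d + δ) - sawPrim (t d)) / δ)| ≤
      2 * δ * N + 4 * B / δ := by
    calc _ ≤ ∑ d ∈ s, (2 * δ + (2 * sawPrim (t d + 0) - sawPrim (t d + -δ) -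
          sawPrim (t d + δ)) / δ) := by
          refine (abs_sum_le_sum_abs _ _).trans (sum_le_sum (fun d _ => ?_))
          rw [abs_mul, add_zero, ← sub_eq_add_neg]
          exact (mul_le_of_le_one_left (abs_nonneg _) (hw d)).trans
            (abs_sawtooth_sub_le hδ0 hδ1 (t d))
      _ = 2 * δ * #s + (2 * ∑ d ∈ s, sawPrim (t d + 0) - ∑ d ∈ s, sawPrim (t d + -δ) -
          ∑ d ∈ s, sawPrim (t d + δ)) / δ := by
          rw [sum_add_distrib, sum_const, ← sum_div, sum_sub_distrib, sum_sub_distrib, mul_sum,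
            nsmul_eq_mul]
          ring
      _ ≤ _ := by
          have a1 := (abs_le.1 (h2 0)).2
          have a2 := (abs_le.1 (h2 (-δ))).1
          have a3 := (abs_le.1 (h2 δ)).1
          rw [← hB] at a1 a2 a3
          gcongr
          linarith
  have e3 : |(∑ d ∈ s, w d * sawPrim (t d + δ) - ∑ d ∈ s, w d * sawPrim (t d + 0)) / δ| ≤
      2 * B / δ := by
    rw [abs_div, abs_of_pos hδ0]
    gcongr
    refine (abs_sub _ _).trans ?_
    linarith [h1 δ, h1 0]
  rw [e1]
  refine (abs_add_le _ _).trans ((add_le_add e2 e3).trans ?_)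
  have h5 : 0 ≤ (E + N / √H) / δ := by positivity
  have h6 : 0 ≤ N * δ := by positivity
  have e4 : 2 * δ * N + 4 * B / δ + 2 * B / δ = 2 * (N * δ) + 6 * C * ((E + N / √H) / δ) := by
    rw [hB]; ring
  rw [e4]
  nlinarith [mul_nonneg hC.le h6]

end VinogradovMean

/-! ### Cancellation in Möbius sums with the sawtooth -/

namespace VinogradovMean

/-- The threshold `exp (L ^ (2 / 3) * (log L) ^ (4 / 3))`, beyond which there is cancellation. -/
noncomputable def cutoff (L : ℝ) : ℕ := ⌈exp (L ^ ((2 : ℝ) / 3) * log L ^ ((4 : ℝ) / 3))⌉₊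

theorem eventually_smallSums (A : ℕ) : ∀ᶠ L : ℝ in atTop,
    SmallSums (cutoff L) (exp (L ^ ((2 : ℝ) / 3) / 2)) (exp (2 * L)) (1 / L ^ A) := by
  filter_upwards [eventually_norm_sum_expi_div_le A, eventually_gt_atTop 1] with L hmain hL
  intro X a b ha hb hX hXZ
  have hL0 : 0 < L := by linarith
  rcases le_or_gt b a with hab | hab
  · rw [Ioc_eq_empty (by omega), sum_empty, norm_zero]
    positivity
  have hab' : (a : ℝ) + 1 ≤ b := by exact_mod_cast hab
  have hlog := Real.log_pos hL
  have hW : 0 ≤ L ^ ((2 : ℝ) / 3) * log L ^ ((4 : ℝ) / 3) := by positivity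
  have hlogK : L ^ ((2 : ℝ) / 3) * log L ^ ((4 : ℝ) / 3) ≤ log ((a : ℝ) + 1) := by
    rw [Real.le_log_iff_exp_le (by positivity)]
    have h1 := Nat.le_ceil (exp (L ^ ((2 : ℝ) / 3) * log L ^ ((4 : ℝ) / 3)))
    have h2 : ((cutoff L : ℕ) : ℝ) ≤ a := by exact_mod_cast ha
    rw [cutoff] at h2
    linarith
  refine (hmain (a + 1) X a b hab.le le_rfl (by exact_mod_cast hb) (by linarith) (by positivity)
    (le_trans (by gcongr) hX) hXZ).trans ?_
  rw [mul_one_div]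
  gcongr

theorem eventually_mul_pow_le_exp_rpow (n : ℕ) : ∀ᶠ L : ℝ in atTop,
    2 * L ^ n ≤ exp (L ^ ((2 : ℝ) / 3) / 2) := by
  have h1 : (fun L : ℝ => log 2 + n * log L) =o[atTop] fun L : ℝ => L ^ ((2 : ℝ) / 3) := by
    refine Asymptotics.IsLittleO.add ?_ ((isLittleO_log_rpow_atTop (by norm_num)).const_mul_left _)
    exact Asymptotics.isLittleO_const_left.2
      (Or.inr (tendsto_norm_atTop_atTop.comp (tendsto_rpow_atTop (by norm_num))))
  filter_upwards [h1.bound (c := 1 / 2) (by norm_num), eventually_gt_atTop 0] with L hL hL0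
  rw [Real.norm_of_nonneg (by positivity : 0 ≤ L ^ ((2 : ℝ) / 3))] at hL
  calc 2 * L ^ n = exp (log 2 + n * log L) := by
        rw [Real.exp_add, Real.exp_log (by norm_num), mul_comm (n : ℝ), Real.exp_mul,
          Real.exp_log hL0, Real.rpow_natCast]
    _ ≤ _ := Real.exp_le_exp.2 ((le_norm_self _).trans (by linarith))

theorem exp_rpow_le_cutoff {L : ℝ} (hL : exp 1 ≤ L) : exp (L ^ ((2 : ℝ) / 3)) ≤ cutoff L := by
  have hL0 : 0 < L := lt_of_lt_of_le (Real.exp_pos 1) hL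
  have hl : 1 ≤ log L := (Real.le_log_iff_exp_le hL0).2 hL
  refine le_trans (Real.exp_le_exp.2 ?_) (Nat.le_ceil _)
  exact le_mul_of_one_le_right (by positivity) (Real.one_le_rpow hl (by norm_num))

/-- Cancellation in `∑ μ(n) e(y / n)` with a saving of `L ^ 2`. -/
theorem eventually_norm_sum_moebius_expi_le : ∀ᶠ L : ℝ in atTop, ∀ (D D' : ℕ) (y : ℝ),
    cutoff L ^ 3 ≤ D → D' ≤ 2 * (D + 1) → (D' : ℝ) ≤ exp L → D' * exp (L ^ ((2 : ℝ) / 3)) ≤ y →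
    y ≤ exp (2 * L) →
    ‖∑ n ∈ Ioc D D', ((ArithmeticFunction.moebius n : ℤ) : ℂ) * expi (y / n)‖ ≤ D' / L ^ 2 := by
  filter_upwards [eventually_smallSums 10, eventually_mul_pow_le_exp_rpow 10,
    eventually_ge_atTop 16] with L hS hexp hL D D' y hUD hD hD' hy hyZ
  have hL0 : 0 < L := by linarith
  have hLe : exp 1 ≤ L := by linarith [Real.exp_one_lt_d9]
  have hU := exp_rpow_le_cutoff hLe
  have hU0 : 0 < cutoff L := by
    have : (0 : ℝ) < cutoff L := lt_of_lt_of_le (Real.exp_pos _) hU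
    exact_mod_cast this
  have hττ : exp (L ^ ((2 : ℝ) / 3)) =
      exp (L ^ ((2 : ℝ) / 3) / 2) * exp (L ^ ((2 : ℝ) / 3) / 2) := by
    rw [← Real.exp_add]; ring_nf
  have hτ1 : 1 ≤ exp (L ^ ((2 : ℝ) / 3) / 2) := Real.one_le_exp (by positivity)
  set J := ⌈2 * L⌉₊ with hJ
  have hJ1 : 2 * L ≤ J := Nat.le_ceil _
  have hJ2 : (J : ℝ) ≤ 3 * L := by
    have : (J : ℝ) < 2 * L + 1 := Nat.ceil_lt_add_one (by linarith)
    linarith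
  have hDJ : D' ≤ 2 ^ J := by
    have : (D' : ℝ) ≤ 2 ^ J := by
      refine hD'.trans ?_
      rw [← Real.rpow_natCast, Real.rpow_def_of_pos (by norm_num)]
      refine Real.exp_le_exp.2 ?_
      nlinarith [Real.log_two_gt_d9]
    exact_mod_cast this
  have hη1 : (1 : ℝ) / L ^ 10 ≤ 1 := by
    rw [div_le_one (by positivity)]
    exact one_le_pow₀ (by linarith)
  have key := norm_sum_moebius_expi_le (D := D) (D' := D') (J := J) (y := y) hS (by positivity)
    (by positivity) hη1 hU0 (by
      rw [one_div_mul_eq_div, one_le_div (by positivity)]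
      refine le_trans ?_ hU
      rw [hττ]
      nlinarith [pow_pos hL0 10]) hD hUD (by
      rw [mul_one_div, le_div_iff₀ (by positivity)]
      calc 2 * ((D' : ℝ) * exp (L ^ ((2 : ℝ) / 3) / 2)) * L ^ 10 =
          D' * (exp (L ^ ((2 : ℝ) / 3) / 2) * (2 * L ^ 10)) := by ring
        _ ≤ D' * (exp (L ^ ((2 : ℝ) / 3) / 2) * exp (L ^ ((2 : ℝ) / 3) / 2)) := by gcongr
        _ ≤ y := by rw [← hττ]; exact hy) (le_trans (by positivity) hy) hyZ hDJ
  refine key.trans ?_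
  have hsqrt : √(1 / L ^ 10) = 1 / L ^ 5 := by
    rw [Real.sqrt_eq_iff_mul_self_eq (by positivity) (by positivity)]
    field_simp
  have hlog : 1 + log D' ≤ 2 * L := by
    rcases Nat.eq_zero_or_pos D' with h0 | h0
    · rw [h0]; simp; linarith
    · have : log D' ≤ L := by
        rw [Real.log_le_iff_le_exp (by exact_mod_cast h0)]
        exact hD'
      linarith
  have hlog0 : 0 ≤ log (D' : ℝ) := Real.log_natCast_nonneg _
  rw [hsqrt]
  calc _ ≤ 3 * L * (2 * D' * (1 / L ^ 5)) * (2 * L) + D' * (1 / L ^ 10) * (2 * L) ^ 2 := by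
        gcongr
    _ = D' / L ^ 2 * (12 / L + 4 / L ^ 6) := by field_simp; ring
    _ ≤ D' / L ^ 2 * 1 := by
        gcongr
        have h1 : 12 / L ≤ 12 / 16 := by gcongr
        have h2 : 4 / L ^ 6 ≤ 4 / 16 ^ 6 := by gcongr
        have h3 : (12 : ℝ) / 16 + 4 / 16 ^ 6 ≤ 1 := by norm_num
        linarith
    _ = _ := mul_one _

/-- Cancellation in `∑ μ(d) ψ(x / d)` over dyadic ranges, where `x = exp L`. -/
theorem exists_eventually_abs_sum_moebius_sawtooth_le : ∃ C : ℝ, 0 < C ∧ ∀ᶠ L : ℝ in atTop,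
    ∀ D D' : ℕ, cutoff L ^ 3 ≤ D → D' ≤ 2 * (D + 1) →
    D' * exp (L ^ ((2 : ℝ) / 3)) ≤ exp L →
    |∑ d ∈ Ioc D D', ((ArithmeticFunction.moebius d : ℤ) : ℝ) * sawtooth (exp L / d)| ≤
      C * (D' / L) := by
  obtain ⟨C, hC, hmain⟩ := exists_abs_sum_sawtooth_le
  refine ⟨3 * C, by positivity, ?_⟩
  have hpow : ∀ᶠ L : ℝ in atTop, L ^ 4 ≤ exp L := by
    filter_upwards [(isLittleO_pow_exp_atTop (n := 4)).bound (c := 1) one_pos,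
      eventually_gt_atTop 0] with L hL hL0
    rwa [one_mul, Real.norm_of_nonneg (by positivity), Real.norm_of_nonneg (by positivity)] at hL
  filter_upwards [eventually_norm_sum_moebius_expi_le, eventually_smallSums 2, hpow,
    eventually_gt_atTop 3] with L hμ hS hpow hL D D' hUD hD hD'
  have hL0 : 0 < L := by linarith
  have hLe : exp 1 ≤ L := by linarith [Real.exp_one_lt_d9]
  have hU := exp_rpow_le_cutoff hLe
  have hU0 : 0 < cutoff L := by
    have : (0 : ℝ) < cutoff L := lt_of_lt_of_le (Real.exp_pos _) hU
    exact_mod_cast this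
  have hT1 : 1 ≤ exp (L ^ ((2 : ℝ) / 3)) := Real.one_le_exp (by positivity)
  have hD'x : (D' : ℝ) ≤ exp L := le_trans (le_mul_of_one_le_right (by positivity) hT1) hD'
  have hcond : ∀ h : ℕ, 1 ≤ h → (h : ℝ) ≤ L ^ 4 →
      D' * exp (L ^ ((2 : ℝ) / 3)) ≤ h * exp L ∧ h * exp L ≤ exp (2 * L) := by
    intro h h1 h2
    have h1' : (1 : ℝ) ≤ h := by exact_mod_cast h1
    refine ⟨hD'.trans (le_mul_of_one_le_left (by positivity) h1'), ?_⟩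
    calc (h : ℝ) * exp L ≤ exp L * exp L := by gcongr; exact h2.trans hpow
      _ = exp (2 * L) := by rw [← Real.exp_add]; ring_nf
  have hassoc : ∀ (h d : ℕ), (h : ℝ) * (exp L / d) = h * exp L / d := fun h d => by ring
  have key := hmain (Ioc D D') (fun d => ((ArithmeticFunction.moebius d : ℤ) : ℝ))
    (fun d => exp L / d) (D' / L ^ 2) D' (1 / L) (L ^ 4)
    (fun d => by exact_mod_cast ArithmeticFunction.abs_moebius_le_one)
    (by rw [Nat.card_Ioc]; exact_mod_cast Nat.sub_le _ _) (by positivity) (by positivity)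
    (by rw [div_lt_one hL0]; linarith) (by positivity)
    (fun h h1 h2 => by
      simp only [hassoc]
      have := hμ D D' (h * exp L) hUD hD hD'x (hcond h h1 h2).1 (hcond h h1 h2).2
      simpa using this)
    (fun h h1 h2 => by
      simp only [hassoc]
      refine (hS (h * exp L) D D' (le_trans (le_self_pow₀ hU0 (by norm_num)) hUD) hD
        (le_trans ?_ (hcond h h1 h2).1) (hcond h h1 h2).2).trans (le_of_eq (by ring))
      gcongr
      have : 0 ≤ L ^ ((2 : ℝ) / 3) := by positivity
      linarith)
  refine key.trans (le_of_eq ?_)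
  have : √(L ^ 4) = L ^ 2 := by
    rw [show L ^ 4 = (L ^ 2) ^ 2 by ring, Real.sqrt_sq (by positivity)]
  rw [this]
  field_simp
  ring

end VinogradovMean

/-! ### The totient sum -/

namespace VinogradovMean

theorem hasSum_moebius_div_sq :
    HasSum (fun n : ℕ => ((ArithmeticFunction.moebius n : ℤ) : ℝ) / (n : ℝ) ^ 2) (6 / π ^ 2) := by
  have h2 : 1 < (2 : ℂ).re := by norm_num
  have hs := (ArithmeticFunction.LSeriesSummable_moebius_iff.mpr h2).LSeriesHasSum
  have hval := ArithmeticFunction.LSeries_zeta_mul_Lseries_moebius h2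
  rw [ArithmeticFunction.LSeries_zeta_eq_riemannZeta h2, riemannZeta_two] at hval
  have hpi : (π : ℂ) ≠ 0 := by exact_mod_cast pi_ne_zero
  have heq : LSeries (fun n => ((ArithmeticFunction.moebius n : ℤ) : ℂ)) 2 =
      ((6 / π ^ 2 : ℝ) : ℂ) := by
    push_cast
    rw [eq_div_iff (pow_ne_zero 2 hpi)]
    linear_combination 6 * hval
  rw [heq, LSeriesHasSum] at hs
  rw [← Complex.hasSum_ofReal]
  refine hs.congr_fun fun n => ?_
  rcases eq_or_ne n 0 with rfl | hn
  · simp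
  · rw [LSeries.term_of_ne_zero hn]
    push_cast
    norm_num

theorem abs_sum_moebius_div_sq_sub_le {N : ℕ} (hN : N ≠ 0) :
    |∑ d ∈ Ioc 0 N, ((ArithmeticFunction.moebius d : ℤ) : ℝ) / (d : ℝ) ^ 2 - 6 / π ^ 2| ≤
      1 / (N : ℝ) := by
  have hlim := hasSum_moebius_div_sq.tendsto_sum_nat
  have hlim' := ((hlim.comp (tendsto_add_atTop_nat 1)).const_sub
    (∑ d ∈ Ioc 0 N, ((ArithmeticFunction.moebius d : ℤ) : ℝ) / (d : ℝ) ^ 2)).abs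
  refine le_of_tendsto hlim' ?_
  filter_upwards [eventually_ge_atTop N] with M hM
  have hrange : ∑ d ∈ range (M + 1), ((ArithmeticFunction.moebius d : ℤ) : ℝ) / (d : ℝ) ^ 2 =
      ∑ d ∈ Ioc 0 M, ((ArithmeticFunction.moebius d : ℤ) : ℝ) / (d : ℝ) ^ 2 := by
    rw [← sum_subset (s₁ := Ioc 0 M)]
    · intro d hd
      rw [mem_Ioc] at hd
      exact mem_range.2 (by omega)
    · intro d hd hd'
      rw [mem_range] at hd
      rw [mem_Ioc] at hd'
      obtain rfl : d = 0 := by omega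
      simp
  rw [Function.comp_apply, hrange, ← sum_Ioc_consecutive _ (Nat.zero_le N) hM, sub_add_cancel_left,
    abs_neg]
  calc _ ≤ ∑ d ∈ Ioc N M, ((d : ℝ) ^ 2)⁻¹ := by
        refine (abs_sum_le_sum_abs _ _).trans (sum_le_sum fun d _ => ?_)
        rw [abs_div, abs_of_nonneg (sq_nonneg (d : ℝ)), div_eq_mul_inv]
        refine mul_le_of_le_one_left (by positivity) ?_
        exact_mod_cast ArithmeticFunction.abs_moebius_le_one
    _ ≤ (N : ℝ)⁻¹ - (M : ℝ)⁻¹ := sum_Ioc_inv_sq_le_sub hN hM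
    _ ≤ 1 / (N : ℝ) := by
        rw [one_div]
        linarith [inv_nonneg.2 (Nat.cast_nonneg (α := ℝ) M)]

/-- Abel summation against the weight `1 / d`. -/
theorem sum_Ioc_div_eq (a : ℕ → ℝ) {A N : ℕ} (h : A ≤ N) :
    ∑ d ∈ Ioc A N, a d / d = (∑ d ∈ Ioc A N, a d) / (N + 1) +
      ∑ d ∈ Ioc A N, (∑ e ∈ Ioc A d, a e) * (1 / (d : ℝ) - 1 / (d + 1)) := by
  induction N, h using Nat.le_induction with
  | base => simp
  | succ N hN ih =>
    rw [sum_Ioc_succ_top (by omega), ih, sum_Ioc_succ_top (b := N) (f := fun d => _ * _) (by omega),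
      sum_Ioc_succ_top (by omega)]
    push_cast
    field_simp
    ring

theorem abs_sum_Ioc_div_le (a : ℕ → ℝ) {A N : ℕ} {K : ℝ} (hK : 0 ≤ K) (h : A ≤ N)
    (ha : ∀ D, A ≤ D → D ≤ N → |∑ d ∈ Ioc A D, a d| ≤ K * D) :
    |∑ d ∈ Ioc A N, a d / d| ≤ K * (2 + log N) := by
  rw [sum_Ioc_div_eq a h]
  have h1 : |(∑ d ∈ Ioc A N, a d) / (N + 1)| ≤ K := by
    rw [abs_div, abs_of_pos (by positivity : (0 : ℝ) < N + 1), div_le_iff₀ (by positivity)]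
    linarith [ha N h le_rfl]
  have h2 : |∑ d ∈ Ioc A N, (∑ e ∈ Ioc A d, a e) * (1 / (d : ℝ) - 1 / (d + 1))| ≤
      K * ∑ d ∈ Ioc 0 N, (d : ℝ)⁻¹ := by
    rw [mul_sum]
    refine (abs_sum_le_sum_abs _ _).trans
      ((sum_le_sum fun d hd => ?_).trans (sum_le_sum_of_subset_of_nonneg
        (Ioc_subset_Ioc_left (Nat.zero_le A)) fun d _ _ => by positivity))
    rw [mem_Ioc] at hd
    have hd0 : (0 : ℝ) < d := by exact_mod_cast (by omega : 0 < d)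
    have hdiff : 1 / (d : ℝ) - 1 / (d + 1) = (d : ℝ)⁻¹ * (1 / (d + 1)) := by
      field_simp
      ring
    rw [abs_mul, hdiff, abs_of_pos (by positivity : 0 < (d : ℝ)⁻¹ * (1 / (d + 1)))]
    calc _ ≤ (K * d) * ((d : ℝ)⁻¹ * (1 / (d + 1))) := by
          gcongr
          exact ha d hd.1.le hd.2
      _ = K * (1 / (d + 1)) := by field_simp
      _ ≤ K * (d : ℝ)⁻¹ := by
          rw [← one_div]
          gcongr
          linarith
  have h3 := mul_le_mul_of_nonneg_left (sum_Ioc_inv_le N) hK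
  refine (abs_add_le _ _).trans ?_
  linarith

theorem sum_Ioc_inv_le_log_sub {B N : ℕ} (hB : 1 ≤ B) (h : B ≤ N) :
    ∑ d ∈ Ioc B N, (d : ℝ)⁻¹ ≤ log N - log B := by
  induction N, h using Nat.le_induction with
  | base => simp
  | succ N hN ih =>
    rw [sum_Ioc_succ_top (by omega)]
    have hN0 : (0 : ℝ) < N := by exact_mod_cast (by omega : 0 < N)
    have h1 := Real.one_sub_inv_le_log_of_pos (by positivity : (0 : ℝ) < (N + 1) / N)
    rw [log_div (by positivity) hN0.ne', inv_div] at h1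
    have h2 : 1 - (N : ℝ) / (N + 1) = (N + 1 : ℝ)⁻¹ := by
      field_simp
      ring
    push_cast
    linarith

/-- Bounds on dyadic blocks give bounds on initial segments. -/
theorem abs_sum_Ioc_le_of_dyadic (a : ℕ → ℝ) {A N : ℕ} {K : ℝ} (hK : 0 ≤ K)
    (ha : ∀ D D', A ≤ D → D' ≤ 2 * (D + 1) → D' ≤ N → |∑ d ∈ Ioc D D', a d| ≤ K * D') :
    ∀ D, A ≤ D → D ≤ N → |∑ d ∈ Ioc A D, a d| ≤ 2 * K * D := by
  intro D
  induction D using Nat.strong_induction_on with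
  | _ D ih =>
    intro hAD hDN
    rcases le_or_gt D (2 * (A + 1)) with hD | hD
    · have h1 := ha A D le_rfl hD hDN
      have h2 : 0 ≤ K * D := by positivity
      linarith
    · have h1 := ih (D / 2) (by omega) (by omega) (by omega)
      have h2 := ha (D / 2) D (by omega) (by omega) hDN
      rw [← sum_Ioc_consecutive _ (by omega : A ≤ D / 2) (by omega : D / 2 ≤ D)]
      have h3 : ((D / 2 : ℕ) : ℝ) ≤ D / 2 := Nat.cast_div_le
      have h4 := mul_le_mul_of_nonneg_left h3 hK
      refine (abs_add_le _ _).trans ?_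
      linarith

theorem abs_moebius_mul_sawtooth_le (d : ℕ) (t : ℝ) :
    |((ArithmeticFunction.moebius d : ℤ) : ℝ) * sawtooth t| ≤ 1 := by
  rw [abs_mul]
  refine mul_le_one₀ ?_ (abs_nonneg _) (abs_sawtooth_le t)
  exact_mod_cast ArithmeticFunction.abs_moebius_le_one

theorem abs_sum_moebius_sawtooth_div_le_sum_inv (x : ℝ) (s : Finset ℕ) :
    |∑ d ∈ s, ((ArithmeticFunction.moebius d : ℤ) : ℝ) * sawtooth (x / d) / d| ≤
      ∑ d ∈ s, (d : ℝ)⁻¹ := by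
  refine (abs_sum_le_sum_abs _ _).trans (sum_le_sum fun d _ => ?_)
  rw [abs_div, Nat.abs_cast, div_eq_mul_inv]
  exact mul_le_of_le_one_left (by positivity) (abs_moebius_mul_sawtooth_le d _)

theorem log_cutoff_le {L : ℝ} (hL : 1 ≤ L) :
    log (cutoff L) ≤ 1 + L ^ ((2 : ℝ) / 3) * log L ^ ((4 : ℝ) / 3) := by
  have hW : 0 ≤ L ^ ((2 : ℝ) / 3) * log L ^ ((4 : ℝ) / 3) := by
    have := log_nonneg hL
    positivity
  set W := L ^ ((2 : ℝ) / 3) * log L ^ ((4 : ℝ) / 3) with hWdef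
  have h1 : (1 : ℝ) ≤ exp W := one_le_exp hW
  have h2 : ((cutoff L : ℕ) : ℝ) < exp W + 1 := Nat.ceil_lt_add_one (exp_pos _).le
  have h3 : exp W ≤ (cutoff L : ℕ) := Nat.le_ceil _
  have h4 : (2 : ℝ) ≤ exp 1 := by linarith [add_one_le_exp (1 : ℝ)]
  rw [Real.log_le_iff_le_exp (by linarith), exp_add]
  nlinarith

theorem exists_eventually_abs_sum_moebius_sawtooth_div_le : ∃ C : ℝ, 0 < C ∧
    ∀ᶠ L : ℝ in atTop,
      |∑ d ∈ Ioc 0 ⌊exp L⌋₊, ((ArithmeticFunction.moebius d : ℤ) : ℝ) * sawtooth (exp L / d) / d| ≤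
        C * (L ^ ((2 : ℝ) / 3) * log L ^ ((4 : ℝ) / 3)) := by
  obtain ⟨C, hC, hev⟩ := exists_eventually_abs_sum_moebius_sawtooth_le
  refine ⟨6 * C + 10, by positivity, ?_⟩
  filter_upwards [hev, eventually_ge_atTop (exp 1)] with L hblock hL
  have hL1 : 1 ≤ L := by linarith [add_one_le_exp (1 : ℝ)]
  have hL0 : 0 < L := by linarith
  have hlog : 1 ≤ log L := (Real.le_log_iff_exp_le hL0).2 hL
  have hP1 : 1 ≤ L ^ ((2 : ℝ) / 3) := one_le_rpow hL1 (by norm_num)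
  have hPL : L ^ ((2 : ℝ) / 3) ≤ L := by
    simpa using rpow_le_rpow_of_exponent_le hL1 (by norm_num : (2 : ℝ) / 3 ≤ 1)
  have hQ1 : 1 ≤ log L ^ ((4 : ℝ) / 3) := one_le_rpow hlog (by norm_num)
  have hPW : L ^ ((2 : ℝ) / 3) ≤ L ^ ((2 : ℝ) / 3) * log L ^ ((4 : ℝ) / 3) :=
    le_mul_of_one_le_right (by linarith) hQ1
  have hcut := log_cutoff_le hL1
  set P := L ^ ((2 : ℝ) / 3)
  set W := P * log L ^ ((4 : ℝ) / 3)
  set N := ⌊exp L⌋₊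
  set B := ⌊exp (L - P)⌋₊ with hBdef
  have hB1 : 1 ≤ B := Nat.one_le_floor_iff _ |>.2 (one_le_exp (by linarith))
  have hBN : B ≤ N := Nat.floor_mono (exp_le_exp.2 (by linarith))
  have hNle : (N : ℝ) ≤ exp L := Nat.floor_le (exp_pos _).le
  have hBle : (B : ℝ) ≤ exp (L - P) := Nat.floor_le (exp_pos _).le
  have hBlt : exp (L - P) < B + 1 := Nat.lt_floor_add_one _
  have hB0 : (1 : ℝ) ≤ B := by exact_mod_cast hB1
  have hN0 : (1 : ℝ) ≤ N := by exact_mod_cast hB1.trans hBN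
  have hlogN : log N ≤ L := (Real.log_le_iff_le_exp (by linarith)).2 hNle
  have hlogB : L - P - 1 ≤ log B := by
    rw [Real.le_log_iff_exp_le (by linarith), exp_sub, div_le_iff₀ (exp_pos _)]
    nlinarith [add_one_le_exp (1 : ℝ)]
  have hlogB' : log B ≤ L := (Real.log_le_log (by linarith) (by exact_mod_cast hBN)).trans hlogN
  set A := min (cutoff L ^ 3) B
  have hAB : A ≤ B := min_le_right _ _
  have hhead : |∑ d ∈ Ioc 0 A,
      ((ArithmeticFunction.moebius d : ℤ) : ℝ) * sawtooth (exp L / d) / d| ≤ 4 + 3 * W := by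
    refine (abs_sum_moebius_sawtooth_div_le_sum_inv _ _).trans ((sum_Ioc_inv_le A).trans ?_)
    have h1 : log A ≤ log ((cutoff L : ℝ) ^ 3) := by
      rcases Nat.eq_zero_or_pos A with h0 | h0
      · rw [h0, Nat.cast_zero, log_zero, log_pow]
        positivity
      · refine Real.log_le_log (by exact_mod_cast h0) ?_
        exact_mod_cast min_le_left (cutoff L ^ 3) B
    rw [log_pow] at h1
    push_cast at h1
    linarith
  have htail : |∑ d ∈ Ioc B N,
      ((ArithmeticFunction.moebius d : ℤ) : ℝ) * sawtooth (exp L / d) / d| ≤ 1 + P := by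
    refine (abs_sum_moebius_sawtooth_div_le_sum_inv _ _).trans
      ((sum_Ioc_inv_le_log_sub hB1 hBN).trans ?_)
    linarith
  have hmid : |∑ d ∈ Ioc A B,
      ((ArithmeticFunction.moebius d : ℤ) : ℝ) * sawtooth (exp L / d) / d| ≤ 6 * C := by
    rcases le_total (cutoff L ^ 3) B with hle | hle
    · have hA : A = cutoff L ^ 3 := min_eq_left hle
      have hseg := abs_sum_Ioc_le_of_dyadic
        (fun d => ((ArithmeticFunction.moebius d : ℤ) : ℝ) * sawtooth (exp L / d))
        (A := A) (N := B) (K := C / L) (by positivity) (fun D D' hD hD' hD'B => by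
          rw [hA] at hD
          refine (hblock D D' hD hD' ?_).trans_eq (by ring)
          have hcast : (D' : ℝ) ≤ exp (L - P) := le_trans (by exact_mod_cast hD'B) hBle
          calc (D' : ℝ) * exp P ≤ exp (L - P) * exp P := by gcongr
            _ = exp L := by rw [← exp_add, sub_add_cancel])
      refine (abs_sum_Ioc_div_le _ (by positivity) hAB hseg).trans ?_
      calc 2 * (C / L) * (2 + log B) ≤ 2 * (C / L) * (2 * L + L) := by gcongr; linarith
        _ = 6 * C := by field_simp; ring
    · rw [show A = B from min_eq_right hle, Ioc_self, sum_empty, abs_zero]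
      positivity
  rw [← sum_Ioc_consecutive _ (Nat.zero_le B) hBN, ← sum_Ioc_consecutive _ (Nat.zero_le A) hAB]
  have hW1 : 1 ≤ W := hP1.trans hPW
  have hCW : 6 * C ≤ 6 * C * W := le_mul_of_one_le_right (by positivity) hW1
  refine (abs_add_le _ _).trans ((add_le_add_left (abs_add_le _ _) _).trans ?_)
  linarith

theorem sum_totient_eq_sum_moebius (N : ℕ) :
    ∑ n ∈ Ioc 0 N, (Nat.totient n : ℝ) = ∑ d ∈ Ioc 0 N,
      ((ArithmeticFunction.moebius d : ℤ) : ℝ) * (((N / d : ℕ) : ℝ) * ((N / d : ℕ) + 1) / 2) := by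
  have hinv := (ArithmeticFunction.sum_eq_iff_sum_mul_moebius_eq
    (f := fun n => (Nat.totient n : ℝ)) (g := fun n => (n : ℝ))).1 fun n _ => by
      exact_mod_cast Nat.sum_totient n
  have hgauss : ∀ m : ℕ, ∑ b ∈ Ioc 0 m, (b : ℝ) = (m : ℝ) * (m + 1) / 2 := by
    intro m
    induction m with
    | zero => simp
    | succ m ih =>
      rw [sum_Ioc_succ_top (Nat.zero_le m), ih]
      push_cast
      ring
  have hconv := ArithmeticFunction.sum_Ioc_mul_eq_sum_sum
    ((ArithmeticFunction.moebius : ArithmeticFunction ℤ) : ArithmeticFunction ℝ)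
    ((ArithmeticFunction.id : ArithmeticFunction ℕ) : ArithmeticFunction ℝ) N
  simp only [ArithmeticFunction.intCoe_apply, ArithmeticFunction.natCoe_apply,
    ArithmeticFunction.id_apply, hgauss] at hconv
  rw [← hconv]
  refine sum_congr rfl fun n hn => ?_
  rw [ArithmeticFunction.mul_apply, ← hinv n (mem_Ioc.1 hn).1]
  rfl

theorem abs_sum_totient_sub_le {x : ℝ} (hx : 1 ≤ x) :
    |∑ n ∈ Ioc 0 ⌊x⌋₊, (Nat.totient n : ℝ) - 3 / π ^ 2 * x ^ 2| ≤
      2 * x + x * |∑ d ∈ Ioc 0 ⌊x⌋₊,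
        ((ArithmeticFunction.moebius d : ℤ) : ℝ) * sawtooth (x / d) / d| := by
  have hx0 : 0 < x := by linarith
  have hN1 : 1 ≤ ⌊x⌋₊ := (Nat.one_le_floor_iff x).2 hx
  have hNle : (⌊x⌋₊ : ℝ) ≤ x := Nat.floor_le hx0.le
  have hNlt : x < ⌊x⌋₊ + 1 := Nat.lt_floor_add_one x
  have hN1' : (1 : ℝ) ≤ ⌊x⌋₊ := by exact_mod_cast hN1
  have hexp : ∑ n ∈ Ioc 0 ⌊x⌋₊, (Nat.totient n : ℝ) =
      x ^ 2 / 2 * ∑ d ∈ Ioc 0 ⌊x⌋₊, ((ArithmeticFunction.moebius d : ℤ) : ℝ) / (d : ℝ) ^ 2 -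
      x * ∑ d ∈ Ioc 0 ⌊x⌋₊, ((ArithmeticFunction.moebius d : ℤ) : ℝ) * sawtooth (x / d) / d +
      ∑ d ∈ Ioc 0 ⌊x⌋₊, ((ArithmeticFunction.moebius d : ℤ) : ℝ) *
        (sawtooth (x / d) ^ 2 / 2 - 1 / 8) := by
    rw [sum_totient_eq_sum_moebius, mul_sum, mul_sum, ← sum_sub_distrib, ← sum_add_distrib]
    refine sum_congr rfl fun d hd => ?_
    have hd0 : (0 : ℝ) < d := by exact_mod_cast (mem_Ioc.1 hd).1
    have hfloor : ((⌊x⌋₊ / d : ℕ) : ℝ) = x / d - sawtooth (x / d) - 1 / 2 := by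
      rw [← Nat.floor_div_natCast, natCast_floor_eq_intCast_floor (by positivity), sawtooth,
        ← Int.self_sub_floor]
      ring
    rw [hfloor]
    field_simp
    ring
  have hmain := abs_sum_moebius_div_sq_sub_le (N := ⌊x⌋₊) (by omega)
  have hrem : |∑ d ∈ Ioc 0 ⌊x⌋₊, ((ArithmeticFunction.moebius d : ℤ) : ℝ) *
      (sawtooth (x / d) ^ 2 / 2 - 1 / 8)| ≤ x := by
    calc _ ≤ ∑ d ∈ Ioc 0 ⌊x⌋₊, (1 : ℝ) := by
          refine (abs_sum_le_sum_abs _ _).trans (sum_le_sum fun d _ => ?_)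
          rw [abs_mul]
          refine mul_le_one₀ (by exact_mod_cast ArithmeticFunction.abs_moebius_le_one)
            (abs_nonneg _) ?_
          have hsq : sawtooth (x / d) ^ 2 ≤ 1 := (sq_le_one_iff_abs_le_one _).2 (abs_sawtooth_le _)
          rw [abs_le]
          constructor <;> linarith [sq_nonneg (sawtooth (x / d))]
      _ ≤ x := by simpa using hNle
  have hfirst : |x ^ 2 / 2 * (∑ d ∈ Ioc 0 ⌊x⌋₊,
      ((ArithmeticFunction.moebius d : ℤ) : ℝ) / (d : ℝ) ^ 2 - 6 / π ^ 2)| ≤ x := by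
    rw [abs_mul, abs_of_nonneg (by positivity : 0 ≤ x ^ 2 / 2)]
    refine (mul_le_mul_of_nonneg_left hmain (by positivity)).trans ?_
    rw [mul_one_div, div_le_iff₀ (by linarith)]
    nlinarith
  rw [hexp]
  set S := ∑ d ∈ Ioc 0 ⌊x⌋₊, ((ArithmeticFunction.moebius d : ℤ) : ℝ) / (d : ℝ) ^ 2
  set E := ∑ d ∈ Ioc 0 ⌊x⌋₊, ((ArithmeticFunction.moebius d : ℤ) : ℝ) * sawtooth (x / d) / d
  set R := ∑ d ∈ Ioc 0 ⌊x⌋₊, ((ArithmeticFunction.moebius d : ℤ) : ℝ) *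
    (sawtooth (x / d) ^ 2 / 2 - 1 / 8)
  have hxE : |x * E| = x * |E| := by rw [abs_mul, abs_of_pos hx0]
  calc |x ^ 2 / 2 * S - x * E + R - 3 / π ^ 2 * x ^ 2|
      = |x ^ 2 / 2 * (S - 6 / π ^ 2) - x * E + R| := by ring_nf
    _ ≤ |x ^ 2 / 2 * (S - 6 / π ^ 2)| + |x * E| + |R| :=
        (abs_add_le _ _).trans (add_le_add_left (abs_sub _ _) _)
    _ ≤ 2 * x + x * |E| := by linarith

end VinogradovMean

/-- `∑_{n ≤ x} φ(n) = (3/π²) x² + O(x (log x)^{2/3} (log log x)^{4/3})` as `x → ∞`. -/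
theorem sum_totient_asymptotic :
    (fun x : ℝ => (∑ n ∈ Finset.Icc 1 ⌊x⌋₊, (Nat.totient n : ℝ)) - 3 / π ^ 2 * x ^ 2)
    =O[atTop] fun x : ℝ =>
      x * Real.log x ^ ((2 : ℝ) / 3) * Real.log (Real.log x) ^ ((4 : ℝ) / 3) := by
  obtain ⟨C, hC, hev⟩ := VinogradovMean.exists_eventually_abs_sum_moebius_sawtooth_div_le
  refine Asymptotics.IsBigO.of_bound (2 + C) ?_
  filter_upwards [tendsto_log_atTop.eventually hev,
    tendsto_log_atTop.eventually (eventually_ge_atTop (exp 1)), eventually_ge_atTop 1]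
    with x hsum hL hx
  have hx0 : 0 < x := by linarith
  rw [exp_log hx0] at hsum
  have hL1 : 1 ≤ log x := by linarith [add_one_le_exp (1 : ℝ)]
  have hlog : 1 ≤ log (log x) := (Real.le_log_iff_exp_le (by linarith)).2 hL
  have hW : 1 ≤ log x ^ ((2 : ℝ) / 3) * log (log x) ^ ((4 : ℝ) / 3) :=
    one_le_mul_of_one_le_of_one_le (one_le_rpow hL1 (by norm_num)) (one_le_rpow hlog (by norm_num))
  rw [norm_eq_abs, norm_eq_abs, mul_assoc, abs_mul x, abs_of_pos hx0,
    abs_of_pos (by linarith : 0 < log x ^ ((2 : ℝ) / 3) * log (log x) ^ ((4 : ℝ) / 3))]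
  refine (VinogradovMean.abs_sum_totient_sub_le hx).trans ?_
  have h1 := mul_le_mul_of_nonneg_left hsum hx0.le
  have h2 := mul_le_mul_of_nonneg_left hW hx0.le
  linarith
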